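/- Assume (H1) and fix λ ∈ (0,α). Then the limit u_∞(x,t;λ) := lim_{j→∞} u₀(x + ℓ(j,λ), t + jT) exists locally uniformly on ℝ² (together with first and second spatial derivatives and first time derivative), and: (1) u_∞(·,·;λ) is an entire solution of (E) with 0 < u_∞(x,t;λ) < ω(α,t) for all (x,t) and u_∞(0,0;λ) = λ; (2) u_∞(·,·;λ) is steeper than any entire solution w of (E) with 0 ≤ w(x,t) ≤ ω(α,t); (3) either u_∞(x,t;λ) is independent of x, or ∂_x u_∞(x,t;λ) < 0 for all (x,t) ∈ ℝ². -/

import Mathlib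

/-!
The solution `u₀` is compared with entire solutions through crossings. If `w` is a solution with
`0 ≤ w ≤ ω(α,·)`, then `u₀` cannot lie below `w` at a point and above `w` at a point further to the
right at the same time: in the variables `(x, y, t)` with `x < y`, the product
`(w - u₀)⁺(x,t) (u₀ - w)⁺(y,t)` is a subsolution of a linear parabolic problem which vanishes on the
diagonal and initially, so the maximum principle on a half-plane applies.

Interior estimates, obtained from doubling of variables and difference quotients, bound the moduli
of continuity of `u₀`, `∂ₓu₀` and `∂ₓₓu₀` uniformly. Hence the translates `u₀(· + ℓ j, · + jT)`
converge, with their derivatives, along every free ultrafilter on `ℕ`. Every such limit is an entire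
solution, takes the value `λ` at the origin and inherits the absence of crossings.

An entire solution `V` with this property is steeper than every entire solution `w` between `0` and
`ω(α,·)`. By the boundary point lemma, `V` is either independent of `x` or has `V_x < 0` everywhere.
In the first case `V - w` has one sign on each time slice, and the strong maximum principle settles
the claim. In the second case a tangency of `V` and `w` is studied in the variable `S` defined by
`V(S(x,t),t) = w(x,t)`: absence of crossings makes `S - x` nonincreasing in `x`, a further
application of the boundary point lemma gives `S = x` locally, and the set where `V` and `w` agree
propagates to the whole plane.

Two limits along different ultrafilters agree at the origin and each is steeper than the other, so
they coincide; therefore the whole sequence converges.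
-/

open Real Filter Topology Set

noncomputable section

/-- `u` is a classical solution of `u_t = u_xx + f(t,u)` on `ℝ × I`. -/
def IsSolOn (f : ℝ → ℝ → ℝ) (u : ℝ → ℝ → ℝ) (I : Set ℝ) : Prop :=
  ∃ ut ux uxx : ℝ → ℝ → ℝ,
    (∀ x : ℝ, ∀ t ∈ I, HasDerivAt (fun s => u x s) (ut x t) t) ∧
    (∀ x : ℝ, ∀ t ∈ I, HasDerivAt (fun y => u y t) (ux x t) x) ∧
    (∀ x : ℝ, ∀ t ∈ I, HasDerivAt (fun y => ux y t) (uxx x t) x) ∧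
    ContinuousOn (fun p : ℝ × ℝ => ut p.1 p.2) (Set.univ ×ˢ I) ∧
    ContinuousOn (fun p : ℝ × ℝ => ux p.1 p.2) (Set.univ ×ˢ I) ∧
    ContinuousOn (fun p : ℝ × ℝ => uxx p.1 p.2) (Set.univ ×ˢ I) ∧
    (∀ x : ℝ, ∀ t ∈ I, ut x t = uxx x t + f t (u x t))

/-- `u₁` is steeper than `u₂` (Definition 2.5). -/
def Steeper (T : ℝ) (u₁ u₂ : ℝ → ℝ → ℝ) : Prop :=
  ∀ (t' x₁ : ℝ) (k : ℤ), u₁ x₁ t' = u₂ x₁ (t' + k * T) →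
    (∀ x t : ℝ, u₁ x (t + t') = u₂ x (t + t' + k * T)) ∨
    deriv (fun y => u₁ y t') x₁ < deriv (fun y => u₂ y (t' + k * T)) x₁

/-- `ψ` is a `T`-periodic solution of the ODE `ω' = f(t,ω)`. -/
def IsPeriodicSol (f : ℝ → ℝ → ℝ) (T : ℝ) (ψ : ℝ → ℝ) : Prop :=
  (∀ t : ℝ, HasDerivAt ψ (f t (ψ t)) t) ∧ ∀ t : ℝ, ψ (t + T) = ψ t

/-- `ψ` is isolated from below w.r.t. the ODE. -/
def IsolatedFromBelow (f : ℝ → ℝ → ℝ) (T : ℝ) (ψ : ℝ → ℝ) : Prop :=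
  ¬ ∃ φ : ℕ → ℝ → ℝ, (∀ n, IsPeriodicSol f T (φ n)) ∧ (∀ n t, φ n t < ψ t) ∧
      TendstoUniformly φ ψ atTop

/-- `ψ` is stable from below w.r.t. the ODE. -/
def StableFromBelow (f : ℝ → ℝ → ℝ) (ψ : ℝ → ℝ) : Prop :=
  ∀ ε > 0, ∃ δ > 0, ∀ g : ℝ → ℝ, (∀ t : ℝ, HasDerivAt g (f t (g t)) t) →
    g 0 ∈ Set.Icc (ψ 0 - δ) (ψ 0) → ∀ t ≥ 0, |g t - ψ t| ≤ ε

/-- Hypothesis (H1). -/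
def HypH1 (f : ℝ → ℝ → ℝ) (α : ℝ) (ωα : ℝ → ℝ) : Prop :=
  ∃ u : ℝ → ℝ → ℝ,
    IsSolOn f u (Set.Ioi 0) ∧
    ContinuousOn (fun p : ℝ × ℝ => u p.1 p.2) (Set.univ ×ˢ Set.Ici 0) ∧
    HasCompactSupport (fun x => u x 0) ∧
    (∀ x : ℝ, 0 ≤ u x 0 ∧ u x 0 < α) ∧
    (∀ K : Set ℝ, IsCompact K → ∀ ε > 0, ∃ t₀ : ℝ, ∀ t ≥ t₀, ∀ x ∈ K, |u x t - ωα t| < ε)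

/-- Hypothesis (H2). -/
def HypH2 (f : ℝ → ℝ → ℝ) (T α : ℝ) : Prop :=
  ∀ ψ : ℝ → ℝ, IsPeriodicSol f T ψ → ψ 0 ∈ Set.Ioo 0 α →
    IsolatedFromBelow f T ψ → ¬ StableFromBelow f ψ →
    ∃ φ : ℕ → ℝ → ℝ,
      (∀ n, ContDiff ℝ 1 (φ n)) ∧
      (∀ n t, φ n (t + T) = φ n t) ∧
      (∀ n t, f t (φ n t) ≤ deriv (φ n) t) ∧
      (∀ n t, φ n t < ψ t) ∧
      TendstoUniformly φ ψ atTop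

/-- The solution `ũ(·,·;a)` of (E) with Heaviside-type initial datum `α·H(a−x)`,
bounded between `0` and `ω(α,·)`. -/
def IsHeavisideSol (f : ℝ → ℝ → ℝ) (α a : ℝ) (ωα : ℝ → ℝ) (u : ℝ → ℝ → ℝ) : Prop :=
  IsSolOn f u (Set.Ioi 0) ∧
  (∀ x : ℝ, ∀ t > 0, 0 ≤ u x t ∧ u x t ≤ ωα t) ∧
  ∀ K : Set ℝ, IsCompact K → a ∉ K → ∀ ε > 0, ∃ δ > 0, ∀ t ∈ Set.Ioo (0:ℝ) δ, ∀ x ∈ K,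
    |u x t - α * (if 0 ≤ a - x then 1 else 0)| < ε

/-- `U(x,t) → ψ(t)` as `x → +∞`, locally uniformly in `t`. -/
def LimitAtPlusInf (U : ℝ → ℝ → ℝ) (ψ : ℝ → ℝ) : Prop :=
  ∀ K : Set ℝ, IsCompact K → ∀ ε > 0, ∃ M : ℝ, ∀ x ≥ M, ∀ t ∈ K, |U x t - ψ t| < ε

/-- `U(x,t) → ψ(t)` as `x → −∞`, locally uniformly in `t`. -/
def LimitAtMinusInf (U : ℝ → ℝ → ℝ) (ψ : ℝ → ℝ) : Prop :=
  ∀ K : Set ℝ, IsCompact K → ∀ ε > 0, ∃ M : ℝ, ∀ x ≤ M, ∀ t ∈ K, |U x t - ψ t| < ε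

/-- `U` connects `ωa` (at `x = −∞`) to `ωb` (at `x = +∞`). -/
def Connects (U : ℝ → ℝ → ℝ) (ωa ωb : ℝ → ℝ) : Prop :=
  LimitAtMinusInf U ωa ∧ LimitAtPlusInf U ωb

/-- A pulsating traveling front of (E) with speed `c`, limit `ωa` at `−∞`, `ωb` at `+∞`. -/
def IsPulsatingFront (f : ℝ → ℝ → ℝ) (T : ℝ) (ωa ωb : ℝ → ℝ) (U : ℝ → ℝ → ℝ) (c : ℝ) :
    Prop :=
  IsSolOn f U Set.univ ∧
  (∃ L : ℝ, c = L / T ∧ ∀ x t : ℝ, U x t = U (x - L) (t + T)) ∧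
  Connects U ωa ωb

/-- A propagating terrace of (E) connecting `0` to `ωα`. -/
def IsTerrace (f : ℝ → ℝ → ℝ) (T : ℝ) (ωα : ℝ → ℝ) (N : ℕ)
    (ω : ℕ → ℝ → ℝ) (U : ℕ → ℝ → ℝ → ℝ) (c : ℕ → ℝ) : Prop :=
  1 ≤ N ∧
  (∀ k ≤ N, IsPeriodicSol f T (ω k)) ∧
  (∀ t, ω 0 t = ωα t) ∧ (∀ t, ω N t = 0) ∧
  (∀ k, k < N → ∀ t, ω (k + 1) t < ω k t) ∧
  (∀ k, 1 ≤ k → k ≤ N → IsPulsatingFront f T (ω (k - 1)) (ω k) (U k) (c k)) ∧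
  0 ≤ c 1 ∧ (∀ k, 1 ≤ k → k < N → c k ≤ c (k + 1))

/-- A minimal propagating terrace (Definition 1.4). -/
def IsMinimalTerrace (f : ℝ → ℝ → ℝ) (T : ℝ) (ωα : ℝ → ℝ) (N : ℕ)
    (ω : ℕ → ℝ → ℝ) (U : ℕ → ℝ → ℝ → ℝ) (c : ℕ → ℝ) : Prop :=
  IsTerrace f T ωα N ω U c ∧
  (∀ (N' : ℕ) (ψ : ℕ → ℝ → ℝ) (V : ℕ → ℝ → ℝ → ℝ) (c' : ℕ → ℝ),
      IsTerrace f T ωα N' ψ V c' → ∀ k ≤ N, ∃ j ≤ N', ∀ t, ω k t = ψ j t) ∧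
  (∀ k, 1 ≤ k → k ≤ N → ∀ V : ℝ → ℝ → ℝ, IsSolOn f V Set.univ →
      Connects V (ω (k - 1)) (ω k) → Steeper T (U k) V)


/-- `V` is the locally uniform limit of the shifted solutions `u(· + ℓ j, · + jT)`. -/
def IsULimit (u : ℝ → ℝ → ℝ) (ℓ : ℕ → ℝ) (T : ℝ) (V : ℝ → ℝ → ℝ) : Prop :=
  ∀ K : Set (ℝ × ℝ), IsCompact K → ∀ ε > 0, ∃ J : ℕ, ∀ j ≥ J, ∀ p ∈ K,
    |u (p.1 + ℓ j) (p.2 + (j : ℝ) * T) - V p.1 p.2| < ε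

/-- `V` is the locally uniform limit of `u(· + ℓ j, · + jT)` together with the first and second
spatial derivatives and the first time derivative. -/
def IsULimitDeriv (u : ℝ → ℝ → ℝ) (ℓ : ℕ → ℝ) (T : ℝ) (V : ℝ → ℝ → ℝ) : Prop :=
  ∀ K : Set (ℝ × ℝ), IsCompact K → ∀ ε > 0, ∃ J : ℕ, ∀ j ≥ J, ∀ p ∈ K,
    |u (p.1 + ℓ j) (p.2 + (j : ℝ) * T) - V p.1 p.2| < ε ∧
    |deriv (fun y => u y (p.2 + (j : ℝ) * T)) (p.1 + ℓ j) -
      deriv (fun y => V y p.2) p.1| < ε ∧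
    |deriv (deriv (fun y => u y (p.2 + (j : ℝ) * T))) (p.1 + ℓ j) -
      deriv (deriv (fun y => V y p.2)) p.1| < ε ∧
    |deriv (fun s => u (p.1 + ℓ j) s) (p.2 + (j : ℝ) * T) -
      deriv (fun s => V p.1 s) p.2| < ε

/-! ### Jets and the maximum principle -/

/-- The second-order jet of a function of one variable: `g` is differentiable near `x` and twice
differentiable at `x`, with `g'(x) = a` and `g''(x) = b`. -/
def HasJet (g : ℝ → ℝ) (x a b : ℝ) : Prop :=
  ∃ g' : ℝ → ℝ, (∀ᶠ y in 𝓝 x, HasDerivAt g (g' y) y) ∧ HasDerivAt g' b x ∧ g' x = a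

namespace HasJet

variable {g k : ℝ → ℝ} {x a b a' b' : ℝ}

lemma of_hasDerivAt {g' : ℝ → ℝ} (h : ∀ y, HasDerivAt g (g' y) y) (h' : HasDerivAt g' b x) :
    HasJet g x (g' x) b :=
  ⟨g', Eventually.of_forall h, h', rfl⟩

lemma hasDerivAt (h : HasJet g x a b) : HasDerivAt g a x := by
  obtain ⟨g', hg, -, rfl⟩ := h
  exact hg.self_of_nhds

lemma congr (h : HasJet g x a b) (hk : k =ᶠ[𝓝 x] g) : HasJet k x a b := by
  obtain ⟨g', hg, hg', ha⟩ := h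
  refine ⟨g', ?_, hg', ha⟩
  filter_upwards [hg, hk.eventuallyEq_nhds] with y hy hky using hy.congr_of_eventuallyEq hky

lemma const (c x : ℝ) : HasJet (fun _ => c) x 0 0 :=
  of_hasDerivAt (g' := fun _ => 0) (fun y => hasDerivAt_const y c) (hasDerivAt_const x 0)

lemma sq_sub (γ x : ℝ) : HasJet (fun y => (y - γ) ^ 2) x (2 * (x - γ)) 2 := by
  refine of_hasDerivAt (g' := fun y => 2 * (y - γ)) (fun y => ?_) ?_
  · simpa using ((hasDerivAt_id y).sub_const γ).fun_pow 2
  · simpa using ((hasDerivAt_id x).sub_const γ).const_mul 2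

lemma add (h : HasJet g x a b) (hk : HasJet k x a' b') :
    HasJet (fun y => g y + k y) x (a + a') (b + b') := by
  obtain ⟨g', hg, hg', rfl⟩ := h
  obtain ⟨k', hk, hk', rfl⟩ := hk
  refine ⟨fun y => g' y + k' y, ?_, hg'.add hk', rfl⟩
  filter_upwards [hg, hk] with y hy hky using hy.add hky

lemma sub (h : HasJet g x a b) (hk : HasJet k x a' b') :
    HasJet (fun y => g y - k y) x (a - a') (b - b') := by
  obtain ⟨g', hg, hg', rfl⟩ := h
  obtain ⟨k', hk, hk', rfl⟩ := hk
  refine ⟨fun y => g' y - k' y, ?_, hg'.sub hk', rfl⟩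
  filter_upwards [hg, hk] with y hy hky using hy.sub hky

lemma const_mul (c : ℝ) (h : HasJet g x a b) : HasJet (fun y => c * g y) x (c * a) (c * b) := by
  obtain ⟨g', hg, hg', rfl⟩ := h
  refine ⟨fun y => c * g' y, ?_, hg'.const_mul c, rfl⟩
  filter_upwards [hg] with y hy using hy.const_mul c

lemma exp (h : HasJet g x a b) :
    HasJet (fun y => exp (g y)) x (exp (g x) * a) (exp (g x) * (a ^ 2 + b)) := by
  obtain ⟨g', hg, hg', rfl⟩ := h
  refine ⟨fun y => Real.exp (g y) * g' y, ?_,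
    (hg.self_of_nhds.exp.mul hg').congr_deriv (by ring), rfl⟩
  filter_upwards [hg] with y hy using hy.exp

lemma comp_add_const (c : ℝ) (h : HasJet g (x + c) a b) :
    HasJet (fun y => g (y + c)) x a b := by
  obtain ⟨g', hg, hg', rfl⟩ := h
  refine ⟨fun y => g' (y + c), ?_, hg'.comp_add_const x c, rfl⟩
  have hshift : Tendsto (fun y => y + c) (𝓝 x) (𝓝 (x + c)) := tendsto_id.add_const c
  filter_upwards [hshift.eventually hg] with y hy using hy.comp_add_const y c

lemma deriv_deriv (h : HasJet g x a b) : deriv (deriv g) x = b := by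
  obtain ⟨g', hg, hg', -⟩ := h
  have : deriv g =ᶠ[𝓝 x] g' := by filter_upwards [hg] with y hy using hy.deriv
  rw [this.deriv_eq, hg'.deriv]

lemma eq_zero_and_nonpos_of_isLocalMax (h : HasJet g x a b) (hmax : IsLocalMax g x) :
    a = 0 ∧ b ≤ 0 := by
  have ha : a = 0 := hmax.hasDerivAt_eq_zero h.hasDerivAt
  refine ⟨ha, ?_⟩
  by_contra! hb
  -- The second derivative test makes `x` a local minimum too, so `g` is locally constant.
  have hmin : IsLocalMin g x := isLocalMin_of_deriv_deriv_pos (h.deriv_deriv.symm ▸ hb)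
    (h.hasDerivAt.deriv.trans ha) h.hasDerivAt.continuousAt
  have hconst : g =ᶠ[𝓝 x] fun _ => g x := by
    filter_upwards [hmax, hmin] with y hy hy' using le_antisymm hy hy'
  exact hb.ne ((HasJet.const (g x) x).congr hconst |>.deriv_deriv.symm.trans h.deriv_deriv)

end HasJet

lemma nonneg_of_hasDerivAt_of_eventually_le {g : ℝ → ℝ} {t d : ℝ} (h : HasDerivAt g d t)
    (hmax : ∀ᶠ s in 𝓝[<] t, g s ≤ g t) : 0 ≤ d := by
  have hslope := (hasDerivWithinAt_iff_tendsto_slope' self_notMem_Iio).1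
    (h.hasDerivWithinAt (s := Iio t))
  refine ge_of_tendsto hslope ?_
  filter_upwards [hmax, self_mem_nhdsWithin] with s hs hst
  rw [slope_def_field]
  exact div_nonneg_of_nonpos (sub_nonpos.2 hs) (sub_nonpos.2 (le_of_lt hst))

/-- The parabolic jet at `(x, y, t)` of a function of two space variables and time:
`φ_x = a`, `φ_xx = b`, `φ_y = a'`, `φ_yy = b'` and `φ_t = d`. -/
structure HasParabolicJet (φ : ℝ → ℝ → ℝ → ℝ) (x y t a b a' b' d : ℝ) : Prop where
  fst : HasJet (fun x' => φ x' y t) x a b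
  snd : HasJet (fun y' => φ x y' t) y a' b'
  time : HasDerivAt (fun t' => φ x y t') d t

namespace HasParabolicJet

variable {φ ψ : ℝ → ℝ → ℝ → ℝ} {x y t a b a' b' d p q p' q' e : ℝ}

lemma sub (h : HasParabolicJet φ x y t a b a' b' d) (k : HasParabolicJet ψ x y t p q p' q' e) :
    HasParabolicJet (fun x y t => φ x y t - ψ x y t) x y t
      (a - p) (b - q) (a' - p') (b' - q') (d - e) :=
  ⟨h.fst.sub k.fst, h.snd.sub k.snd, h.time.sub k.time⟩

lemma const_mul (c : ℝ) (h : HasParabolicJet φ x y t a b a' b' d) :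
    HasParabolicJet (fun x y t => c * φ x y t) x y t
      (c * a) (c * b) (c * a') (c * b') (c * d) :=
  ⟨h.fst.const_mul c, h.snd.const_mul c, h.time.const_mul c⟩

lemma exp_mul (C c : ℝ) (h : HasParabolicJet φ x y t a b a' b' d) :
    HasParabolicJet (fun x y t => exp (C * (t - c)) * φ x y t) x y t
      (exp (C * (t - c)) * a) (exp (C * (t - c)) * b) (exp (C * (t - c)) * a')
      (exp (C * (t - c)) * b') (exp (C * (t - c)) * (d + C * φ x y t)) := by
  refine ⟨h.fst.const_mul _, h.snd.const_mul _, ?_⟩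
  refine ((((hasDerivAt_id t).sub_const c).const_mul C).exp.mul h.time).congr_deriv ?_
  simp only [id]
  ring

lemma of_fst {z : ℝ → ℝ → ℝ} (hz : HasJet (fun x' => z x' t) x a b)
    (hzt : HasDerivAt (fun t' => z x t') d t) (y : ℝ) :
    HasParabolicJet (fun x _ t => z x t) x y t a b 0 0 d :=
  ⟨hz, .const _ _, hzt⟩

lemma of_snd {z : ℝ → ℝ → ℝ} (hz : HasJet (fun y' => z y' t) y a' b')
    (hzt : HasDerivAt (fun t' => z y t') d t) (x : ℝ) :
    HasParabolicJet (fun _ y t => z y t) x y t 0 0 a' b' d :=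
  ⟨.const _ _, hz, hzt⟩

end HasParabolicJet

/-- At `(x, y, t)` the function `m` satisfies `m_t ≤ m_xx + m_yy + C m`. -/
def IsSubsolutionAt (C : ℝ) (m : ℝ → ℝ → ℝ → ℝ) (x y t : ℝ) : Prop :=
  ∃ a b a' b' d, HasParabolicJet m x y t a b a' b' d ∧ d ≤ b + b' + C * m x y t

/-- At `(x, y, t)` the function `E` satisfies
`E_xx + E_yy - E_t ≤ C (|E_x| + |E_y| + E)`; nonnegative functions of this kind obey the strong
maximum principle and the boundary point lemma. -/
def IsSupersolutionAt (C : ℝ) (E : ℝ → ℝ → ℝ → ℝ) (x y t : ℝ) : Prop :=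
  ∃ a b a' b' d, HasParabolicJet E x y t a b a' b' d ∧ b + b' - d ≤ C * (|a| + |a'| + E x y t)

/-- Near a positive maximum the set `K` must contain all points of the present and the past;
the differential inequality is needed at critical points only. -/
lemma nonpos_of_strict_subsolution {K : Set (ℝ × ℝ × ℝ)} (hK : IsCompact K)
    {φ : ℝ → ℝ → ℝ → ℝ} (hφ : ContinuousOn (fun p : ℝ × ℝ × ℝ => φ p.1 p.2.1 p.2.2) K)
    (hpos : ∀ x y t, (x, y, t) ∈ K → 0 < φ x y t → K ∈ 𝓝[{p | p.2.2 ≤ t}] (x, y, t) ∧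
      ∃ a b a' b' d, HasParabolicJet φ x y t a b a' b' d ∧ (a = 0 → a' = 0 → d < b + b'))
    {x₀ y₀ t₀ : ℝ} (h₀ : (x₀, y₀, t₀) ∈ K) : φ x₀ y₀ t₀ ≤ 0 := by
  obtain ⟨⟨x, y, t⟩, hp, hmax⟩ := hK.exists_isMaxOn ⟨_, h₀⟩ hφ
  refine (hmax h₀).trans (not_lt.1 fun hφpos => ?_)
  obtain ⟨hKnhds, a, b, a', b', d, hjet, hlt⟩ := hpos x y t hp hφpos
  have hle : ∀ᶠ p in 𝓝[{p | p.2.2 ≤ t}] (x, y, t), φ p.1 p.2.1 p.2.2 ≤ φ x y t :=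
    mem_of_superset hKnhds fun _ hq => hmax hq
  have curve_tendsto {c : ℝ → ℝ × ℝ × ℝ} (hc : Continuous c) {r : ℝ} (hr : c r = (x, y, t))
      {s : Set ℝ} (hs : ∀ᶠ r' in 𝓝[s] r, (c r').2.2 ≤ t) :
      Tendsto c (𝓝[s] r) (𝓝[{p | p.2.2 ≤ t}] (x, y, t)) :=
    tendsto_nhdsWithin_iff.2 ⟨hr ▸ hc.continuousWithinAt.tendsto, hs⟩
  have hx := curve_tendsto (c := fun x' => (x', y, t)) (r := x) (by fun_prop) rfl (s := univ)
    (Eventually.of_forall fun _ => le_rfl)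
  have hy := curve_tendsto (c := fun y' => (x, y', t)) (r := y) (by fun_prop) rfl (s := univ)
    (Eventually.of_forall fun _ => le_rfl)
  have ht := curve_tendsto (c := fun t' => (x, y, t')) (r := t) (by fun_prop) rfl (s := Iio t)
    (eventually_nhdsWithin_of_forall fun _ h => le_of_lt h)
  rw [nhdsWithin_univ] at hx hy
  obtain ⟨ha, hb⟩ := hjet.fst.eq_zero_and_nonpos_of_isLocalMax (hx.eventually hle)
  obtain ⟨ha', hb'⟩ := hjet.snd.eq_zero_and_nonpos_of_isLocalMax (hy.eventually hle)
  have hd := nonneg_of_hasDerivAt_of_eventually_le hjet.time (ht.eventually hle)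
  linarith [hlt ha ha']

/-! ### Comparison principles on unbounded domains -/

/-- A strict supersolution of the heat equation in two space variables that grows at infinity; it
compensates the lack of compactness of the domain. -/
def growthPenalty (c x y t : ℝ) : ℝ := 1 + x ^ 2 + y ^ 2 + 5 * (t - c)

lemma hasParabolicJet_growthPenalty (c x y t : ℝ) :
    HasParabolicJet (growthPenalty c) x y t (2 * x) 2 (2 * y) 2 5 := by
  unfold growthPenalty
  refine ⟨?_, ?_, ?_⟩
  · simpa using (((HasJet.const 1 x).add (.sq_sub 0 x)).add (.const (y ^ 2) x)).add
      (.const (5 * (t - c)) x)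
  · simpa using ((HasJet.const (1 + x ^ 2) y).add (.sq_sub 0 y)).add (.const (5 * (t - c)) y)
  · simpa using (((hasDerivAt_id t).sub_const c).const_mul 5).const_add (1 + x ^ 2 + y ^ 2)

section BoundedSubsolution

variable {D : Set (ℝ × ℝ)} {J : Set ℝ} {m : ℝ → ℝ → ℝ → ℝ} {M C c : ℝ}

lemma exists_strict_jet_sub_growthPenalty {x y t η : ℝ} (hη : 0 < η)
    (hsub : IsSubsolutionAt C m x y t) :
    ∃ a b a' b' d, HasParabolicJet
      (fun x y t => exp (-C * (t - c)) * m x y t - η * growthPenalty c x y t) x y t a b a' b' d ∧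
        d < b + b' := by
  obtain ⟨a, b, a', b', d, hjet, hd⟩ := hsub
  refine ⟨_, _, _, _, _,
    (hjet.exp_mul (-C) c).sub ((hasParabolicJet_growthPenalty c x y t).const_mul η), ?_⟩
  linarith [mul_le_mul_of_nonneg_left hd (exp_pos (-C * (t - c))).le]

lemma abs_lt_of_growthPenalty_lt {x y t η R : ℝ} (hη : 0 < η) (hC : 0 ≤ C) (htc : c ≤ t)
    (hR : 0 ≤ R) (hM : m x y t ≤ η * R ^ 2)
    (hlt : η * growthPenalty c x y t < exp (-C * (t - c)) * m x y t) :
    0 < m x y t ∧ |x| < R ∧ |y| < R ∧ η < m x y t := by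
  have hpen : growthPenalty c x y t = 1 + x ^ 2 + y ^ 2 + 5 * (t - c) := rfl
  have hpen_pos : 0 < growthPenalty c x y t := by
    linarith [sq_nonneg x, sq_nonneg y]
  have hmpos : 0 < m x y t :=
    pos_of_mul_pos_right ((mul_pos hη hpen_pos).trans hlt) (exp_pos _).le
  have hexp : exp (-C * (t - c)) * m x y t ≤ m x y t :=
    mul_le_of_le_one_left hmpos.le (exp_le_one_iff.2
      (mul_nonpos_of_nonpos_of_nonneg (neg_nonpos.2 hC) (sub_nonneg.2 htc)))
  have hpenR : growthPenalty c x y t < R ^ 2 :=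
    lt_of_mul_lt_mul_left ((hlt.trans_le hexp).trans_le hM) hη.le
  refine ⟨hmpos, abs_lt_of_sq_lt_sq ?_ hR, abs_lt_of_sq_lt_sq ?_ hR, ?_⟩
  · linarith [sq_nonneg y]
  · linarith [sq_nonneg x]
  · calc η ≤ η * growthPenalty c x y t :=
          le_mul_of_one_le_right hη.le (by linarith [sq_nonneg x, sq_nonneg y])
      _ < m x y t := hlt.trans_le hexp

lemma le_growthPenalty_of_subsolution (hD : IsClosed D) (hJ : J.OrdConnected) (hJc : J ⊆ Ici c)
    (hC : 0 ≤ C)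
    (hm : ContinuousOn (fun p : ℝ × ℝ × ℝ => m p.1 p.2.1 p.2.2) {p | (p.1, p.2.1) ∈ D ∧ p.2.2 ∈ J})
    (hM : ∀ x y, (x, y) ∈ D → ∀ t ∈ J, m x y t ≤ M)
    (hinit : ∀ η > 0, ∀ R, ∀ t ∈ J, ∃ s ∈ J, s ≤ t ∧
      ∀ x y, (x, y) ∈ D → |x| ≤ R → |y| ≤ R → m x y s ≤ η)
    (hsub : ∀ x y, (x, y) ∈ D → ∀ t ∈ J, 0 < m x y t → D ∈ 𝓝 (x, y) ∧ IsSubsolutionAt C m x y t)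
    {x₀ y₀ t₀ η : ℝ} (h₀ : (x₀, y₀) ∈ D) (ht₀ : t₀ ∈ J) (hη : 0 < η) :
    exp (-C * (t₀ - c)) * m x₀ y₀ t₀ ≤ η * growthPenalty c x₀ y₀ t₀ := by
  obtain ⟨R, hRM, hRx, hRy⟩ : ∃ R, M / η ≤ R ^ 2 ∧ |x₀| ≤ R ∧ |y₀| ≤ R :=
    (((tendsto_pow_atTop two_ne_zero).eventually_ge_atTop _).and
      ((eventually_ge_atTop _).and (eventually_ge_atTop _))).exists
  rw [div_le_iff₀' hη] at hRM
  obtain ⟨s, hsJ, hst₀, hs⟩ := hinit η hη R t₀ ht₀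
  have hJs : Icc s t₀ ⊆ J := hJ.out hsJ ht₀
  have hproj : Continuous fun p : ℝ × ℝ × ℝ => (p.1, p.2.1) := by fun_prop
  have hbox : IsCompact ((Icc (-R) R ×ˢ (Icc (-R) R ×ˢ Icc s t₀)) ∩
      {p : ℝ × ℝ × ℝ | (p.1, p.2.1) ∈ D}) :=
    (isCompact_Icc.prod (isCompact_Icc.prod isCompact_Icc)).inter_right (hD.preimage hproj)
  refine sub_nonpos.1 (nonpos_of_strict_subsolution hbox
    (φ := fun x y t => exp (-C * (t - c)) * m x y t - η * growthPenalty c x y t) ?_ ?_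
    ⟨⟨abs_le.1 hRx, abs_le.1 hRy, hst₀, le_rfl⟩, h₀⟩)
  · refine .sub (.mul (by fun_prop) (hm.mono fun p hp => ⟨hp.2, hJs hp.1.2.2⟩)) ?_
    unfold growthPenalty
    fun_prop
  rintro x y t ⟨⟨hx, hy, ht⟩, hxy⟩ hpos
  obtain ⟨hmpos, hxR, hyR, hηm⟩ := abs_lt_of_growthPenalty_lt hη hC (hJc (hJs ht))
    ((abs_nonneg x₀).trans hRx) ((hM x y hxy t (hJs ht)).trans hRM) (sub_pos.1 hpos)
  have hst : s < t := ht.1.lt_of_ne fun h =>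
    hηm.not_ge (h ▸ hs x y hxy (abs_le.2 hx) (abs_le.2 hy))
  obtain ⟨hDnhds, hsubt⟩ := hsub x y hxy t (hJs ht) hmpos
  obtain ⟨a, b, a', b', d, hjet, hlt⟩ := exists_strict_jet_sub_growthPenalty (c := c) hη hsubt
  refine ⟨?_, a, b, a', b', d, hjet, fun _ _ => hlt⟩
  have hspace : Icc (-R) R ×ˢ (Icc (-R) R ×ˢ Ioi s) ∈ 𝓝 (x, y, t) :=
    prod_mem_nhds (Icc_mem_nhds (abs_lt.1 hxR).1 (abs_lt.1 hxR).2)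
      (prod_mem_nhds (Icc_mem_nhds (abs_lt.1 hyR).1 (abs_lt.1 hyR).2) (Ioi_mem_nhds hst))
  filter_upwards [mem_nhdsWithin_of_mem_nhds hspace, self_mem_nhdsWithin,
    mem_nhdsWithin_of_mem_nhds (hproj.continuousAt hDnhds)] with p hp hpt hpD
  exact ⟨⟨hp.1, hp.2.1, le_of_lt hp.2.2, le_trans hpt ht.2⟩, hpD⟩

/-- `J` is either `[c, ∞)` or `(c, ∞)` in the applications; the form of `hinit` covers functions
which attain their initial values only locally uniformly as `t` decreases to `c`. -/
lemma nonpos_of_bounded_subsolution (hD : IsClosed D) (hJ : J.OrdConnected) (hJc : J ⊆ Ici c)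
    (hC : 0 ≤ C)
    (hm : ContinuousOn (fun p : ℝ × ℝ × ℝ => m p.1 p.2.1 p.2.2) {p | (p.1, p.2.1) ∈ D ∧ p.2.2 ∈ J})
    (hM : ∀ x y, (x, y) ∈ D → ∀ t ∈ J, m x y t ≤ M)
    (hinit : ∀ η > 0, ∀ R, ∀ t ∈ J, ∃ s ∈ J, s ≤ t ∧
      ∀ x y, (x, y) ∈ D → |x| ≤ R → |y| ≤ R → m x y s ≤ η)
    (hsub : ∀ x y, (x, y) ∈ D → ∀ t ∈ J, 0 < m x y t → D ∈ 𝓝 (x, y) ∧ IsSubsolutionAt C m x y t)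
    {x y t : ℝ} (hxy : (x, y) ∈ D) (ht : t ∈ J) : m x y t ≤ 0 := by
  have hle : ∀ᶠ η in 𝓝[>] (0 : ℝ), exp (-C * (t - c)) * m x y t ≤ η * growthPenalty c x y t :=
    eventually_nhdsWithin_of_forall fun η hη =>
      le_growthPenalty_of_subsolution hD hJ hJc hC hm hM hinit hsub hxy ht hη
  have hlim : Tendsto (fun η => η * growthPenalty c x y t) (𝓝[>] 0) (𝓝 0) :=
    ((continuous_mul_const _).tendsto' 0 0 (zero_mul _)).mono_left nhdsWithin_le_nhds
  exact nonpos_of_mul_nonpos_right (ge_of_tendsto hlim hle) (exp_pos _)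

end BoundedSubsolution

lemma nonpos_of_bounded_subsolution_on_line {z : ℝ → ℝ → ℝ} {s M C : ℝ} (hC : 0 ≤ C)
    (hz : ContinuousOn (fun p : ℝ × ℝ => z p.1 p.2) (univ ×ˢ Ici s))
    (hM : ∀ x, ∀ t ≥ s, z x t ≤ M) (hs : ∀ x, z x s ≤ 0)
    (hsub : ∀ x, ∀ t > s, 0 < z x t → ∃ a b d, HasJet (fun y => z y t) x a b ∧
      HasDerivAt (fun r => z x r) d t ∧ d ≤ b + C * z x t)
    (x : ℝ) {t : ℝ} (ht : s ≤ t) : z x t ≤ 0 := by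
  refine nonpos_of_bounded_subsolution (D := univ) (J := Ici s) (m := fun x _ t => z x t)
    (y := 0) isClosed_univ ordConnected_Ici subset_rfl hC ?_ (fun x _ _ t ht => hM x t ht) ?_ ?_
    (mem_univ _) ht
  · exact hz.comp (f := fun p : ℝ × ℝ × ℝ => (p.1, p.2.2)) (by fun_prop)
      fun p hp => ⟨trivial, hp.2⟩
  · exact fun η hη R t ht => ⟨s, le_refl s, ht, fun x y _ _ _ => (hs x).trans hη.le⟩
  · intro x y _ t ht hpos
    refine ⟨univ_mem, ?_⟩
    have hst : s < t := ht.lt_of_ne fun h => (hs x).not_gt (h ▸ hpos)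
    obtain ⟨a, b, d, hjet, hd, hle⟩ := hsub x t hst hpos
    exact ⟨_, _, _, _, _, .of_fst hjet hd y, by linarith⟩

/-- A multiple of the heat kernel at time `t + ρ²`: of unit size for `|x| ≤ ρ` and `t ≤ ρ²`, it
decays with `ρ` at every fixed positive time. -/
def heatBump (ρ x t : ℝ) : ℝ := ρ * (√(t + ρ ^ 2))⁻¹ * exp (-(x ^ 2 / (4 * (t + ρ ^ 2))))

section HeatBump

variable {ρ x t : ℝ}

lemma continuousOn_heatBump : ContinuousOn (fun p : ℝ × ℝ => heatBump ρ p.1 p.2) {p | 0 < p.2} := by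
  have hpos (p : ℝ × ℝ) (hp : p ∈ {p : ℝ × ℝ | 0 < p.2}) : 0 < p.2 + ρ ^ 2 :=
    add_pos_of_pos_of_nonneg hp (sq_nonneg ρ)
  unfold heatBump
  refine .mul (.mul continuousOn_const (.inv₀ (by fun_prop) fun p hp => ?_)) (.rexp (.neg ?_))
  · exact (sqrt_pos.2 (hpos p hp)).ne'
  · exact .div (by fun_prop) (by fun_prop) fun p hp => (mul_pos four_pos (hpos p hp)).ne'

lemma hasJet_heatBump (x : ℝ) :
    HasJet (fun y => heatBump ρ y t) x (heatBump ρ x t * (-(x / (2 * (t + ρ ^ 2)))))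
      (heatBump ρ x t * (x ^ 2 / (4 * (t + ρ ^ 2) ^ 2) - 1 / (2 * (t + ρ ^ 2)))) := by
  unfold heatBump
  generalize t + ρ ^ 2 = τ
  convert (((HasJet.sq_sub 0 x).const_mul (-(4 * τ)⁻¹)).exp.const_mul (ρ * (√τ)⁻¹)) using 1
  · funext y
    ring_nf
  all_goals ring_nf

lemma hasDerivAt_heatBump (ht : 0 < t) (x : ℝ) :
    HasDerivAt (fun s => heatBump ρ x s)
      (heatBump ρ x t * (x ^ 2 / (4 * (t + ρ ^ 2) ^ 2) - 1 / (2 * (t + ρ ^ 2)))) t := by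
  have hτ : 0 < t + ρ ^ 2 := by positivity
  have hshift : HasDerivAt (fun s : ℝ => s + ρ ^ 2) 1 t := (hasDerivAt_id t).add_const _
  have hsqrt : √(t + ρ ^ 2) ^ 2 = t + ρ ^ 2 := sq_sqrt hτ.le
  unfold heatBump
  refine ((((hshift.sqrt hτ.ne').fun_inv (sqrt_pos.2 hτ).ne').const_mul ρ).mul
    (((hasDerivAt_const t (x ^ 2)).div (hshift.const_mul 4)
      (mul_pos four_pos hτ).ne').neg.exp)).congr_deriv ?_
  simp only [Pi.neg_apply, Pi.div_apply, hsqrt]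
  field_simp
  ring

lemma half_le_heatBump (hρ : 0 < ρ) (ht : 0 < t) (htρ : t ≤ ρ ^ 2) (hx : |x| ≤ ρ) :
    1 / 2 ≤ heatBump ρ x t := by
  have hτ : 0 < t + ρ ^ 2 := by positivity
  have hsqrt : √(t + ρ ^ 2) ≤ 3 / 2 * ρ := sqrt_le_iff.2 ⟨by positivity, by nlinarith⟩
  have hfactor : 2 / 3 ≤ ρ * (√(t + ρ ^ 2))⁻¹ := by
    rw [← div_eq_mul_inv, le_div_iff₀ (sqrt_pos.2 hτ)]
    linarith
  have hquot : x ^ 2 / (4 * (t + ρ ^ 2)) ≤ 1 / 4 := by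
    rw [div_le_div_iff₀ (by positivity) (by norm_num)]
    nlinarith [sq_le_sq' (abs_le.1 hx).1 (abs_le.1 hx).2]
  have hexp : 3 / 4 ≤ exp (-(x ^ 2 / (4 * (t + ρ ^ 2)))) := by
    linarith [add_one_le_exp (-(x ^ 2 / (4 * (t + ρ ^ 2))))]
  calc (1 / 2 : ℝ) = 2 / 3 * (3 / 4) := by norm_num
    _ ≤ heatBump ρ x t := mul_le_mul hfactor hexp (by norm_num) (by positivity)

lemma heatBump_le (hρ : 0 ≤ ρ) (ht : 0 < t) : heatBump ρ x t ≤ ρ * (√t)⁻¹ := by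
  have hsqrt : (√(t + ρ ^ 2))⁻¹ ≤ (√t)⁻¹ :=
    inv_anti₀ (sqrt_pos.2 ht) (sqrt_le_sqrt (le_add_of_nonneg_right (sq_nonneg ρ)))
  have hexp : exp (-(x ^ 2 / (4 * (t + ρ ^ 2)))) ≤ 1 := exp_le_one_iff.2 (by
    rw [neg_nonpos]; positivity)
  calc heatBump ρ x t ≤ ρ * (√(t + ρ ^ 2))⁻¹ := mul_le_of_le_one_right (by positivity) hexp
    _ ≤ ρ * (√t)⁻¹ := mul_le_mul_of_nonneg_left hsqrt hρ

lemma heatBump_nonneg (hρ : 0 ≤ ρ) : 0 ≤ heatBump ρ x t := by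
  unfold heatBump
  positivity

end HeatBump

section HalfPlane

variable {m : ℝ → ℝ → ℝ → ℝ} {M C : ℝ}

lemma le_heatBump_of_subsolution (hC : 0 ≤ C) (hM0 : 0 ≤ M)
    (hm : ContinuousOn (fun p : ℝ × ℝ × ℝ => m p.1 p.2.1 p.2.2) {p | 0 < p.2.2})
    (hM : ∀ x y t, x ≤ y → 0 < t → m x y t ≤ M)
    (hdiag : ∀ x t, 0 < t → m x x t ≤ 0)
    (hinit : ∀ ρ > 0, ∀ R, ∀ η > 0, ∃ δ > 0, ∀ t ∈ Ioo 0 δ, ∀ x y, x ≤ y → -R ≤ x → y ≤ R →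
      (x ≤ -ρ ∨ ρ ≤ y) → m x y t ≤ η)
    (hsub : ∀ x y t, x < y → 0 < t → 0 < m x y t → IsSubsolutionAt C m x y t)
    {ρ x y t : ℝ} (hρ : 0 < ρ) (hxy : x ≤ y) (ht : 0 < t) :
    m x y t ≤ 2 * M * (exp (C * (t - 0)) * heatBump ρ x t) := by
  have hbump (x t : ℝ) : 0 ≤ 2 * M * (exp (C * (t - 0)) * heatBump ρ x t) :=
    mul_nonneg (by positivity) (mul_nonneg (exp_pos _).le (heatBump_nonneg hρ.le))
  refine sub_nonpos.1 (nonpos_of_bounded_subsolution (D := {p | p.1 ≤ p.2}) (J := Ioi 0) (C := C)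
    (m := fun x y t => m x y t - 2 * M * (exp (C * (t - 0)) * heatBump ρ x t)) (M := M)
    (isClosed_le continuous_fst continuous_snd) ordConnected_Ioi Ioi_subset_Ici_self hC
    ?_ ?_ ?_ ?_ hxy ht)
  · refine (hm.mono fun p hp => hp.2).sub (.mul continuousOn_const (.mul (by fun_prop) ?_))
    exact continuousOn_heatBump.comp (f := fun p : ℝ × ℝ × ℝ => (p.1, p.2.2)) (by fun_prop)
      fun p hp => hp.2
  · exact fun x y hxy t ht => by linarith [hM x y t hxy ht, hbump x t]
  · intro η hη R t ht
    obtain ⟨δ, hδ, hδm⟩ := hinit ρ hρ R η hη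
    obtain ⟨s, hs, hsmin⟩ := exists_between (lt_min hδ (lt_min (pow_pos hρ 2) ht))
    simp only [lt_min_iff] at hsmin
    refine ⟨s, hs, hsmin.2.2.le, fun x y hxy hx hy => ?_⟩
    by_cases hfar : x ≤ -ρ ∨ ρ ≤ y
    · linarith [hδm s ⟨hs, hsmin.1⟩ x y hxy (abs_le.1 hx).1 (abs_le.1 hy).2 hfar, hbump x s]
    · push Not at hfar
      have hhalf := half_le_heatBump hρ hs hsmin.2.1.le
        (abs_le.2 ⟨hfar.1.le, hxy.trans hfar.2.le⟩ : |x| ≤ ρ)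
      have hexp : 1 ≤ exp (C * (s - 0)) := one_le_exp (by rw [sub_zero]; positivity)
      have hprod : 1 / 2 ≤ exp (C * (s - 0)) * heatBump ρ x s :=
        hhalf.trans (le_mul_of_one_le_left (by linarith) hexp)
      nlinarith [hM x y s hxy hs, mul_le_mul_of_nonneg_left hprod hM0]
  · intro x y hxy t ht hpos
    have hmpos : 0 < m x y t := by linarith [hbump x t]
    have hlt : x < y := lt_of_le_of_ne hxy fun h =>
      (hdiag x t ht).not_gt (by rw [← h] at hmpos; exact hmpos)
    obtain ⟨a, b, a', b', d, hjet, hd⟩ := hsub x y t hlt ht hmpos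
    refine ⟨mem_of_superset (isOpen_lt continuous_fst continuous_snd |>.mem_nhds hlt)
      fun p (hp : p.1 < p.2) => hp.le, _, _, _, _, _, hjet.sub (((HasParabolicJet.of_fst
        (hasJet_heatBump x) (hasDerivAt_heatBump ht x) y).exp_mul C 0).const_mul (2 * M)), ?_⟩
    linarith

/-- No control is needed near the origin at time `0`, because a point is too small for the heat
flow to see. -/
lemma nonpos_of_bounded_subsolution_on_half_plane (hC : 0 ≤ C)
    (hm : ContinuousOn (fun p : ℝ × ℝ × ℝ => m p.1 p.2.1 p.2.2) {p | 0 < p.2.2})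
    (hM : ∀ x y t, x ≤ y → 0 < t → m x y t ≤ M)
    (hdiag : ∀ x t, 0 < t → m x x t ≤ 0)
    (hinit : ∀ ρ > 0, ∀ R, ∀ η > 0, ∃ δ > 0, ∀ t ∈ Ioo 0 δ, ∀ x y, x ≤ y → -R ≤ x → y ≤ R →
      (x ≤ -ρ ∨ ρ ≤ y) → m x y t ≤ η)
    (hsub : ∀ x y t, x < y → 0 < t → 0 < m x y t → IsSubsolutionAt C m x y t)
    {x y t : ℝ} (hxy : x ≤ y) (ht : 0 < t) : m x y t ≤ 0 := by
  by_contra! hpos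
  have hM0 : 0 ≤ M := hpos.le.trans (hM x y t hxy ht)
  have hle : ∀ᶠ ρ in 𝓝[>] (0 : ℝ), m x y t ≤ 2 * M * (exp (C * (t - 0)) * (ρ * (√t)⁻¹)) := by
    filter_upwards [self_mem_nhdsWithin] with ρ hρ
    refine (le_heatBump_of_subsolution hC hM0 hm hM hdiag hinit hsub hρ hxy ht).trans ?_
    gcongr
    exact heatBump_le (le_of_lt hρ) ht
  have hlim : Tendsto (fun ρ => 2 * M * (exp (C * (t - 0)) * (ρ * (√t)⁻¹))) (𝓝[>] 0) (𝓝 0) :=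
    (Continuous.tendsto' (by fun_prop) 0 0 (by simp)).mono_left nhdsWithin_le_nhds
  exact (ge_of_tendsto hlim hle).not_gt hpos

end HalfPlane

/-! ### The boundary point lemma -/

lemma barrier_error_le {A C ρ g₁ g₂ ξ ζ : ℝ} (hC : 0 ≤ C) (hA : 1 ≤ A)
    (h : ξ ^ 2 + ζ ^ 2 < ρ) :
    A * (2 * ξ * g₁ + 2 * ζ * g₂) + C * (2 * A * |ξ| + 2 * A * |ζ| + 1) + 4 * A ≤
      A * (2 * (1 + ρ) * (|g₁| + |g₂|) + 4 * C * (1 + ρ) + C + 4) := by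
  have hρ : 0 ≤ ρ := (by positivity : 0 ≤ ξ ^ 2 + ζ ^ 2).trans h.le
  have hξ : |ξ| ≤ 1 + ρ := abs_le_of_sq_le_sq (by nlinarith [sq_nonneg ζ]) (by positivity)
  have hζ : |ζ| ≤ 1 + ρ := abs_le_of_sq_le_sq (by nlinarith [sq_nonneg ξ]) (by positivity)
  have hdrift {η g : ℝ} (hη : |η| ≤ 1 + ρ) : η * g ≤ (1 + ρ) * |g| :=
    (le_abs_self _).trans ((abs_mul η g).trans_le (by gcongr))
  calc A * (2 * ξ * g₁ + 2 * ζ * g₂) + C * (2 * A * |ξ| + 2 * A * |ζ| + 1) + 4 * A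
      = A * (2 * (ξ * g₁ + ζ * g₂) + 2 * C * (|ξ| + |ζ|) + 4) + C * 1 := by ring
    _ ≤ A * (2 * ((1 + ρ) * |g₁| + (1 + ρ) * |g₂|) + 2 * C * ((1 + ρ) + (1 + ρ)) + 4) +
        C * A := by
      gcongr ?_ * (2 * ?_ + 2 * C * (?_ + ?_) + 4) + _ * ?_
      exact add_le_add (hdrift hξ) (hdrift hζ)
    _ = _ := by ring

/-- In the outer part of the disc the term with `A ^ 2` dominates, in the inner part the one
with `Λ`. -/
lemma exists_barrier_constants {C ρ : ℝ} (hC : 0 ≤ C) (hρ : 0 < ρ) (g₁ g₂ : ℝ) :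
    ∃ A > 0, ∃ Λ, ∀ ξ ζ P, ξ ^ 2 + ζ ^ 2 < ρ → 1 + A * (ρ - ξ ^ 2 - ζ ^ 2) ≤ P →
      P * (A * (2 * ξ * g₁ + 2 * ζ * g₂)) - Λ * (P - 1) +
          C * (P * (2 * A * |ξ|) + P * (2 * A * |ζ|) + (P - 1)) <
        P * (4 * A ^ 2 * ξ ^ 2 - 2 * A) + P * (4 * A ^ 2 * ζ ^ 2 - 2 * A) := by
  obtain ⟨G, hG⟩ : ∃ G, G = 2 * (1 + ρ) * (|g₁| + |g₂|) + 4 * C * (1 + ρ) + C + 4 := ⟨_, rfl⟩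
  have hG0 : 0 < G := by rw [hG]; positivity
  obtain ⟨A, hA1, hAG⟩ : ∃ A : ℝ, 1 ≤ A ∧ G < 2 * A * ρ := by
    refine ⟨1 + G / ρ, le_add_of_nonneg_right (by positivity), ?_⟩
    rw [show 2 * (1 + G / ρ) * ρ = 2 * ρ + 2 * G by field_simp]
    linarith
  have hA : 0 < A := one_pos.trans_le hA1
  obtain ⟨Λ, hΛ⟩ : ∃ Λ : ℝ, Λ * (A * (ρ / 2)) = (A * G + 1) * (1 + A * (ρ / 2)) :=
    ⟨(A * G + 1) * (1 + A * (ρ / 2)) / (A * (ρ / 2)), by field_simp⟩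
  have hΛ0 : 0 < Λ :=
    pos_of_mul_pos_left (b := A * (ρ / 2)) (by rw [hΛ]; positivity) (by positivity)
  refine ⟨A, hA, Λ, fun ξ ζ P h hP => ?_⟩
  have hP1 : 1 ≤ P := (le_add_of_nonneg_right (mul_nonneg hA.le (by linarith))).trans hP
  have hmain : P * (A * G) < Λ * (P - 1) + P * (4 * A ^ 2 * (ξ ^ 2 + ζ ^ 2)) := by
    rcases le_or_gt (ρ / 2) (ξ ^ 2 + ζ ^ 2) with houter | hinner
    · have hlt : A * G < 4 * A ^ 2 * (ξ ^ 2 + ζ ^ 2) := by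
        calc A * G < A * (2 * A * ρ) := by gcongr
          _ = 4 * A ^ 2 * (ρ / 2) := by ring
          _ ≤ _ := by gcongr
      nlinarith [mul_lt_mul_of_pos_left hlt (one_pos.trans_le hP1)]
    · have hPge : 1 + A * (ρ / 2) ≤ P := by nlinarith
      have hle : P * (A * G + 1) * (A * (ρ / 2)) ≤ Λ * (P - 1) * (A * (ρ / 2)) := by
        calc P * (A * G + 1) * (A * (ρ / 2)) = (A * G + 1) * (P * (A * (ρ / 2))) := by ring
          _ ≤ (A * G + 1) * ((P - 1) * (1 + A * (ρ / 2))) :=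
            mul_le_mul_of_nonneg_left (by linarith) (by positivity)
          _ = Λ * (P - 1) * (A * (ρ / 2)) := by linear_combination -(P - 1) * hΛ
      have := le_of_mul_le_mul_right hle (by positivity)
      nlinarith [(by positivity : 0 ≤ P * (4 * A ^ 2 * (ξ ^ 2 + ζ ^ 2)))]
  have herror := mul_le_mul_of_nonneg_left (barrier_error_le hC hA1 h (g₁ := g₁) (g₂ := g₂))
    (zero_le_one.trans hP1)
  rw [← hG] at herror
  linarith [mul_le_mul_of_nonneg_left (by linarith : P - 1 ≤ P) hC]

/-- Positive inside the tube of squared radius `ρ` around the moving point `(γ₁ t, γ₂ t)`, zero on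
its boundary. -/
def tubeDepth (ρ : ℝ) (γ₁ γ₂ : ℝ → ℝ) (x y t : ℝ) : ℝ := ρ - (x - γ₁ t) ^ 2 - (y - γ₂ t) ^ 2

section Tube

variable {ρ g₁ g₂ C s t₁ m₀ : ℝ} {γ₁ γ₂ : ℝ → ℝ} {E : ℝ → ℝ → ℝ → ℝ}

lemma hasParabolicJet_exp_tubeDepth (A : ℝ) {x y t : ℝ} (hγ₁ : HasDerivAt γ₁ g₁ t)
    (hγ₂ : HasDerivAt γ₂ g₂ t) :
    HasParabolicJet (fun x y t => exp (A * tubeDepth ρ γ₁ γ₂ x y t) - 1) x y t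
      (exp (A * tubeDepth ρ γ₁ γ₂ x y t) * (-2 * A * (x - γ₁ t)))
      (exp (A * tubeDepth ρ γ₁ γ₂ x y t) * (4 * A ^ 2 * (x - γ₁ t) ^ 2 - 2 * A))
      (exp (A * tubeDepth ρ γ₁ γ₂ x y t) * (-2 * A * (y - γ₂ t)))
      (exp (A * tubeDepth ρ γ₁ γ₂ x y t) * (4 * A ^ 2 * (y - γ₂ t) ^ 2 - 2 * A))
      (exp (A * tubeDepth ρ γ₁ γ₂ x y t) *
        (A * (2 * (x - γ₁ t) * g₁ + 2 * (y - γ₂ t) * g₂))) := by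
  refine ⟨?_, ?_, ?_⟩
  · convert ((((HasJet.const ρ x).sub (.sq_sub (γ₁ t) x)).sub
      (.const ((y - γ₂ t) ^ 2) x)).const_mul A).exp.sub (.const 1 x) using 1 <;>
    simp only [tubeDepth] <;> ring
  · convert (((HasJet.const (ρ - (x - γ₁ t) ^ 2) y).sub
      (.sq_sub (γ₂ t) y)).const_mul A).exp.sub (.const 1 y) using 1 <;>
    simp only [tubeDepth] <;> ring
  · refine (((((hγ₁.const_sub x).fun_pow 2).const_sub ρ).sub
      ((hγ₂.const_sub y).fun_pow 2)).const_mul A).exp.sub_const 1 |>.congr_deriv ?_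
    simp only [tubeDepth, Pi.sub_apply]
    ring

lemma continuous_tubeDepth (hγ₁ : Continuous γ₁) (hγ₂ : Continuous γ₂) :
    Continuous fun p : ℝ × ℝ × ℝ => tubeDepth ρ γ₁ γ₂ p.1 p.2.1 p.2.2 := by
  unfold tubeDepth
  fun_prop

lemma isCompact_tube (hγ₁ : Continuous γ₁) (hγ₂ : Continuous γ₂) :
    IsCompact {p : ℝ × ℝ × ℝ | 0 ≤ tubeDepth ρ γ₁ γ₂ p.1 p.2.1 p.2.2 ∧ p.2.2 ∈ Icc s t₁} := by
  have hcompact : IsCompact ((fun q : ℝ × ℝ × ℝ => (q.1 + γ₁ q.2.2, q.2.1 + γ₂ q.2.2, q.2.2)) ''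
      (Icc (-√ρ) √ρ ×ˢ Icc (-√ρ) √ρ ×ˢ Icc s t₁)) :=
    (isCompact_Icc.prod (isCompact_Icc.prod isCompact_Icc)).image (by fun_prop)
  refine hcompact.of_isClosed_subset ?_ ?_
  · exact (isClosed_le continuous_const (continuous_tubeDepth hγ₁ hγ₂)).inter
      (isClosed_Icc.preimage (f := fun p : ℝ × ℝ × ℝ => p.2.2) (by fun_prop))
  · rintro ⟨x, y, t⟩ ⟨hdepth, ht⟩
    simp only [tubeDepth] at hdepth
    exact ⟨(x - γ₁ t, y - γ₂ t, t),
      ⟨abs_le.1 (abs_le_sqrt (by linarith [sq_nonneg (y - γ₂ t)])),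
        abs_le.1 (abs_le_sqrt (by linarith [sq_nonneg (x - γ₁ t)])), ht⟩, by simp⟩

lemma tube_mem_nhdsWithin (hγ₁ : Continuous γ₁) (hγ₂ : Continuous γ₂) {x y t : ℝ}
    (hdepth : 0 < tubeDepth ρ γ₁ γ₂ x y t) (ht : t ∈ Ioc s t₁) :
    {p : ℝ × ℝ × ℝ | 0 ≤ tubeDepth ρ γ₁ γ₂ p.1 p.2.1 p.2.2 ∧ p.2.2 ∈ Icc s t₁} ∈
      𝓝[{p | p.2.2 ≤ t}] (x, y, t) := by
  have htime : Continuous fun p : ℝ × ℝ × ℝ => p.2.2 := by fun_prop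
  filter_upwards [mem_nhdsWithin_of_mem_nhds
      ((continuous_tubeDepth hγ₁ hγ₂).continuousAt (lt_mem_nhds hdepth)),
    mem_nhdsWithin_of_mem_nhds (htime.continuousAt (lt_mem_nhds ht.1)),
    self_mem_nhdsWithin] with p hp hsp hpt
  exact ⟨le_of_lt hp, le_of_lt hsp, le_trans hpt ht.2⟩

lemma exists_strict_jet_barrier_sub {A Λ ε x y t : ℝ} (hC : 0 ≤ C) (hε : 0 < ε) (hA : 0 < A)
    (hγ₁ : HasDerivAt γ₁ g₁ t) (hγ₂ : HasDerivAt γ₂ g₂ t)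
    (hineq : ∀ P, 1 + A * tubeDepth ρ γ₁ γ₂ x y t ≤ P →
      P * (A * (2 * (x - γ₁ t) * g₁ + 2 * (y - γ₂ t) * g₂)) - Λ * (P - 1) +
          C * (P * (2 * A * |x - γ₁ t|) + P * (2 * A * |y - γ₂ t|) + (P - 1)) <
        P * (4 * A ^ 2 * (x - γ₁ t) ^ 2 - 2 * A) + P * (4 * A ^ 2 * (y - γ₂ t) ^ 2 - 2 * A))
    (hsuper : IsSupersolutionAt C E x y t)
    (hlt : E x y t < ε * (exp (-Λ * (t - s)) * (exp (A * tubeDepth ρ γ₁ γ₂ x y t) - 1))) :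
    ∃ a b a' b' d, HasParabolicJet (fun x y t =>
        ε * (exp (-Λ * (t - s)) * (exp (A * tubeDepth ρ γ₁ γ₂ x y t) - 1)) - E x y t)
      x y t a b a' b' d ∧ (a = 0 → a' = 0 → d < b + b') := by
  obtain ⟨a, b, a', b', d, hjet, hd⟩ := hsuper
  refine ⟨_, _, _, _, _,
    (((hasParabolicJet_exp_tubeDepth A hγ₁ hγ₂).exp_mul (-Λ) s).const_mul ε).sub hjet,
    fun ha ha' => ?_⟩
  obtain ⟨P, hP⟩ : ∃ P, P = exp (A * tubeDepth ρ γ₁ γ₂ x y t) := ⟨_, rfl⟩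
  have hP1 : 1 + A * tubeDepth ρ γ₁ γ₂ x y t ≤ P := by
    rw [hP, add_comm]
    exact add_one_le_exp _
  rw [← hP] at ha ha' hlt ⊢
  have hP0 : 0 < P := hP ▸ exp_pos _
  have hscale : 0 < ε * exp (-Λ * (t - s)) := by positivity
  have abs_eq {e ξ : ℝ} (he : ε * (exp (-Λ * (t - s)) * (P * (-2 * A * ξ))) - e = 0) :
      |e| = ε * exp (-Λ * (t - s)) * (P * (2 * A * |ξ|)) := by
    rw [show e = -(ε * exp (-Λ * (t - s)) * (P * (2 * A))) * ξ by linarith, abs_mul, abs_neg,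
      abs_of_pos (by positivity)]
    ring
  rw [abs_eq ha, abs_eq ha'] at hd
  have hCE := mul_le_mul_of_nonneg_left hlt.le hC
  linarith [mul_lt_mul_of_pos_left (hineq P hP1) hscale]

/-- The barrier `ε e^{-Λ (t - s)} (e^{A q} - 1)`, where `q` is the depth in the tube, stays
below `E`. -/
lemma exists_pos_mul_tubeDepth_le (hC : 0 ≤ C) (hρ : 0 < ρ) (hst : s ≤ t₁)
    (hγ₁ : ∀ t, HasDerivAt γ₁ g₁ t) (hγ₂ : ∀ t, HasDerivAt γ₂ g₂ t)
    (hE : ContinuousOn (fun p : ℝ × ℝ × ℝ => E p.1 p.2.1 p.2.2)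
      {p | 0 ≤ tubeDepth ρ γ₁ γ₂ p.1 p.2.1 p.2.2 ∧ p.2.2 ∈ Icc s t₁})
    (hE0 : ∀ x y, ∀ t ∈ Icc s t₁, 0 ≤ tubeDepth ρ γ₁ γ₂ x y t → 0 ≤ E x y t)
    (hsuper : ∀ x y, ∀ t ∈ Ioc s t₁, 0 < tubeDepth ρ γ₁ γ₂ x y t → IsSupersolutionAt C E x y t)
    (hm₀ : 0 < m₀) (hs : ∀ x y, 0 ≤ tubeDepth ρ γ₁ γ₂ x y s → m₀ ≤ E x y s) :
    ∃ c > 0, ∀ x y, 0 ≤ tubeDepth ρ γ₁ γ₂ x y t₁ →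
      c * tubeDepth ρ γ₁ γ₂ x y t₁ ≤ E x y t₁ := by
  have hγc₁ : Continuous γ₁ := continuous_iff_continuousAt.2 fun t => (hγ₁ t).continuousAt
  have hγc₂ : Continuous γ₂ := continuous_iff_continuousAt.2 fun t => (hγ₂ t).continuousAt
  obtain ⟨A, hA, Λ, hconst⟩ := exists_barrier_constants hC hρ g₁ g₂
  obtain ⟨ε, hε, hεm⟩ : ∃ ε > 0, ε * exp (A * ρ) = m₀ :=
    ⟨m₀ / exp (A * ρ), by positivity, by field_simp⟩
  suffices hbarrier : ∀ x y, 0 ≤ tubeDepth ρ γ₁ γ₂ x y t₁ →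
      ε * (exp (-Λ * (t₁ - s)) * (exp (A * tubeDepth ρ γ₁ γ₂ x y t₁) - 1)) - E x y t₁ ≤ 0 by
    refine ⟨ε * (exp (-Λ * (t₁ - s)) * A), by positivity, fun x y hxy => ?_⟩
    have := mul_le_mul_of_nonneg_left (add_one_le_exp (A * tubeDepth ρ γ₁ γ₂ x y t₁))
      (by positivity : 0 ≤ ε * exp (-Λ * (t₁ - s)))
    linarith [hbarrier x y hxy]
  intro x₁ y₁ hxy₁
  refine nonpos_of_strict_subsolution (isCompact_tube (s := s) (t₁ := t₁) hγc₁ hγc₂)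
    (φ := fun x y t =>
      ε * (exp (-Λ * (t - s)) * (exp (A * tubeDepth ρ γ₁ γ₂ x y t) - 1)) - E x y t)
    (ContinuousOn.sub (by unfold tubeDepth; fun_prop) hE) ?_ ⟨hxy₁, hst, le_rfl⟩
  rintro x y t ⟨hdepth, ht⟩ hpos
  have hprod : 0 < ε * exp (-Λ * (t - s)) * (exp (A * tubeDepth ρ γ₁ γ₂ x y t) - 1) := by
    linarith [hE0 x y t ht hdepth]
  have hdepth' : 0 < tubeDepth ρ γ₁ γ₂ x y t := by
    have := one_lt_exp_iff.1 (sub_pos.1 (pos_of_mul_pos_right hprod (by positivity)))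
    exact pos_of_mul_pos_right this hA.le
  have hst' : s < t := by
    refine ht.1.lt_of_ne ?_
    rintro rfl
    have hle : exp (A * tubeDepth ρ γ₁ γ₂ x y s) ≤ exp (A * ρ) := by
      gcongr
      exact (sub_le_self _ (sq_nonneg _)).trans (sub_le_self _ (sq_nonneg _))
    simp only [sub_self, mul_zero, exp_zero, one_mul] at hpos
    linarith [hs x y hdepth, mul_le_mul_of_nonneg_left hle hε.le]
  refine ⟨tube_mem_nhdsWithin hγc₁ hγc₂ hdepth' ⟨hst', ht.2⟩, exists_strict_jet_barrier_sub hC hε hA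
    (hγ₁ t) (hγ₂ t) (fun P hP => hconst _ _ P ?_ hP) (hsuper x y t ⟨hst', ht.2⟩ hdepth')
    (sub_pos.1 hpos)⟩
  simp only [tubeDepth] at hdepth'
  linarith

end Tube

/-- The position at time `t` of a point that moves uniformly from `p` at time `s` to `q` at time
`t₁`. -/
def uniformMotion (s t₁ p q t : ℝ) : ℝ := p + (t - s) * ((q - p) / (t₁ - s))

section UniformMotion

variable {s t₁ : ℝ}

lemma hasDerivAt_uniformMotion (p q t : ℝ) :
    HasDerivAt (uniformMotion s t₁ p q) ((q - p) / (t₁ - s)) t := by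
  have := (((hasDerivAt_id t).sub_const s).mul_const ((q - p) / (t₁ - s))).const_add p
  exact this.congr_deriv (one_mul _)

lemma uniformMotion_start (p q : ℝ) : uniformMotion s t₁ p q s = p := by
  simp [uniformMotion]

lemma uniformMotion_end (hst : s < t₁) (p q : ℝ) : uniformMotion s t₁ p q t₁ = q := by
  rw [uniformMotion, mul_div_cancel₀ _ (sub_pos.2 hst).ne', add_sub_cancel]

lemma mem_of_uniformMotion_of_convex (hst : s < t₁) {D : Set (ℝ × ℝ)} (hD : Convex ℝ D)
    {x y t p₁ p₂ q₁ q₂ : ℝ} (ht : t ∈ Icc s t₁)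
    (hstart : (p₁ + (x - uniformMotion s t₁ p₁ q₁ t),
      p₂ + (y - uniformMotion s t₁ p₂ q₂ t)) ∈ D)
    (hend : (q₁ + (x - uniformMotion s t₁ p₁ q₁ t),
      q₂ + (y - uniformMotion s t₁ p₂ q₂ t)) ∈ D) :
    (x, y) ∈ D := by
  have hts : 0 < t₁ - s := sub_pos.2 hst
  have hθ : (t - s) / (t₁ - s) ≤ 1 := (div_le_one hts).2 (sub_le_sub_right ht.2 s)
  convert hD hstart hend (sub_nonneg.2 hθ) (div_nonneg (sub_nonneg.2 ht.1) hts.le)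
    (sub_add_cancel _ _) using 1
  ext <;> simp only [uniformMotion, Prod.smul_mk, Prod.mk_add_mk, smul_eq_mul] <;> ring

end UniformMotion

lemma eventually_forall_sq_add_sq_le {p : ℝ × ℝ → Prop} (h : ∀ᶠ o in 𝓝 0, p o) :
    ∀ᶠ κ in 𝓝[>] (0 : ℝ), ∀ o : ℝ × ℝ, o.1 ^ 2 + o.2 ^ 2 ≤ 8 * κ ^ 2 → p o := by
  obtain ⟨δ, hδ, hp⟩ := Metric.eventually_nhds_iff.1 h
  filter_upwards [Ioo_mem_nhdsGT (div_pos hδ three_pos)] with κ hκ o ho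
  have hκδ : 3 * κ < δ := by linarith [hκ.2]
  have hκ0 : 0 < κ := hκ.1
  refine hp ((max_lt ?_ ?_ : dist o 0 < δ)) <;> rw [Real.dist_eq]
  · exact (abs_lt_of_sq_lt_sq (by simp; nlinarith [sq_nonneg o.2]) (by positivity)).trans hκδ
  · exact (abs_lt_of_sq_lt_sq (by simp; nlinarith [sq_nonneg o.1]) (by positivity)).trans hκδ

section BoundaryPoint

variable {E : ℝ → ℝ → ℝ → ℝ} {I : Set ℝ} {x₀ y₀ x₁ s t₀ t₁ C m₀ : ℝ}

lemma convex_fst_le_snd : Convex ℝ {p : ℝ × ℝ | p.1 ≤ p.2} := by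
  simpa using (convexOn_id (𝕜 := ℝ) convex_univ).convex_epigraph

lemma convex_fst_lt_snd : Convex ℝ {p : ℝ × ℝ | p.1 < p.2} := by
  simpa using (convexOn_id (𝕜 := ℝ) convex_univ).convex_strict_epigraph

/-- The disc of squared radius `2 κ ^ 2` around `(x₁ - κ, x₁ + κ)` touches the diagonal at
`(x₁, x₁)`. -/
lemma exists_disc_radius (hI : IsOpen I) (hx₁ : x₁ ∈ I) (hs : s ∈ Ioc t₀ t₁)
    (hE : ContinuousOn (fun p : ℝ × ℝ × ℝ => E p.1 p.2.1 p.2.2)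
      {p | p.1 ≤ p.2.1 ∧ p.1 ∈ I ∧ p.2.1 ∈ I ∧ p.2.2 ∈ Ioc t₀ t₁})
    (hx₀ : x₀ ∈ I) (hy₀ : y₀ ∈ I) (hxy₀ : x₀ < y₀) (hm₀ : m₀ < E x₀ y₀ s) :
    ∃ κ > 0, ∀ o : ℝ × ℝ, o.1 ^ 2 + o.2 ^ 2 ≤ 2 * κ ^ 2 →
      (x₀ + o.1 < y₀ + o.2 ∧ x₀ + o.1 ∈ I ∧ y₀ + o.2 ∈ I ∧ x₁ - κ + o.1 ∈ I ∧ x₁ + κ + o.2 ∈ I) ∧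
      m₀ < E (x₀ + o.1) (y₀ + o.2) s := by
  have hmem {x : ℝ} (hx : x ∈ I) {c : ℝ × ℝ → ℝ} (hc : Continuous c) (h0 : c 0 = x) :
      ∀ᶠ o in 𝓝 (0 : ℝ × ℝ), c o ∈ I := (hc.tendsto' 0 x h0).eventually (hI.mem_nhds hx)
  have hlt : ∀ᶠ o in 𝓝 (0 : ℝ × ℝ), x₀ + o.1 < y₀ + o.2 :=
    ContinuousAt.eventually_lt (by fun_prop) (by fun_prop) (by simpa using hxy₀)
  have hx := hmem hx₀ (c := fun o => x₀ + o.1) (by fun_prop) (by simp)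
  have hy := hmem hy₀ (c := fun o => y₀ + o.2) (by fun_prop) (by simp)
  have hEm : ∀ᶠ o in 𝓝 (0 : ℝ × ℝ), m₀ < E (x₀ + o.1) (y₀ + o.2) s := by
    have hshift : Tendsto (fun o : ℝ × ℝ => (x₀ + o.1, y₀ + o.2, s)) (𝓝 0)
        (𝓝[{p | p.1 ≤ p.2.1 ∧ p.1 ∈ I ∧ p.2.1 ∈ I ∧ p.2.2 ∈ Ioc t₀ t₁}] (x₀, y₀, s)) := by
      refine tendsto_nhdsWithin_iff.2 ⟨Continuous.tendsto' (by fun_prop) _ _ (by simp), ?_⟩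
      filter_upwards [hlt, hx, hy] with o ho hox hoy using ⟨ho.le, hox, hoy, hs⟩
    exact hshift.eventually ((hE (x₀, y₀, s) ⟨hxy₀.le, hx₀, hy₀, hs⟩).eventually
      (lt_mem_nhds hm₀))
  have hend := (hmem hx₁ (c := fun o => x₁ + o.1) (by fun_prop) (by simp)).and
    (hmem hx₁ (c := fun o => x₁ + o.2) (by fun_prop) (by simp))
  obtain ⟨κ, hκ, hκ0⟩ := (((eventually_forall_sq_add_sq_le (hlt.and (hx.and (hy.and hEm)))).and
    (eventually_forall_sq_add_sq_le hend)).and self_mem_nhdsWithin).exists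
  refine ⟨κ, hκ0, fun o ho => ?_⟩
  obtain ⟨hlt, hx, hy, hEm⟩ := hκ.1 o (by nlinarith)
  have := hκ.2 (o.1 - κ, o.2 + κ) (by
    dsimp only
    nlinarith [sq_nonneg (o.1 + κ), sq_nonneg (o.2 - κ)])
  rw [sub_add_eq_add_sub, add_sub_assoc, add_assoc x₁ κ, add_comm κ]
  exact ⟨⟨hlt, hx, hy, this⟩, hEm⟩

lemma mem_of_tubeDepth_nonneg (hst : s < t₁) (hIconv : Convex ℝ I) {κ : ℝ} (hκ : 0 < κ)
    (hdisc : ∀ o : ℝ × ℝ, o.1 ^ 2 + o.2 ^ 2 ≤ 2 * κ ^ 2 →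
      x₀ + o.1 < y₀ + o.2 ∧ x₀ + o.1 ∈ I ∧ y₀ + o.2 ∈ I ∧ x₁ - κ + o.1 ∈ I ∧ x₁ + κ + o.2 ∈ I)
    {x y t : ℝ} (ht : t ∈ Icc s t₁) (hdepth : 0 ≤ tubeDepth (2 * κ ^ 2)
      (uniformMotion s t₁ x₀ (x₁ - κ)) (uniformMotion s t₁ y₀ (x₁ + κ)) x y t) :
    x ≤ y ∧ x ∈ I ∧ y ∈ I := by
  simp only [tubeDepth] at hdepth
  obtain ⟨hlt, hx, hy, hx', hy'⟩ := hdisc (x - uniformMotion s t₁ x₀ (x₁ - κ) t,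
    y - uniformMotion s t₁ y₀ (x₁ + κ) t) (by linarith)
  refine ⟨mem_of_uniformMotion_of_convex hst convex_fst_le_snd ht hlt.le ?_,
    mem_of_uniformMotion_of_convex hst (hIconv.prod hIconv) ht ⟨hx, hy⟩ ⟨hx', hy'⟩⟩
  generalize x - uniformMotion s t₁ x₀ (x₁ - κ) t = ξ at *
  generalize y - uniformMotion s t₁ y₀ (x₁ + κ) t = ζ at *
  have hle : ξ - ζ ≤ 2 * κ := le_of_sq_le_sq (by nlinarith [sq_nonneg (ξ + ζ)]) (by positivity)
  change x₁ - κ + ξ ≤ x₁ + κ + ζ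
  linarith

lemma lt_of_tubeDepth_pos (hst : s < t₁) {κ : ℝ} (hκ : 0 < κ)
    (hdisc : ∀ o : ℝ × ℝ, o.1 ^ 2 + o.2 ^ 2 ≤ 2 * κ ^ 2 → x₀ + o.1 < y₀ + o.2)
    {x y t : ℝ} (ht : t ∈ Icc s t₁) (hdepth : 0 < tubeDepth (2 * κ ^ 2)
      (uniformMotion s t₁ x₀ (x₁ - κ)) (uniformMotion s t₁ y₀ (x₁ + κ)) x y t) : x < y := by
  simp only [tubeDepth] at hdepth
  have hlt := hdisc (x - uniformMotion s t₁ x₀ (x₁ - κ) t,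
    y - uniformMotion s t₁ y₀ (x₁ + κ) t) (by linarith)
  refine mem_of_uniformMotion_of_convex hst convex_fst_lt_snd ht hlt ?_
  generalize x - uniformMotion s t₁ x₀ (x₁ - κ) t = ξ at *
  generalize y - uniformMotion s t₁ y₀ (x₁ + κ) t = ζ at *
  have hlt : ξ - ζ < 2 * κ :=
    lt_of_pow_lt_pow_left₀ 2 (by positivity) (by nlinarith [sq_nonneg (ξ + ζ)])
  change x₁ - κ + ξ < x₁ + κ + ζ
  linarith

/-- A barrier is carried along a tube of discs from `(x₀, y₀)` to a disc touching the diagonal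
at `(x₁, x₁)`. -/
lemma exists_linear_lower_bound_of_pos (hI : IsOpen I) (hIconv : Convex ℝ I) (hx₁ : x₁ ∈ I)
    (hC : 0 ≤ C)
    (hE : ContinuousOn (fun p : ℝ × ℝ × ℝ => E p.1 p.2.1 p.2.2)
      {p | p.1 ≤ p.2.1 ∧ p.1 ∈ I ∧ p.2.1 ∈ I ∧ p.2.2 ∈ Ioc t₀ t₁})
    (hE0 : ∀ x ∈ I, ∀ y ∈ I, x ≤ y → ∀ t ∈ Ioc t₀ t₁, 0 ≤ E x y t)
    (hsuper : ∀ x ∈ I, ∀ y ∈ I, x < y → ∀ t ∈ Ioc t₀ t₁, IsSupersolutionAt C E x y t)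
    (hx₀ : x₀ ∈ I) (hy₀ : y₀ ∈ I) (hxy₀ : x₀ < y₀) (hs : s ∈ Ioo t₀ t₁)
    (hpos : 0 < E x₀ y₀ s) :
    ∃ c > 0, ∀ᶠ r in 𝓝[>] (0 : ℝ), c * r ≤ E (x₁ - r) (x₁ + r) t₁ := by
  obtain ⟨m₀, hm₀, hm₀E⟩ := exists_between hpos
  obtain ⟨κ, hκ, hdisc⟩ := exists_disc_radius hI hx₁ ⟨hs.1, hs.2.le⟩ hE hx₀ hy₀ hxy₀ hm₀E
  have htube {x y t : ℝ} (ht : t ∈ Icc s t₁) := mem_of_tubeDepth_nonneg (x := x) (y := y) hs.2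
    hIconv hκ (fun o ho => (hdisc o ho).1) ht
  have hIoc {t : ℝ} (ht : t ∈ Icc s t₁) : t ∈ Ioc t₀ t₁ := ⟨hs.1.trans_le ht.1, ht.2⟩
  obtain ⟨c, hc, hle⟩ := exists_pos_mul_tubeDepth_le (ρ := 2 * κ ^ 2) hC (by positivity) hs.2.le
    (hasDerivAt_uniformMotion x₀ (x₁ - κ)) (hasDerivAt_uniformMotion y₀ (x₁ + κ))
    (hE.mono fun p hp => ⟨(htube hp.2 hp.1).1, (htube hp.2 hp.1).2.1, (htube hp.2 hp.1).2.2,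
      hIoc hp.2⟩)
    (fun x y t ht h => hE0 x (htube ht h).2.1 y (htube ht h).2.2 (htube ht h).1 t (hIoc ht))
    (fun x y t ht h => hsuper x (htube (Ioc_subset_Icc_self ht) h.le).2.1 y
      (htube (Ioc_subset_Icc_self ht) h.le).2.2 (lt_of_tubeDepth_pos hs.2 hκ
        (fun o ho => (hdisc o ho).1.1) (Ioc_subset_Icc_self ht) h) t
        (hIoc (Ioc_subset_Icc_self ht)))
    hm₀ (fun x y h => by
      simp only [tubeDepth, uniformMotion_start] at h
      simpa using (hdisc (x - x₀, y - y₀) (by linarith)).2.le)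
  refine ⟨c * (2 * κ), by positivity, ?_⟩
  filter_upwards [Ioo_mem_nhdsGT hκ] with r hr
  have hdepth : 2 * κ * r ≤ tubeDepth (2 * κ ^ 2) (uniformMotion s t₁ x₀ (x₁ - κ))
      (uniformMotion s t₁ y₀ (x₁ + κ)) (x₁ - r) (x₁ + r) t₁ := by
    simp only [tubeDepth, uniformMotion_end hs.2]
    nlinarith [mul_le_mul_of_nonneg_right hr.2.le hr.1.le]
  calc c * (2 * κ) * r = c * (2 * κ * r) := by ring
    _ ≤ _ := by gcongr
    _ ≤ _ := hle _ _ ((mul_nonneg (by positivity) hr.1.le).trans hdepth)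

/-- The boundary point lemma at the point `(x₁, x₁, t₁)` of the diagonal. -/
lemma eq_zero_of_supersolution_of_sublinear
    (hI : IsOpen I) (hIconv : Convex ℝ I) (hx₁ : x₁ ∈ I) (hC : 0 ≤ C)
    (hE : ContinuousOn (fun p : ℝ × ℝ × ℝ => E p.1 p.2.1 p.2.2)
      {p | p.1 ≤ p.2.1 ∧ p.1 ∈ I ∧ p.2.1 ∈ I ∧ p.2.2 ∈ Ioc t₀ t₁})
    (hE0 : ∀ x ∈ I, ∀ y ∈ I, x ≤ y → ∀ t ∈ Ioc t₀ t₁, 0 ≤ E x y t)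
    (hsuper : ∀ x ∈ I, ∀ y ∈ I, x < y → ∀ t ∈ Ioc t₀ t₁, IsSupersolutionAt C E x y t)
    (hz : ∀ c > 0, ∃ᶠ r in 𝓝[>] (0 : ℝ), E (x₁ - r) (x₁ + r) t₁ < c * r)
    (hx₀ : x₀ ∈ I) (hy₀ : y₀ ∈ I) (hxy₀ : x₀ < y₀) (hs : s ∈ Ioo t₀ t₁) :
    E x₀ y₀ s = 0 := by
  by_contra hne
  have hpos : 0 < E x₀ y₀ s :=
    (hE0 x₀ hx₀ y₀ hy₀ hxy₀.le s ⟨hs.1, hs.2.le⟩).lt_of_ne (Ne.symm hne)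
  obtain ⟨c, hc, hle⟩ :=
    exists_linear_lower_bound_of_pos hI hIconv hx₁ hC hE hE0 hsuper hx₀ hy₀ hxy₀ hs hpos
  exact hz c hc (hle.mono fun r hr => not_lt.2 hr)

end BoundaryPoint

/-! ### Bounds on the nonlinearity -/

/-- Bounds for `f(t, ·)` on `[0, M]`, uniform in `t`: on its values, its increments and its second
differences. -/
structure NonlinearityBounds (f : ℝ → ℝ → ℝ) (M B C₁ C₂ : ℝ) : Prop where
  M_nonneg : 0 ≤ M
  B_nonneg : 0 ≤ B
  C₁_nonneg : 0 ≤ C₁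
  C₂_nonneg : 0 ≤ C₂
  abs_le : ∀ t, ∀ p ∈ Icc 0 M, |f t p| ≤ B
  abs_sub_le : ∀ t, ∀ p ∈ Icc 0 M, ∀ q ∈ Icc 0 M, |f t p - f t q| ≤ C₁ * |p - q|
  abs_second_difference_le : ∀ t, ∀ p ∈ Icc 0 M, ∀ q ∈ Icc 0 M, ∀ r ∈ Icc 0 M, ∀ s ∈ Icc 0 M,
    |f t p - f t q - f t r + f t s| ≤
      C₁ * |p - q - r + s| + C₂ * ((|q - s| + |p - r|) * |r - s|)

lemma abs_lineMap_sub_lineMap_le {θ : ℝ} (hθ : θ ∈ Icc (0 : ℝ) 1) (p q r s : ℝ) :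
    |AffineMap.lineMap q p θ - AffineMap.lineMap s r θ| ≤ |q - s| + |p - r| := by
  have hcomb : AffineMap.lineMap q p θ - AffineMap.lineMap s r θ =
      (1 - θ) * (q - s) + θ * (p - r) := by
    simp only [AffineMap.lineMap_apply_ring]
    ring
  calc |AffineMap.lineMap q p θ - AffineMap.lineMap s r θ|
      ≤ |1 - θ| * |q - s| + |θ| * |p - r| := by
        rw [hcomb, ← abs_mul, ← abs_mul]
        exact abs_add_le _ _
    _ ≤ |q - s| + |p - r| := by
        rw [abs_of_nonneg hθ.1, abs_of_nonneg (sub_nonneg.2 hθ.2)]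
        exact add_le_add (mul_le_of_le_one_left (abs_nonneg _) (sub_le_self 1 hθ.1))
          (mul_le_of_le_one_left (abs_nonneg _) hθ.2)

/-- The mean value inequality along the two segments from `q` to `p` and from `s` to `r`. -/
lemma abs_second_difference_le_of_deriv {φ φ' : ℝ → ℝ} {S : Set ℝ} {C₁ C₂ : ℝ} (hS : Convex ℝ S)
    (hC₂ : 0 ≤ C₂) (hφ : ∀ p ∈ S, HasDerivAt φ (φ' p) p) (hφ' : ∀ p ∈ S, |φ' p| ≤ C₁)
    (hlip : ∀ p ∈ S, ∀ q ∈ S, |φ' p - φ' q| ≤ C₂ * |p - q|)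
    {p q r s : ℝ} (hp : p ∈ S) (hq : q ∈ S) (hr : r ∈ S) (hs : s ∈ S) :
    |φ p - φ q - φ r + φ s| ≤ C₁ * |p - q - r + s| + C₂ * ((|q - s| + |p - r|) * |r - s|) := by
  have hderiv (θ : ℝ) (hθ : θ ∈ Icc (0 : ℝ) 1) : HasDerivWithinAt
      (fun θ => φ (AffineMap.lineMap q p θ) - φ (AffineMap.lineMap s r θ))
      (φ' (AffineMap.lineMap q p θ) * (p - q) - φ' (AffineMap.lineMap s r θ) * (r - s))
      (Icc 0 1) θ :=
    (((hφ _ (hS.lineMap_mem hq hp hθ)).comp θ AffineMap.hasDerivAt_lineMap).sub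
      ((hφ _ (hS.lineMap_mem hs hr hθ)).comp θ AffineMap.hasDerivAt_lineMap)).hasDerivWithinAt
  have hbound (θ : ℝ) (hθ : θ ∈ Icc (0 : ℝ) 1) :
      ‖φ' (AffineMap.lineMap q p θ) * (p - q) - φ' (AffineMap.lineMap s r θ) * (r - s)‖ ≤
        C₁ * |p - q - r + s| + C₂ * ((|q - s| + |p - r|) * |r - s|) := by
    have hqp := hS.lineMap_mem hq hp hθ
    have hsr := hS.lineMap_mem hs hr hθ
    have hdiff := (hlip _ hqp _ hsr).trans
      (mul_le_mul_of_nonneg_left (abs_lineMap_sub_lineMap_le hθ p q r s) hC₂)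
    calc ‖φ' (AffineMap.lineMap q p θ) * (p - q) - φ' (AffineMap.lineMap s r θ) * (r - s)‖
        = |φ' (AffineMap.lineMap q p θ) * (p - q - r + s) +
            (φ' (AffineMap.lineMap q p θ) - φ' (AffineMap.lineMap s r θ)) * (r - s)| := by
          rw [Real.norm_eq_abs]
          ring_nf
      _ ≤ |φ' (AffineMap.lineMap q p θ)| * |p - q - r + s| +
            |φ' (AffineMap.lineMap q p θ) - φ' (AffineMap.lineMap s r θ)| * |r - s| := by
          rw [← abs_mul, ← abs_mul]
          exact abs_add_le _ _
      _ ≤ C₁ * |p - q - r + s| + C₂ * ((|q - s| + |p - r|) * |r - s|) := by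
          rw [← mul_assoc]
          exact add_le_add (mul_le_mul_of_nonneg_right (hφ' _ hqp) (abs_nonneg _))
            (mul_le_mul_of_nonneg_right hdiff (abs_nonneg _))
  have hmvt := (convex_Icc (0 : ℝ) 1).norm_image_sub_le_of_norm_hasDerivWithin_le hderiv hbound
    (left_mem_Icc.2 zero_le_one) (right_mem_Icc.2 zero_le_one)
  simp only [AffineMap.lineMap_apply_one, AffineMap.lineMap_apply_zero, sub_zero, norm_one,
    mul_one, Real.norm_eq_abs] at hmvt
  rwa [show φ p - φ q - φ r + φ s = φ p - φ r - (φ q - φ s) by ring]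

lemma hasDerivAt_comp_prodMk_left {φ : ℝ × ℝ → ℝ} (hφ : Differentiable ℝ φ) (t p : ℝ) :
    HasDerivAt (fun q => φ (t, q)) (fderiv ℝ φ (t, p) (0, 1)) p :=
  (hφ (t, p)).hasFDerivAt.comp_hasDerivAt p ((hasDerivAt_const p t).prodMk (hasDerivAt_id p))

lemma exists_nonlinearityBounds {f : ℝ → ℝ → ℝ} {T M : ℝ} (hT : 0 < T)
    (hf : ContDiff ℝ 2 (Function.uncurry f)) (hfper : ∀ t u : ℝ, f (t + T) u = f t u)
    (hM : 0 ≤ M) : ∃ B C₁ C₂, NonlinearityBounds f M B C₁ C₂ := by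
  obtain ⟨f', hf'⟩ : ∃ f', f' = fun z => fderiv ℝ (Function.uncurry f) z (0, 1) := ⟨_, rfl⟩
  obtain ⟨f'', hf''⟩ : ∃ f'', f'' = fun z => fderiv ℝ f' z (0, 1) := ⟨_, rfl⟩
  have hf'C : ContDiff ℝ 1 f' :=
    hf' ▸ (hf.fderiv_right (m := 1) (by norm_num)).clm_apply contDiff_const
  have hf''C : Continuous f'' :=
    hf'' ▸ (hf'C.continuous_fderiv one_ne_zero).clm_apply continuous_const
  have hderiv (t p : ℝ) : HasDerivAt (f t) (f' (t, p)) p :=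
    hf' ▸ hasDerivAt_comp_prodMk_left (hf.differentiable two_ne_zero) t p
  have hderiv₂ (t p : ℝ) : HasDerivAt (fun q => f' (t, q)) (f'' (t, p)) p :=
    hf'' ▸ hasDerivAt_comp_prodMk_left (hf'C.differentiable one_ne_zero) t p
  have hcompact : IsCompact (Icc 0 T ×ˢ Icc 0 M) := isCompact_Icc.prod isCompact_Icc
  obtain ⟨B, hB⟩ := hcompact.exists_bound_of_continuousOn hf.continuous.continuousOn
  obtain ⟨C₁, hC₁⟩ := hcompact.exists_bound_of_continuousOn hf'C.continuous.continuousOn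
  obtain ⟨C₂, hC₂⟩ := hcompact.exists_bound_of_continuousOn hf''C.continuousOn
  have h00 : ((0 : ℝ), (0 : ℝ)) ∈ Icc 0 T ×ˢ Icc 0 M :=
    ⟨left_mem_Icc.2 hT.le, left_mem_Icc.2 hM⟩
  have hC₂0 : 0 ≤ C₂ := (norm_nonneg _).trans (hC₂ _ h00)
  have reduce (t : ℝ) : ∃ t' ∈ Icc 0 T, f t = f t' := by
    obtain ⟨t', ht', heq⟩ := Function.Periodic.exists_mem_Ico₀ (fun t => funext (hfper t)) hT t
    exact ⟨t', Ico_subset_Icc_self ht', heq⟩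
  refine ⟨B, C₁, C₂, hM, (norm_nonneg _).trans (hB _ h00), (norm_nonneg _).trans (hC₁ _ h00), hC₂0,
    fun t p hp => ?_, fun t p hp q hq => ?_, fun t p hp q hq r hr s hs => ?_⟩
  all_goals
    obtain ⟨t', ht', heq⟩ := reduce t
    rw [heq]
  · exact hB (t', p) ⟨ht', hp⟩
  · exact (convex_Icc 0 M).norm_image_sub_le_of_norm_hasDerivWithin_le
      (fun x _ => (hderiv t' x).hasDerivWithinAt) (fun x hx => hC₁ (t', x) ⟨ht', hx⟩) hq hp
  · exact abs_second_difference_le_of_deriv (convex_Icc 0 M) hC₂0 (fun x _ => hderiv t' x)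
      (fun x hx => hC₁ (t', x) ⟨ht', hx⟩)
      (fun x hx y hy => (convex_Icc 0 M).norm_image_sub_le_of_norm_hasDerivWithin_le
        (fun z _ => (hderiv₂ t' z).hasDerivWithinAt) (fun z hz => hC₂ (t', z) ⟨ht', hz⟩) hy hx)
      hp hq hr hs

/-! ### Interior Lipschitz estimates by doubling of variables -/

/-- `v` is a classical solution of the linear equation `v_t = v_xx + h` on `ℝ × (c, ∞)`. -/
structure IsHeatSol (c : ℝ) (v h : ℝ → ℝ → ℝ) : Prop where
  continuousOn : ContinuousOn (fun p : ℝ × ℝ => v p.1 p.2) (univ ×ˢ Ioi c)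
  exists_jet : ∀ x, ∀ t > c, ∃ a b d, HasJet (fun y => v y t) x a b ∧
    HasDerivAt (fun r => v x r) d t ∧ d = b + h x t

/-- `v` is bounded by `A` on `ℝ × (c, ∞)`. -/
def BoundedAfter (c A : ℝ) (v : ℝ → ℝ → ℝ) : Prop :=
  ∀ t > c, ∀ x, |v x t| ≤ A

/-- `v(·, t)` is Lipschitz with constant `L` for every `t > c`. -/
def LipschitzInSpaceAfter (c L : ℝ) (v : ℝ → ℝ → ℝ) : Prop :=
  ∀ t > c, ∀ x y, |v x t - v y t| ≤ L * |x - y|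

/-- The Lipschitz constant in space that a solution of `v_t = v_xx + h` with `|v| ≤ A` and
`|h| ≤ B` acquires within a unit of time. -/
def heatLipschitzConst (A B : ℝ) : ℝ := 2 * (2 * A + 2 * B + 1)

/-- The concave profile `r (2 - r)` of `r = x - y` controls the differences of a solution. -/
def doubledDifference (N s : ℝ) (v : ℝ → ℝ → ℝ) (x y t : ℝ) : ℝ :=
  (t - s) * (v x t - v y t) - N * (1 - (x - y - 1) ^ 2)

namespace BoundedAfter

variable {c A : ℝ} {v : ℝ → ℝ → ℝ}

lemma nonneg (hv : BoundedAfter c A v) : 0 ≤ A :=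
  (abs_nonneg _).trans (hv (c + 1) (lt_add_one c) 0)

lemma abs_sub_le (hv : BoundedAfter c A v) {t : ℝ} (ht : c < t) (x y : ℝ) :
    |v x t - v y t| ≤ 2 * A := by
  linarith [abs_sub (v x t) (v y t), hv t ht x, hv t ht y]

end BoundedAfter

lemma heatLipschitzConst_nonneg {A B : ℝ} (hA : 0 ≤ A) (hB : 0 ≤ B) :
    0 ≤ heatLipschitzConst A B := by
  unfold heatLipschitzConst
  positivity

lemma hasParabolicJet_doubledDifference {N s x y t a b d a' b' d' : ℝ} {v : ℝ → ℝ → ℝ}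
    (hx : HasJet (fun z => v z t) x a b) (hxt : HasDerivAt (fun r => v x r) d t)
    (hy : HasJet (fun z => v z t) y a' b') (hyt : HasDerivAt (fun r => v y r) d' t) :
    HasParabolicJet (doubledDifference N s v) x y t
      ((t - s) * a + N * (2 * (x - y - 1))) ((t - s) * b + N * 2)
      (-((t - s) * a') - N * (2 * (x - y - 1))) (-((t - s) * b') + N * 2)
      (v x t - v y t + (t - s) * (d - d')) := by
  unfold doubledDifference
  refine ⟨?_, ?_, ?_⟩
  · convert ((hx.sub (.const (v y t) x)).const_mul (t - s)).sub
      (((HasJet.const 1 x).sub (.sq_sub (y + 1) x)).const_mul N) using 1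
    · simp only [sub_sub]
    all_goals ring
  · convert (((HasJet.const (v x t) y).sub hy).const_mul (t - s)).sub
      (((HasJet.const 1 y).sub (.sq_sub (x - 1) y)).const_mul N) using 1
    · funext z
      ring
    all_goals ring
  · refine ((((hasDerivAt_id t).sub_const s).mul (hxt.sub hyt)).sub_const _).congr_deriv ?_
    simp

namespace IsHeatSol

variable {c A B s : ℝ} {v h : ℝ → ℝ → ℝ}

lemma neg (hv : IsHeatSol c v h) : IsHeatSol c (fun x t => -v x t) fun x t => -h x t := by
  refine ⟨hv.continuousOn.neg, fun x t ht => ?_⟩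
  obtain ⟨a, b, d, hjet, hd, heq⟩ := hv.exists_jet x t ht
  exact ⟨_, _, _, by simpa using hjet.const_mul (-1), hd.neg, by linarith⟩

lemma isSubsolutionAt_doubledDifference (hv : IsHeatSol c v h) (hA : BoundedAfter c A v)
    (hB : BoundedAfter c B h) (hcs : c < s) {t : ℝ} (ht : t ∈ Icc s (s + 1)) (x y : ℝ) :
    IsSubsolutionAt 0 (doubledDifference (2 * A + 2 * B + 1) s v) x y t := by
  have hct : c < t := hcs.trans_le ht.1
  obtain ⟨a, b, d, hjet, hd, heq⟩ := hv.exists_jet x t hct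
  obtain ⟨a', b', d', hjet', hd', heq'⟩ := hv.exists_jet y t hct
  refine ⟨_, _, _, _, _, hasParabolicJet_doubledDifference hjet hd hjet' hd', ?_⟩
  have hsource : (t - s) * (h x t - h y t) ≤ 2 * B :=
    calc (t - s) * (h x t - h y t) ≤ (t - s) * (2 * B) :=
          mul_le_mul_of_nonneg_left ((le_abs_self _).trans (hB.abs_sub_le hct x y))
            (sub_nonneg.2 ht.1)
      _ ≤ 2 * B := mul_le_of_le_one_left (mul_nonneg two_pos.le hB.nonneg) (by linarith [ht.2])
  rw [heq, heq']
  linarith [(le_abs_self _).trans (hA.abs_sub_le hct x y), hA.nonneg, hB.nonneg]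

lemma sub_le_of_sub_le_one (hv : IsHeatSol c v h) (hA : BoundedAfter c A v)
    (hB : BoundedAfter c B h) (hcs : c < s) {x y : ℝ} (hyx : y ≤ x) (hxy : x - y ≤ 1) :
    v x (s + 1) - v y (s + 1) ≤ heatLipschitzConst A B * (x - y) := by
  obtain ⟨N, hN⟩ : ∃ N, N = 2 * A + 2 * B + 1 := ⟨_, rfl⟩
  have hN0 : 2 * A < N := by linarith [hB.nonneg]
  have hA0 : 0 ≤ A := hA.nonneg
  have hdiff {t : ℝ} (ht : t ∈ Icc s (s + 1)) (x y : ℝ) : (t - s) * (v x t - v y t) ≤ 2 * A :=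
    calc (t - s) * (v x t - v y t) ≤ (t - s) * (2 * A) :=
          mul_le_mul_of_nonneg_left
            ((le_abs_self _).trans (hA.abs_sub_le (hcs.trans_le ht.1) x y)) (sub_nonneg.2 ht.1)
      _ ≤ 2 * A := mul_le_of_le_one_left (by positivity) (by linarith [ht.2])
  have hprofile {x y : ℝ} (hxy : x - y ∈ Icc (0 : ℝ) 1) : 0 ≤ N * (1 - (x - y - 1) ^ 2) :=
    mul_nonneg (by linarith) (by nlinarith [hxy.1, hxy.2])
  have hle : doubledDifference N s v x y (s + 1) ≤ 0 := by
    refine nonpos_of_bounded_subsolution (D := {p | p.1 - p.2 ∈ Icc (0 : ℝ) 1})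
      (J := Icc s (s + 1)) (C := 0) (c := s) (M := 2 * A) (isClosed_Icc.preimage (by fun_prop))
      ordConnected_Icc Icc_subset_Ici_self le_rfl ?_ ?_ ?_ ?_ ⟨sub_nonneg.2 hyx, hxy⟩
      (right_mem_Icc.2 (by linarith))
    · have hmaps (t : ℝ) (ht : t ∈ Icc s (s + 1)) : t ∈ Ioi c := hcs.trans_le ht.1
      refine .sub (.mul (by fun_prop) (.sub ?_ ?_)) (by fun_prop)
      · exact hv.continuousOn.comp (f := fun p : ℝ × ℝ × ℝ => (p.1, p.2.2)) (by fun_prop)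
          fun p hp => ⟨trivial, hmaps _ hp.2⟩
      · exact hv.continuousOn.comp (f := fun p : ℝ × ℝ × ℝ => (p.2.1, p.2.2)) (by fun_prop)
          fun p hp => ⟨trivial, hmaps _ hp.2⟩
    · exact fun x y hxy t ht => (sub_le_self _ (hprofile hxy)).trans (hdiff ht x y)
    · refine fun η hη R t ht => ⟨s, left_mem_Icc.2 (by linarith), ht.1, fun x y hxy _ _ => ?_⟩
      rw [doubledDifference, sub_self, zero_mul]
      linarith [hprofile hxy]
    · refine fun x y hxy t ht hpos => ⟨?_,
        hN ▸ hv.isSubsolutionAt_doubledDifference hA hB hcs ht x y⟩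
      rw [doubledDifference] at hpos
      have hne0 : x - y ≠ 0 := fun h0 => by
        rw [h0, sub_eq_zero.1 h0] at hpos
        norm_num at hpos
      have hne1 : x - y ≠ 1 := fun h1 => by
        rw [h1] at hpos
        linarith [hdiff ht x y]
      exact (continuous_sub.continuousAt (x := (x, y))).preimage_mem_nhds
        (Icc_mem_nhds (hxy.1.lt_of_ne' hne0) (hxy.2.lt_of_ne hne1))
  rw [doubledDifference, add_sub_cancel_left, one_mul] at hle
  rw [heatLipschitzConst, ← hN]
  nlinarith [mul_nonneg (show 0 ≤ N by linarith) (sq_nonneg (x - y))]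

theorem lipschitzInSpaceAfter (hv : IsHeatSol c v h) (hA : BoundedAfter c A v)
    (hB : BoundedAfter c B h) :
    LipschitzInSpaceAfter (c + 1) (heatLipschitzConst A B) v := by
  intro t ht x y
  obtain ⟨s, rfl⟩ : ∃ s, t = s + 1 := ⟨t - 1, by ring⟩
  have hcs : c < s := by linarith
  wlog hxy : y ≤ x generalizing x y with H
  · rw [abs_sub_comm, abs_sub_comm x]
    exact H y x (le_of_not_ge hxy)
  rw [abs_of_nonneg (sub_nonneg.2 hxy)]
  rcases le_or_gt (x - y) 1 with hle | hgt
  · rw [abs_le']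
    refine ⟨hv.sub_le_of_sub_le_one hA hB hcs hxy hle, ?_⟩
    have hneg := hv.neg.sub_le_of_sub_le_one (A := A) (B := B)
      (fun t ht x => (abs_neg _).trans_le (hA t ht x))
      (fun t ht x => (abs_neg _).trans_le (hB t ht x)) hcs hxy hle
    linarith
  · have hconst : 2 * A ≤ heatLipschitzConst A B := by
      unfold heatLipschitzConst
      linarith [hA.nonneg, hB.nonneg]
    calc |v x (s + 1) - v y (s + 1)| ≤ 2 * A := hA.abs_sub_le (by linarith) x y
      _ ≤ heatLipschitzConst A B * (x - y) := hconst.trans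
          (le_mul_of_one_le_right (heatLipschitzConst_nonneg hA.nonneg hB.nonneg) hgt.le)

end IsHeatSol

/-! ### Difference quotients -/

/-- The forward difference quotient in space with step `k`. -/
def diffQuot (k : ℝ) (v : ℝ → ℝ → ℝ) (x t : ℝ) : ℝ := k⁻¹ * (v (x + k) t - v x t)

section DiffQuot

variable {c k L : ℝ} {v vx h : ℝ → ℝ → ℝ}

lemma tendsto_diffQuot {x t a : ℝ} (hv : HasDerivAt (fun y => v y t) a x) :
    Tendsto (fun k => diffQuot k v x t) (𝓝[>] 0) (𝓝 a) := by
  simpa [diffQuot] using hv.tendsto_slope_zero_right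

lemma hasDerivAt_diffQuot (hv : ∀ t > c, ∀ x, HasDerivAt (fun y => v y t) (vx x t) x) :
    ∀ t > c, ∀ x, HasDerivAt (fun y => diffQuot k v y t) (diffQuot k vx x t) x :=
  fun t ht x => (((hv t ht (x + k)).comp_add_const x k).sub (hv t ht x)).const_mul k⁻¹

lemma IsHeatSol.diffQuot (hv : IsHeatSol c v h) (k : ℝ) :
    IsHeatSol c (diffQuot k v) (diffQuot k h) := by
  refine ⟨?_, fun x t ht => ?_⟩
  · refine .mul continuousOn_const (.sub ?_ hv.continuousOn)
    exact hv.continuousOn.comp (f := fun p : ℝ × ℝ => (p.1 + k, p.2)) (by fun_prop)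
      fun p hp => ⟨trivial, hp.2⟩
  · obtain ⟨a, b, d, hjet, hd, heq⟩ := hv.exists_jet x t ht
    obtain ⟨a', b', d', hjet', hd', heq'⟩ := hv.exists_jet (x + k) t ht
    refine ⟨_, _, _, ((hjet'.comp_add_const k).sub hjet).const_mul k⁻¹,
      (hd'.sub hd).const_mul k⁻¹, ?_⟩
    rw [heq, heq', _root_.diffQuot]
    ring

lemma IsHeatSol.mono (hv : IsHeatSol c v h) {c' : ℝ} (hc : c ≤ c') : IsHeatSol c' v h :=
  ⟨hv.continuousOn.mono (prod_mono_right (Ioi_subset_Ioi hc)),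
    fun x t ht => hv.exists_jet x t (hc.trans_lt ht)⟩

namespace LipschitzInSpaceAfter

lemma boundedAfter_diffQuot (hv : LipschitzInSpaceAfter c L v) (hk : 0 < k) :
    BoundedAfter c L (diffQuot k v) := by
  intro t ht x
  rw [diffQuot, abs_mul, abs_of_pos (inv_pos.2 hk), inv_mul_le_iff₀ hk, mul_comm]
  simpa [abs_of_pos hk] using hv t ht (x + k) x

lemma abs_add_sub_le (hv : LipschitzInSpaceAfter c L v) (hk : 0 < k) {t : ℝ} (ht : c < t) (x : ℝ) :
    |v (x + k) t - v x t| ≤ L * k := by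
  simpa [abs_of_pos hk] using hv t ht (x + k) x

lemma boundedAfter_deriv (hv : LipschitzInSpaceAfter c L v)
    (hvx : ∀ t > c, ∀ x, HasDerivAt (fun y => v y t) (vx x t) x) : BoundedAfter c L vx := by
  intro t ht x
  refine le_of_tendsto (tendsto_diffQuot (hvx t ht x)).abs ?_
  filter_upwards [self_mem_nhdsWithin] with k hk using hv.boundedAfter_diffQuot hk t ht x

lemma of_diffQuot (hv : ∀ k > 0, LipschitzInSpaceAfter c L (diffQuot k v))
    (hvx : ∀ t > c, ∀ x, HasDerivAt (fun y => v y t) (vx x t) x) :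
    LipschitzInSpaceAfter c L vx := by
  intro t ht x y
  refine le_of_tendsto ((tendsto_diffQuot (hvx t ht x)).sub (tendsto_diffQuot (hvx t ht y))).abs ?_
  filter_upwards [self_mem_nhdsWithin] with k hk using hv k hk t ht x y

end LipschitzInSpaceAfter

end DiffQuot

/-! ### Uniform regularity of bounded solutions -/

/-- A classical solution of `u_t = u_xx + f(t, u)` on `ℝ × I` with its derivatives named: `ut` in
time, `ux` and `uxx` in space. -/
structure IsSolWithDerivs (f u ut ux uxx : ℝ → ℝ → ℝ) (I : Set ℝ) : Prop where
  hasDerivAt_time : ∀ x : ℝ, ∀ t ∈ I, HasDerivAt (fun s => u x s) (ut x t) t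
  hasDerivAt_space : ∀ x : ℝ, ∀ t ∈ I, HasDerivAt (fun y => u y t) (ux x t) x
  hasDerivAt_space₂ : ∀ x : ℝ, ∀ t ∈ I, HasDerivAt (fun y => ux y t) (uxx x t) x
  continuousOn_time : ContinuousOn (fun p : ℝ × ℝ => ut p.1 p.2) (univ ×ˢ I)
  continuousOn_space : ContinuousOn (fun p : ℝ × ℝ => ux p.1 p.2) (univ ×ˢ I)
  continuousOn_space₂ : ContinuousOn (fun p : ℝ × ℝ => uxx p.1 p.2) (univ ×ˢ I)
  equation : ∀ x : ℝ, ∀ t ∈ I, ut x t = uxx x t + f t (u x t)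

lemma IsSolOn.exists_derivs {f u : ℝ → ℝ → ℝ} {I : Set ℝ} (hu : IsSolOn f u I) :
    ∃ ut ux uxx, IsSolWithDerivs f u ut ux uxx I := by
  obtain ⟨ut, ux, uxx, ht, hx, hxx, hct, hcx, hcxx, heq⟩ := hu
  exact ⟨ut, ux, uxx, ht, hx, hxx, hct, hcx, hcxx, heq⟩

namespace IsSolWithDerivs

section

variable {f u ut ux uxx : ℝ → ℝ → ℝ} {I : Set ℝ}

lemma isSolOn (hu : IsSolWithDerivs f u ut ux uxx I) : IsSolOn f u I :=
  ⟨ut, ux, uxx, hu.hasDerivAt_time, hu.hasDerivAt_space, hu.hasDerivAt_space₂,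
    hu.continuousOn_time, hu.continuousOn_space, hu.continuousOn_space₂, hu.equation⟩

lemma hasJet (hu : IsSolWithDerivs f u ut ux uxx I) (x : ℝ) {t : ℝ} (ht : t ∈ I) :
    HasJet (fun y => u y t) x (ux x t) (uxx x t) :=
  .of_hasDerivAt (g' := fun y => ux y t) (fun y => hu.hasDerivAt_space y t ht)
    (hu.hasDerivAt_space₂ x t ht)

lemma hasStrictFDerivAt (hu : IsSolWithDerivs f u ut ux uxx I) (hI : IsOpen I) (x : ℝ) {t : ℝ}
    (ht : t ∈ I) :
    HasStrictFDerivAt (fun p : ℝ × ℝ => u p.1 p.2)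
      ((ContinuousLinearMap.toSpanSingleton ℝ (ux x t)).coprod
        (ContinuousLinearMap.toSpanSingleton ℝ (ut x t))) (x, t) := by
  have hmem : (univ : Set ℝ) ×ˢ I ∈ 𝓝 (x, t) := (isOpen_univ.prod hI).mem_nhds ⟨trivial, ht⟩
  have hcont : Continuous fun a : ℝ => ContinuousLinearMap.toSpanSingleton ℝ a :=
    (ContinuousLinearMap.toSpanSingletonCLE (𝕜 := ℝ) (E := ℝ)).continuous
  exact hasStrictFDerivAt_uncurry_coprod (f := u)
    (f₁ := fun x t => ContinuousLinearMap.toSpanSingleton ℝ (ux x t))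
    (f₂ := fun x t => ContinuousLinearMap.toSpanSingleton ℝ (ut x t))
    (by filter_upwards [hmem] with p hp using (hu.hasDerivAt_space p.1 p.2 hp.2).hasFDerivAt)
    (by filter_upwards [hmem] with p hp using (hu.hasDerivAt_time p.1 p.2 hp.2).hasFDerivAt)
    (hcont.continuousAt.comp (hu.continuousOn_space.continuousAt hmem))
    (hcont.continuousAt.comp (hu.continuousOn_time.continuousAt hmem))

lemma continuousOn (hu : IsSolWithDerivs f u ut ux uxx I) (hI : IsOpen I) :
    ContinuousOn (fun p : ℝ × ℝ => u p.1 p.2) (univ ×ˢ I) :=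
  fun p hp => (hu.hasStrictFDerivAt hI p.1 hp.2).continuousAt.continuousWithinAt

lemma isHeatSol {c : ℝ} (hu : IsSolWithDerivs f u ut ux uxx (Ioi c)) :
    IsHeatSol c u fun x t => f t (u x t) :=
  ⟨hu.continuousOn isOpen_Ioi,
    fun x t ht => ⟨_, _, _, hu.hasJet x ht, hu.hasDerivAt_time x t ht, hu.equation x t ht⟩⟩

end

section Regularity

variable {f u ut ux uxx : ℝ → ℝ → ℝ} {M B C₁ C₂ c L L₁ L₂ : ℝ}

lemma _root_.NonlinearityBounds.lipschitzInSpaceAfter_comp (hf : NonlinearityBounds f M B C₁ C₂)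
    (hrange : ∀ x, ∀ t > c, u x t ∈ Icc 0 M) (hu : LipschitzInSpaceAfter c L u) :
    LipschitzInSpaceAfter c (C₁ * L) fun x t => f t (u x t) := by
  intro t ht x y
  rw [mul_assoc]
  exact (hf.abs_sub_le t _ (hrange x t ht) _ (hrange y t ht)).trans
    (mul_le_mul_of_nonneg_left (hu t ht x y) hf.C₁_nonneg)

lemma _root_.NonlinearityBounds.boundedAfter_diffQuot_diffQuot
    (hf : NonlinearityBounds f M B C₁ C₂) (hrange : ∀ x, ∀ t > c, u x t ∈ Icc 0 M)
    (hL₁0 : 0 ≤ L₁) (hL₁ : LipschitzInSpaceAfter c L₁ u) {k l : ℝ} (hk : 0 < k) (hl : 0 < l)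
    (hL₂ : LipschitzInSpaceAfter c L₂ (diffQuot k u)) :
    BoundedAfter c (C₁ * L₂ + 2 * C₂ * L₁ ^ 2)
      (diffQuot l (diffQuot k fun x t => f t (u x t))) := by
  intro t ht x
  have hsecond : |u (x + l + k) t - u (x + l) t - u (x + k) t + u x t| ≤ k * (L₂ * l) := by
    have hdq : u (x + l + k) t - u (x + l) t - u (x + k) t + u x t =
        k * (diffQuot k u (x + l) t - diffQuot k u x t) := by
      simp only [diffQuot]
      field_simp
      ring
    rw [hdq, abs_mul, abs_of_pos hk]
    exact mul_le_mul_of_nonneg_left (hL₂.abs_add_sub_le hl ht x) hk.le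
  have hfirst : |u (x + l + k) t - u (x + k) t| ≤ L₁ * l := by
    simpa only [add_right_comm x k l] using hL₁.abs_add_sub_le hl ht (x + k)
  have hproduct : (|u (x + l) t - u x t| + |u (x + l + k) t - u (x + k) t|) *
      |u (x + k) t - u x t| ≤ (L₁ * l + L₁ * l) * (L₁ * k) :=
    mul_le_mul (add_le_add (hL₁.abs_add_sub_le hl ht x) hfirst) (hL₁.abs_add_sub_le hk ht x)
      (abs_nonneg _) (by positivity)
  have hunfold : diffQuot l (diffQuot k fun x t => f t (u x t)) x t = l⁻¹ * (k⁻¹ *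
      (f t (u (x + l + k) t) - f t (u (x + l) t) - f t (u (x + k) t) + f t (u x t))) := by
    simp only [diffQuot]
    ring
  rw [hunfold, abs_mul, abs_mul, abs_of_pos (inv_pos.2 hk), abs_of_pos (inv_pos.2 hl),
    inv_mul_le_iff₀ hl, inv_mul_le_iff₀ hk]
  calc |f t (u (x + l + k) t) - f t (u (x + l) t) - f t (u (x + k) t) + f t (u x t)|
      ≤ C₁ * (k * (L₂ * l)) + C₂ * ((L₁ * l + L₁ * l) * (L₁ * k)) :=
        (hf.abs_second_difference_le t _ (hrange _ t ht) _ (hrange _ t ht) _ (hrange _ t ht) _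
          (hrange _ t ht)).trans (add_le_add (mul_le_mul_of_nonneg_left hsecond hf.C₁_nonneg)
            (mul_le_mul_of_nonneg_left hproduct hf.C₂_nonneg))
    _ = k * (l * (C₁ * L₂ + 2 * C₂ * L₁ ^ 2)) := by ring

/-- The Lipschitz estimate applies to the solution and then to its difference quotients of the first
two orders, losing one unit of time at each step. -/
theorem exists_lipschitzInSpaceAfter (hu : IsSolWithDerivs f u ut ux uxx (Ioi 0))
    (hf : NonlinearityBounds f M B C₁ C₂) (hrange : ∀ x, ∀ t > 0, u x t ∈ Icc 0 M) :
    ∃ L₁ L₂ L₃, LipschitzInSpaceAfter 1 L₁ u ∧ LipschitzInSpaceAfter 2 L₂ ux ∧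
      LipschitzInSpaceAfter 3 L₃ uxx := by
  have hL₁ : LipschitzInSpaceAfter 1 (heatLipschitzConst M B) u := by
    simpa using hu.isHeatSol.lipschitzInSpaceAfter
      (fun t ht x => (abs_of_nonneg (hrange x t ht).1).trans_le (hrange x t ht).2)
      (fun t ht x => hf.abs_le t _ (hrange x t ht))
  have hrange₁ (x t : ℝ) (ht : t > 1) : u x t ∈ Icc 0 M := hrange x t (one_pos.trans ht)
  have hdiff {c : ℝ} (hc : 0 ≤ c) : ∀ t > c, ∀ x, HasDerivAt (fun y => u y t) (ux x t) x :=
    fun t ht x => hu.hasDerivAt_space x t (hc.trans_lt ht)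
  have hL₁0 : 0 ≤ heatLipschitzConst M B := heatLipschitzConst_nonneg hf.M_nonneg hf.B_nonneg
  generalize heatLipschitzConst M B = L₁ at hL₁ hL₁0
  obtain ⟨L₂, hL₂⟩ : ∃ L₂, ∀ k > 0, LipschitzInSpaceAfter 2 L₂ (diffQuot k u) := by
    refine ⟨heatLipschitzConst L₁ (C₁ * L₁), fun k hk => ?_⟩
    have := ((hu.isHeatSol.mono zero_le_one).diffQuot k).lipschitzInSpaceAfter
      (hL₁.boundedAfter_diffQuot hk)
      ((hf.lipschitzInSpaceAfter_comp hrange₁ hL₁).boundedAfter_diffQuot hk)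
    rwa [one_add_one_eq_two] at this
  have hL₁' : LipschitzInSpaceAfter 2 L₁ u := fun t ht => hL₁ t (one_lt_two.trans ht)
  obtain ⟨L₃, hL₃⟩ : ∃ L₃, ∀ k > 0, ∀ l > 0,
      LipschitzInSpaceAfter 3 L₃ (diffQuot l (diffQuot k u)) := by
    refine ⟨heatLipschitzConst L₂ (C₁ * L₂ + 2 * C₂ * L₁ ^ 2), fun k hk l hl => ?_⟩
    have := (((hu.isHeatSol.mono zero_le_two).diffQuot k).diffQuot l).lipschitzInSpaceAfter
      ((hL₂ k hk).boundedAfter_diffQuot hl)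
      (hf.boundedAfter_diffQuot_diffQuot (fun x t ht => hrange₁ x t (one_lt_two.trans ht)) hL₁0 hL₁'
        hk hl (hL₂ k hk))
    rwa [two_add_one_eq_three] at this
  refine ⟨L₁, L₂, L₃, hL₁, .of_diffQuot hL₂ (hdiff zero_le_two), .of_diffQuot (fun k hk => ?_)
    fun t ht x => hu.hasDerivAt_space₂ x t (three_pos.trans ht)⟩
  exact .of_diffQuot (fun l hl => hL₃ k hk l hl) (hasDerivAt_diffQuot (hdiff three_pos.le))

end Regularity

end IsSolWithDerivs

section UniformContinuity

variable {g gx gt : ℝ → ℝ → ℝ} {c L K : ℝ}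

lemma uniformContinuousOn_of_lipschitz (hspace : LipschitzInSpaceAfter c L g)
    (hderiv : ∀ x, ∀ t > c, HasDerivAt (fun s => g x s) (gt x t) t) (htime : BoundedAfter c K gt) :
    UniformContinuousOn (fun p : ℝ × ℝ => g p.1 p.2) (univ ×ˢ Ioi c) := by
  have hK : 0 ≤ K := htime.nonneg
  refine LipschitzOnWith.uniformContinuousOn (K := (|L| + K).toNNReal)
    (.of_dist_le_mul fun p hp q hq => ?_)
  rw [Real.coe_toNNReal _ (by positivity), Real.dist_eq]
  have hx : |p.1 - q.1| ≤ dist p q := le_max_left _ _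
  have ht : |p.2 - q.2| ≤ dist p q := le_max_right _ _
  have hmvt : |g q.1 p.2 - g q.1 q.2| ≤ K * |p.2 - q.2| :=
    (convex_Ioi c).norm_image_sub_le_of_norm_hasDerivWithin_le
      (fun r hr => (hderiv q.1 r hr).hasDerivWithinAt) (fun r hr => htime r hr q.1) hq.2 hp.2
  calc |g p.1 p.2 - g q.1 q.2|
      ≤ |g p.1 p.2 - g q.1 p.2| + |g q.1 p.2 - g q.1 q.2| := abs_sub_le _ _ _
    _ ≤ |L| * |p.1 - q.1| + K * |p.2 - q.2| := add_le_add ((hspace _ hp.2 _ _).trans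
        (mul_le_mul_of_nonneg_right (le_abs_self L) (abs_nonneg _))) hmvt
    _ ≤ (|L| + K) * dist p q := by
        rw [add_mul]
        gcongr

lemma LipschitzInSpaceAfter.abs_taylor_remainder_le (hgx : LipschitzInSpaceAfter c L gx)
    (hderiv : ∀ x, ∀ t > c, HasDerivAt (fun y => g y t) (gx x t) x) {k : ℝ} (hk : 0 < k) {t : ℝ}
    (ht : c < t) (x : ℝ) : |g (x + k) t - g x t - k * gx x t| ≤ |L| * k * k := by
  have hmvt := (convex_Icc x (x + k)).norm_image_sub_le_of_norm_hasDerivWithin_le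
    (f := fun y => g y t - y * gx x t) (f' := fun y => gx y t - 1 * gx x t) (C := |L| * k)
    (fun y _ => ((hderiv y t ht).sub ((hasDerivAt_id y).mul_const _)).hasDerivWithinAt) ?_
    (left_mem_Icc.2 (by linarith)) (right_mem_Icc.2 (by linarith))
  · rw [add_sub_cancel_left, Real.norm_eq_abs, Real.norm_eq_abs, abs_of_pos hk] at hmvt
    convert hmvt using 2
    ring
  · intro y hy
    rw [one_mul]
    refine (hgx t ht y x).trans (mul_le_mul (le_abs_self L) ?_ (abs_nonneg _) (abs_nonneg _))
    rw [abs_of_nonneg (by linarith [hy.1])]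
    linarith [hy.2]

/-- Interpolation: by Taylor's formula `gx` is within `L k` of the difference quotient of `g` with
step `k`. -/
lemma LipschitzInSpaceAfter.uniformContinuousOn_deriv (hgx : LipschitzInSpaceAfter c L gx)
    (hg : UniformContinuousOn (fun p : ℝ × ℝ => g p.1 p.2) (univ ×ˢ Ioi c))
    (hderiv : ∀ x, ∀ t > c, HasDerivAt (fun y => g y t) (gx x t) x) :
    UniformContinuousOn (fun p : ℝ × ℝ => gx p.1 p.2) (univ ×ˢ Ioi c) := by
  rw [Metric.uniformContinuousOn_iff] at hg ⊢
  intro ε hε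
  obtain ⟨k, hk, hkL⟩ : ∃ k > 0, |L| * k < ε / 4 := by
    refine ⟨ε / (4 * (|L| + 1)), by positivity, ?_⟩
    rw [← mul_div_assoc, div_lt_iff₀ (by positivity)]
    nlinarith
  obtain ⟨δ, hδ, hclose⟩ := hg (k * (ε / 8)) (by positivity)
  refine ⟨δ, hδ, fun p hp q hq hpq => ?_⟩
  have hp' := hgx.abs_taylor_remainder_le hderiv hk hp.2 p.1
  have hq' := hgx.abs_taylor_remainder_le hderiv hk hq.2 q.1
  have hpq' := hclose p hp q hq hpq
  have hshift := hclose (p.1 + k, p.2) ⟨trivial, hp.2⟩ (q.1 + k, q.2) ⟨trivial, hq.2⟩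
    (by simpa [Prod.dist_eq] using hpq)
  have hrem : |L| * k * k < ε / 4 * k := mul_lt_mul_of_pos_right hkL hk
  rw [Real.dist_eq] at hpq' hshift ⊢
  refine lt_of_mul_lt_mul_left (a := k) ?_ hk.le
  rw [← abs_of_pos hk, ← abs_mul, abs_of_pos hk]
  rw [abs_le] at hp' hq'
  rw [abs_lt] at hpq' hshift ⊢
  constructor <;> linarith

/-- `v` is bounded and uniformly continuous after time `c`: the compactness needed to extract limits
of translates of `v`. -/
def BUCAfter (c : ℝ) (v : ℝ → ℝ → ℝ) : Prop :=
  (∃ A, BoundedAfter c A v) ∧ UniformContinuousOn (fun p : ℝ × ℝ => v p.1 p.2) (univ ×ˢ Ioi c)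

end UniformContinuity

theorem IsSolWithDerivs.bucAfter {f u ut ux uxx : ℝ → ℝ → ℝ} {M B C₁ C₂ : ℝ}
    (hu : IsSolWithDerivs f u ut ux uxx (Ioi 0)) (hf : NonlinearityBounds f M B C₁ C₂)
    (hrange : ∀ x, ∀ t > 0, u x t ∈ Icc 0 M) :
    BUCAfter 3 u ∧ BUCAfter 3 ux ∧ BUCAfter 3 uxx := by
  obtain ⟨L₁, L₂, L₃, hL₁, hL₂, hL₃⟩ := hu.exists_lipschitzInSpaceAfter hf hrange
  replace hL₁ : LipschitzInSpaceAfter 3 L₁ u := fun t ht => hL₁ t (by linarith)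
  replace hL₂ : LipschitzInSpaceAfter 3 L₂ ux := fun t ht => hL₂ t (by linarith)
  have hpos {t : ℝ} (ht : t > 3) : t ∈ Ioi (0 : ℝ) := three_pos.trans ht
  have hux : BoundedAfter 3 L₁ ux :=
    hL₁.boundedAfter_deriv fun t ht x => hu.hasDerivAt_space x t (hpos ht)
  have huxx : BoundedAfter 3 L₂ uxx :=
    hL₂.boundedAfter_deriv fun t ht x => hu.hasDerivAt_space₂ x t (hpos ht)
  have hut : BoundedAfter 3 (L₂ + B) ut := fun t ht x => by
    rw [hu.equation x t (hpos ht)]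
    exact (abs_add_le _ _).trans
      (add_le_add (huxx t ht x) (hf.abs_le t _ (hrange x t (hpos ht))))
  have huc : UniformContinuousOn (fun p : ℝ × ℝ => u p.1 p.2) (univ ×ˢ Ioi 3) :=
    uniformContinuousOn_of_lipschitz hL₁ (fun x t ht => hu.hasDerivAt_time x t (hpos ht)) hut
  have huxc := hL₂.uniformContinuousOn_deriv huc fun x t ht => hu.hasDerivAt_space x t (hpos ht)
  have huxxc := hL₃.uniformContinuousOn_deriv huxc
    fun x t ht => hu.hasDerivAt_space₂ x t (hpos ht)
  have hM : BoundedAfter 3 M u := fun t ht x =>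
    (abs_of_nonneg (hrange x t (hpos ht)).1).trans_le (hrange x t (hpos ht)).2
  exact ⟨⟨⟨M, hM⟩, huc⟩, ⟨⟨L₁, hux⟩, huxc⟩, ⟨⟨L₂, huxx⟩, huxxc⟩⟩

/-! ### The solution with Heaviside initial datum -/

section Comparison

variable {f u ut ux uxx w wt wx wxx : ℝ → ℝ → ℝ} {I : Set ℝ} {M B C₁ C₂ : ℝ}

lemma IsSolWithDerivs.sub_time_le_of_le (hu : IsSolWithDerivs f u ut ux uxx I)
    (hw : IsSolWithDerivs f w wt wx wxx I) (hf : NonlinearityBounds f M B C₁ C₂) {x y t : ℝ}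
    (ht : t ∈ I) (hux : u x t ∈ Icc 0 M) (hwy : w y t ∈ Icc 0 M) (hle : u x t ≤ w y t) :
    wt y t - ut x t ≤ wxx y t - uxx x t + C₁ * (w y t - u x t) := by
  have hlip := (le_abs_self _).trans (hf.abs_sub_le t _ hwy _ hux)
  rw [abs_of_nonneg (sub_nonneg.2 hle)] at hlip
  rw [hu.equation x t ht, hw.equation y t ht]
  linarith

lemma isSubsolutionAt_posPart_mul_posPart {p q : ℝ → ℝ → ℝ} {C x y t a b d a' b' d' : ℝ}
    (hp : HasJet (fun x' => p x' t) x a b) (hpt : HasDerivAt (fun t' => p x t') d t)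
    (hpC : d ≤ b + C * p x t) (hp0 : 0 < p x t)
    (hq : HasJet (fun y' => q y' t) y a' b') (hqt : HasDerivAt (fun t' => q y t') d' t)
    (hqC : d' ≤ b' + C * q y t) (hq0 : 0 < q y t) :
    IsSubsolutionAt (2 * C) (fun x y t => (p x t)⁺ * (q y t)⁺) x y t := by
  have posPart_eventuallyEq {g : ℝ → ℝ} {z : ℝ} (hg : ContinuousAt g z) (hgz : 0 < g z) :
      (fun z' => (g z')⁺) =ᶠ[𝓝 z] g := by
    filter_upwards [hg.eventually (lt_mem_nhds hgz)] with z' hz' using posPart_of_nonneg hz'.le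
  refine ⟨q y t * a, q y t * b, p x t * a', p x t * b', d * q y t + p x t * d', ⟨?_, ?_, ?_⟩, ?_⟩
  · refine (hp.const_mul (q y t)).congr ?_
    filter_upwards [posPart_eventuallyEq hp.hasDerivAt.continuousAt hp0] with x' hx'
    rw [hx', posPart_of_nonneg hq0.le, mul_comm]
  · refine (hq.const_mul (p x t)).congr ?_
    filter_upwards [posPart_eventuallyEq hq.hasDerivAt.continuousAt hq0] with y' hy'
    rw [hy', posPart_of_nonneg hp0.le]
  · exact (hpt.mul hqt).congr_of_eventuallyEq
      ((posPart_eventuallyEq hpt.continuousAt hp0).mul (posPart_eventuallyEq hqt.continuousAt hq0))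
  · simp only [posPart_of_nonneg hp0.le, posPart_of_nonneg hq0.le]
    linarith [mul_le_mul_of_nonneg_right hpC hq0.le, mul_le_mul_of_nonneg_left hqC hp0.le]

end Comparison

section Slots

variable {v : ℝ → ℝ → ℝ} {c : ℝ}

lemma continuousOn_comp_fst_time
    (hv : ContinuousOn (fun p : ℝ × ℝ => v p.1 p.2) (univ ×ˢ Ioi c)) :
    ContinuousOn (fun p : ℝ × ℝ × ℝ => v p.1 p.2.2) {p | c < p.2.2} :=
  hv.comp (f := fun p : ℝ × ℝ × ℝ => (p.1, p.2.2)) (by fun_prop) fun _ hp => ⟨trivial, hp⟩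

lemma continuousOn_comp_snd_time
    (hv : ContinuousOn (fun p : ℝ × ℝ => v p.1 p.2) (univ ×ˢ Ioi c)) :
    ContinuousOn (fun p : ℝ × ℝ × ℝ => v p.2.1 p.2.2) {p | c < p.2.2} :=
  hv.comp (f := fun p : ℝ × ℝ × ℝ => (p.2.1, p.2.2)) (by fun_prop) fun _ hp => ⟨trivial, hp⟩

end Slots

namespace IsHeavisideSol

variable {f u w : ℝ → ℝ → ℝ} {ω : ℝ → ℝ} {M B C₁ C₂ : ℝ}

lemma mem_Icc {α a : ℝ} (hu : IsHeavisideSol f α a ω u) (hM : ∀ t, ω t ≤ M) :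
    ∀ x, ∀ t > 0, u x t ∈ Icc 0 M :=
  fun x t ht => ⟨(hu.2.1 x t ht).1, (hu.2.1 x t ht).2.trans (hM t)⟩

lemma exists_forall_le_near_initial_time (hu : IsHeavisideSol f (ω 0) 0 ω u)
    (hω : ContinuousAt ω 0) {ρ η : ℝ} (hρ : 0 < ρ) (R : ℝ) (hη : 0 < η) :
    ∃ δ > 0, ∀ t ∈ Ioo 0 δ, (∀ x ∈ Icc (-R) (-ρ), ω t - u x t ≤ η) ∧
      ∀ y ∈ Icc ρ R, u y t ≤ η := by
  obtain ⟨δ₁, hδ₁, hleft⟩ := hu.2.2 (Icc (-R) (-ρ)) isCompact_Icc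
    (fun h => by linarith [h.2]) (η / 2) (half_pos hη)
  obtain ⟨δ₂, hδ₂, hright⟩ := hu.2.2 (Icc ρ R) isCompact_Icc (fun h => by linarith [h.1]) η hη
  obtain ⟨δ₃, hδ₃, hωδ⟩ := Metric.continuousAt_iff.1 hω (η / 2) (half_pos hη)
  refine ⟨min δ₁ (min δ₂ δ₃), by positivity, fun t ht => ?_⟩
  obtain ⟨ht0, htδ⟩ := ht
  simp only [lt_min_iff] at htδ
  refine ⟨fun x hx => ?_, fun y hy => ?_⟩
  · have hωt : |ω t - ω 0| < η / 2 := hωδ (by simpa [abs_of_pos ht0] using htδ.2.2)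
    have hux := hleft t ⟨ht0, htδ.1⟩ x hx
    rw [if_pos (by linarith [hx.2]), mul_one] at hux
    linarith [(abs_lt.1 hωt).2, (abs_lt.1 hux).1]
  · have huy := hright t ⟨ht0, htδ.2.1⟩ y hy
    rw [if_neg (by linarith [hy.1]), mul_zero, sub_zero] at huy
    exact (le_abs_self _).trans huy.le

theorem le_of_le (hu : IsHeavisideSol f (ω 0) 0 ω u) (hω : ContinuousAt ω 0)
    (hf : NonlinearityBounds f M B C₁ C₂) (hM : ∀ t, ω t ≤ M) {x y t : ℝ} (hxy : x ≤ y)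
    (ht : 0 < t) : u y t ≤ u x t := by
  have hr := hu.mem_Icc hM
  obtain ⟨ut, ux, uxx, hd⟩ := hu.1.exists_derivs
  have huc := hd.continuousOn isOpen_Ioi
  refine sub_nonpos.1 (nonpos_of_bounded_subsolution_on_half_plane
    (m := fun x y t => u y t - u x t) (M := M) hf.C₁_nonneg
    ((continuousOn_comp_snd_time huc).sub (continuousOn_comp_fst_time huc))
    (fun x y t _ ht => by linarith [(hr x t ht).1, (hr y t ht).2])
    (fun x t _ => (sub_self (u x t)).le) ?_ ?_ hxy ht)
  · intro ρ hρ R η hη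
    obtain ⟨δ, hδ, hinit⟩ := hu.exists_forall_le_near_initial_time hω hρ R hη
    refine ⟨δ, hδ, fun t ht x y _ hx hy hfar => ?_⟩
    rcases hfar with hx' | hy'
    · linarith [(hinit t ht).1 x ⟨hx, hx'⟩, (hu.2.1 y t ht.1).2]
    · linarith [(hinit t ht).2 y ⟨hy', hy⟩, (hu.2.1 x t ht.1).1]
  · intro x y t _ ht hlt
    refine ⟨_, _, _, _, _, (HasParabolicJet.of_snd (hd.hasJet y ht) (hd.hasDerivAt_time y t ht)
      x).sub (.of_fst (hd.hasJet x ht) (hd.hasDerivAt_time x t ht) y), ?_⟩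
    linarith [hd.sub_time_le_of_le hd hf ht (hr x t ht) (hr y t ht) (sub_pos.1 hlt).le]

lemma exists_crossing_product_le_near_initial_time (hu : IsHeavisideSol f (ω 0) 0 ω u)
    (hω : ContinuousAt ω 0) (hM : ∀ t, ω t ≤ M)
    (hw : ∀ x, ∀ t > 0, 0 ≤ w x t ∧ w x t ≤ ω t) (hM0 : 0 ≤ M) {ρ η : ℝ} (hρ : 0 < ρ) (R : ℝ)
    (hη : 0 < η) :
    ∃ δ > 0, ∀ t ∈ Ioo 0 δ, ∀ x y, -R ≤ x → y ≤ R → (x ≤ -ρ ∨ ρ ≤ y) →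
      (w x t - u x t)⁺ * (u y t - w y t)⁺ ≤ η := by
  obtain ⟨δ, hδ, hinit⟩ := hu.exists_forall_le_near_initial_time hω hρ R
    (show 0 < η / (M + 1) by positivity)
  have hηM : η / (M + 1) * M ≤ η := by
    rw [div_mul_eq_mul_div, div_le_iff₀ (by positivity)]
    linarith
  have hη0 : 0 ≤ η / (M + 1) := by positivity
  refine ⟨δ, hδ, fun t ht x y hx hy hfar => ?_⟩
  have hux := hu.2.1 x t ht.1
  have huy := hu.2.1 y t ht.1
  have hwx := hw x t ht.1
  have hwy := hw y t ht.1
  rcases hfar with hx' | hy'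
  · refine (mul_le_mul (sup_le ?_ hη0) (sup_le ?_ hM0) (posPart_nonneg _) hη0).trans hηM
    · linarith [(hinit t ht).1 x ⟨hx, hx'⟩]
    · linarith [hM t]
  · refine (mul_le_mul (sup_le ?_ hM0) (sup_le ?_ hη0) (posPart_nonneg _) hM0).trans
      ((mul_comm _ _).trans_le hηM)
    · linarith [hM t]
    · linarith [(hinit t ht).2 y ⟨hy', hy⟩]

/-- The product of the two differences is a subsolution on the half-plane `x < y` that vanishes on
its parabolic boundary. -/
theorem le_of_lt_of_le (hu : IsHeavisideSol f (ω 0) 0 ω u) (hω : ContinuousAt ω 0)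
    (hf : NonlinearityBounds f M B C₁ C₂) (hM : ∀ t, ω t ≤ M) (hw : IsSolOn f w (Ioi 0))
    (hwω : ∀ x, ∀ t > 0, 0 ≤ w x t ∧ w x t ≤ ω t) {x y t : ℝ} (hxy : x ≤ y) (ht : 0 < t)
    (hlt : u x t < w x t) : u y t ≤ w y t := by
  have hM0 : 0 ≤ M := hf.M_nonneg
  have hru := hu.mem_Icc hM
  have hrw (x t : ℝ) (ht : 0 < t) : w x t ∈ Icc 0 M :=
    ⟨(hwω x t ht).1, (hwω x t ht).2.trans (hM t)⟩
  obtain ⟨ut, ux, uxx, hdu⟩ := hu.1.exists_derivs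
  obtain ⟨wt, wx, wxx, hdw⟩ := hw.exists_derivs
  have huc := hdu.continuousOn isOpen_Ioi
  have hwc := hdw.continuousOn isOpen_Ioi
  suffices hprod : (w x t - u x t)⁺ * (u y t - w y t)⁺ ≤ 0 by
    by_contra! hlt'
    exact hprod.not_gt (mul_pos (posPart_pos (sub_pos.2 hlt)) (posPart_pos (sub_pos.2 hlt')))
  refine nonpos_of_bounded_subsolution_on_half_plane
    (m := fun x y t => (w x t - u x t)⁺ * (u y t - w y t)⁺) (M := M * M)
    (mul_nonneg zero_le_two hf.C₁_nonneg) ?_ ?_ ?_ ?_ ?_ hxy ht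
  · exact (continuous_posPart.comp_continuousOn
      ((continuousOn_comp_fst_time hwc).sub (continuousOn_comp_fst_time huc))).mul
      (continuous_posPart.comp_continuousOn
        ((continuousOn_comp_snd_time huc).sub (continuousOn_comp_snd_time hwc)))
  · intro x y t _ ht
    exact mul_le_mul (sup_le (by linarith [(hru x t ht).1, (hrw x t ht).2]) hM0)
      (sup_le (by linarith [(hru y t ht).2, (hrw y t ht).1]) hM0) (posPart_nonneg _) hM0
  · intro x t _
    rcases le_total (w x t) (u x t) with hle | hle
    · rw [posPart_of_nonpos (sub_nonpos.2 hle), zero_mul]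
    · rw [posPart_of_nonpos (sub_nonpos.2 hle), mul_zero]
  · intro ρ hρ R η hη
    obtain ⟨δ, hδ, hinit⟩ :=
      hu.exists_crossing_product_le_near_initial_time hω hM hwω hM0 hρ R hη
    exact ⟨δ, hδ, fun t ht x y _ => hinit t ht x y⟩
  · intro x y t _ ht hpos
    have hx := posPart_pos_iff.1 (pos_of_mul_pos_left hpos (posPart_nonneg _))
    have hy := posPart_pos_iff.1 (pos_of_mul_pos_right hpos (posPart_nonneg _))
    exact isSubsolutionAt_posPart_mul_posPart ((hdw.hasJet x ht).sub (hdu.hasJet x ht))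
      ((hdw.hasDerivAt_time x t ht).sub (hdu.hasDerivAt_time x t ht))
      (hdu.sub_time_le_of_le hdw hf ht (hru x t ht) (hrw x t ht) (sub_pos.1 hx).le) hx
      ((hdu.hasJet y ht).sub (hdw.hasJet y ht))
      ((hdu.hasDerivAt_time y t ht).sub (hdw.hasDerivAt_time y t ht))
      (hdw.sub_time_le_of_le hdu hf ht (hrw y t ht) (hru y t ht) (sub_pos.1 hy).le) hy

end IsHeavisideSol

/-! ### Limits of translates -/

/-- `G` is the pointwise limit along `l` of the translates of `g` by the vectors `(ℓ j, j T)`. -/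
def IsTranslateLimit (ℓ : ℕ → ℝ) (T : ℝ) (l : Filter ℕ) (g G : ℝ → ℝ → ℝ) : Prop :=
  ∀ x t, Tendsto (fun j : ℕ => g (x + ℓ j) (t + j * T)) l (𝓝 (G x t))

lemma eventually_lt_add_natCast_mul {T : ℝ} (hT : 0 < T) {l : Filter ℕ} (hl : l ≤ atTop) (c t : ℝ) :
    ∀ᶠ j : ℕ in l, c < t + j * T :=
  ((tendsto_atTop_add_const_left _ _
    (tendsto_natCast_atTop_atTop.atTop_mul_const hT)).mono_left hl).eventually_gt_atTop c

lemma BUCAfter.exists_isTranslateLimit {g : ℝ → ℝ → ℝ} {c T : ℝ} (hg : BUCAfter c g) (hT : 0 < T)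
    (ℓ : ℕ → ℝ) (l : Ultrafilter ℕ) (hl : (l : Filter ℕ) ≤ atTop) :
    ∃ G, IsTranslateLimit ℓ T l g G := by
  obtain ⟨⟨A, hA⟩, -⟩ := hg
  have hlim (x t : ℝ) : ∃ a, Tendsto (fun j : ℕ => g (x + ℓ j) (t + j * T)) l (𝓝 a) := by
    obtain ⟨a, -, ha⟩ := (isCompact_Icc (a := -A) (b := A)).ultrafilter_le_nhds
      (l.map fun j : ℕ => g (x + ℓ j) (t + j * T)) (by
        rw [Ultrafilter.coe_map, le_principal_iff, mem_map]
        filter_upwards [eventually_lt_add_natCast_mul hT hl c t] with j hj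
        exact abs_le.1 (hA _ hj _))
    exact ⟨a, ha⟩
  choose G hG using hlim
  exact ⟨G, hG⟩

namespace IsTranslateLimit

variable {ℓ : ℕ → ℝ} {T c : ℝ} {l : Filter ℕ} [NeBot l] {g G gx Gx gt Gt : ℝ → ℝ → ℝ}

lemma dist_le (h : IsTranslateLimit ℓ T l g G) (hT : 0 < T) (hl : l ≤ atTop) {δ ε : ℝ}
    (hg : ∀ p ∈ (univ : Set ℝ) ×ˢ Ioi c, ∀ q ∈ (univ : Set ℝ) ×ˢ Ioi c, dist p q < δ →
      dist (g p.1 p.2) (g q.1 q.2) < ε) {p q : ℝ × ℝ} (hpq : dist p q < δ) :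
    dist (G p.1 p.2) (G q.1 q.2) ≤ ε := by
  refine le_of_tendsto ((h p.1 p.2).dist (h q.1 q.2)) ?_
  filter_upwards [eventually_lt_add_natCast_mul hT hl c p.2,
    eventually_lt_add_natCast_mul hT hl c q.2] with j hp hq
  exact (hg (p.1 + ℓ j, p.2 + j * T) ⟨trivial, hp⟩ (q.1 + ℓ j, q.2 + j * T) ⟨trivial, hq⟩
    (by simpa [Prod.dist_eq] using hpq)).le

lemma continuous (h : IsTranslateLimit ℓ T l g G) (hT : 0 < T) (hl : l ≤ atTop)
    (hg : BUCAfter c g) : Continuous fun p : ℝ × ℝ => G p.1 p.2 := by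
  refine (Metric.uniformContinuous_iff.2 fun ε hε => ?_).continuous
  obtain ⟨δ, hδ, hclose⟩ := Metric.uniformContinuousOn_iff.1 hg.2 (ε / 2) (half_pos hε)
  exact ⟨δ, hδ, fun p q hpq => (h.dist_le hT hl hclose hpq).trans_lt (half_lt_self hε)⟩

lemma tendstoLocallyUniformly (h : IsTranslateLimit ℓ T l g G) (hT : 0 < T) (hl : l ≤ atTop)
    (hg : BUCAfter c g) :
    TendstoLocallyUniformly (fun (j : ℕ) (p : ℝ × ℝ) => g (p.1 + ℓ j) (p.2 + j * T))
      (fun p => G p.1 p.2) l := by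
  refine Metric.tendstoLocallyUniformly_iff.2 fun ε hε p => ?_
  obtain ⟨δ, hδ, hclose⟩ := Metric.uniformContinuousOn_iff.1 hg.2 (ε / 3) (by positivity)
  refine ⟨Metric.ball p δ, Metric.ball_mem_nhds p hδ, ?_⟩
  filter_upwards [Metric.tendsto_nhds.1 (h p.1 p.2) (ε / 3) (by positivity),
    eventually_lt_add_natCast_mul hT hl (c + δ) p.2] with j hj hpc q hqp
  have hqc : c < q.2 + j * T := by
    have hq₂ : |q.2 - p.2| < δ := (le_max_right _ _).trans_lt hqp
    linarith [(abs_lt.1 hq₂).1]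
  have hgqp := hclose (q.1 + ℓ j, q.2 + j * T) ⟨trivial, hqc⟩ (p.1 + ℓ j, p.2 + j * T)
    ⟨trivial, (lt_add_of_pos_right c hδ).trans hpc⟩ (by simpa [Prod.dist_eq] using hqp)
  rw [dist_comm] at hgqp hj
  linarith [dist_triangle4 (G q.1 q.2) (G p.1 p.2) (g (p.1 + ℓ j) (p.2 + j * T))
    (g (q.1 + ℓ j) (q.2 + j * T)), h.dist_le hT hl hclose hqp]

lemma hasDerivAt_space (h : IsTranslateLimit ℓ T l g G) (hx : IsTranslateLimit ℓ T l gx Gx)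
    (hT : 0 < T) (hl : l ≤ atTop) (hgx : BUCAfter c gx)
    (hderiv : ∀ x, ∀ t ∈ Ioi c, HasDerivAt (fun y => g y t) (gx x t) x) (x t : ℝ) :
    HasDerivAt (fun y => G y t) (Gx x t) x := by
  have hunif : TendstoLocallyUniformly (fun (j : ℕ) y => gx (y + ℓ j) (t + j * T))
      (fun y => Gx y t) l :=
    (hx.tendstoLocallyUniformly hT hl hgx).comp (fun y : ℝ => (y, t)) (by fun_prop)
  refine hasDerivAt_of_tendstoLocallyUniformlyOn isOpen_univ hunif.tendstoLocallyUniformlyOn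
    ?_ (fun y _ => h y t) (mem_univ x)
  filter_upwards [eventually_lt_add_natCast_mul hT hl c t] with j hj y _
  exact (hderiv (y + ℓ j) _ hj).comp_add_const y (ℓ j)

lemma hasDerivAt_time (h : IsTranslateLimit ℓ T l g G) (hT : 0 < T) (hl : l ≤ atTop)
    (hunif : TendstoLocallyUniformly (fun (j : ℕ) (p : ℝ × ℝ) => gt (p.1 + ℓ j) (p.2 + j * T))
      (fun p => Gt p.1 p.2) l)
    (hderiv : ∀ x, ∀ t ∈ Ioi c, HasDerivAt (fun s => g x s) (gt x t) t) (x t : ℝ) :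
    HasDerivAt (fun s => G x s) (Gt x t) t := by
  have hunif' : TendstoLocallyUniformly (fun (j : ℕ) s => gt (x + ℓ j) (s + j * T))
      (fun s => Gt x s) l :=
    hunif.comp (fun s : ℝ => (x, s)) (by fun_prop)
  refine hasDerivAt_of_tendstoLocallyUniformlyOn (s := Ioi (t - 1)) isOpen_Ioi
    hunif'.tendstoLocallyUniformlyOn ?_ (fun s _ => h x s) (sub_one_lt t)
  filter_upwards [eventually_lt_add_natCast_mul hT hl c (t - 1)] with j hj s hs
  exact (hderiv (x + ℓ j) _ (hj.trans (add_lt_add_left hs _))).comp_add_const s _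

end IsTranslateLimit

/-- `V`, `Vx`, `Vxx` are the limits along `l` of the translates of `u`, `ux`, `uxx`. -/
structure IsJetTranslateLimit (ℓ : ℕ → ℝ) (T : ℝ) (l : Filter ℕ)
    (u ux uxx V Vx Vxx : ℝ → ℝ → ℝ) : Prop where
  value : IsTranslateLimit ℓ T l u V
  space : IsTranslateLimit ℓ T l ux Vx
  space₂ : IsTranslateLimit ℓ T l uxx Vxx

/-- The data of the limit procedure: a solution `u` for positive times, with derivatives `ut`,
`ux`, `uxx` and values in `[0, M]`, of an equation whose nonlinearity is `T`-periodic. -/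
structure IsBoundedPeriodicSol (f u ut ux uxx : ℝ → ℝ → ℝ) (T M B C₁ C₂ : ℝ) : Prop where
  period_pos : 0 < T
  continuous : Continuous (Function.uncurry f)
  periodic : ∀ t p, f (t + T) p = f t p
  bounds : NonlinearityBounds f M B C₁ C₂
  sol : IsSolWithDerivs f u ut ux uxx (Ioi 0)
  mem_Icc : ∀ x, ∀ t > 0, u x t ∈ Icc 0 M

namespace IsBoundedPeriodicSol

variable {f u ut ux uxx V Vx Vxx : ℝ → ℝ → ℝ} {M B C₁ C₂ T : ℝ} {ℓ : ℕ → ℝ} {l : Filter ℕ}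

lemma exists_isJetTranslateLimit (hu : IsBoundedPeriodicSol f u ut ux uxx T M B C₁ C₂) (ℓ : ℕ → ℝ)
    (l : Ultrafilter ℕ) (hl : (l : Filter ℕ) ≤ atTop) :
    ∃ V Vx Vxx, IsJetTranslateLimit ℓ T l u ux uxx V Vx Vxx := by
  obtain ⟨hbu, hbux, hbuxx⟩ := hu.sol.bucAfter hu.bounds hu.mem_Icc
  obtain ⟨V, hV⟩ := hbu.exists_isTranslateLimit hu.period_pos ℓ l hl
  obtain ⟨Vx, hVx⟩ := hbux.exists_isTranslateLimit hu.period_pos ℓ l hl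
  obtain ⟨Vxx, hVxx⟩ := hbuxx.exists_isTranslateLimit hu.period_pos ℓ l hl
  exact ⟨V, Vx, Vxx, hV, hVx, hVxx⟩

variable [NeBot l]

lemma tendstoLocallyUniformly_time (hu : IsBoundedPeriodicSol f u ut ux uxx T M B C₁ C₂)
    (hl : l ≤ atTop) (hV : IsJetTranslateLimit ℓ T l u ux uxx V Vx Vxx) :
    TendstoLocallyUniformly (fun (j : ℕ) (p : ℝ × ℝ) => ut (p.1 + ℓ j) (p.2 + j * T))
      (fun p => Vxx p.1 p.2 + f p.2 (V p.1 p.2)) l := by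
  obtain ⟨hbu, -, hbuxx⟩ := hu.sol.bucAfter hu.bounds hu.mem_Icc
  have hVM (x t : ℝ) : V x t ∈ Icc 0 M := by
    refine isClosed_Icc.mem_of_tendsto (hV.value x t) ?_
    filter_upwards [eventually_lt_add_natCast_mul hu.period_pos hl 0 t] with j hj
      using hu.mem_Icc _ _ hj
  have hC₁ := hu.bounds.C₁_nonneg
  refine Metric.tendstoLocallyUniformly_iff.2 fun ε hε p => ?_
  have hη : 0 < ε / (C₁ + 1) := by positivity
  obtain ⟨S, hS, hSu⟩ := Metric.tendstoLocallyUniformly_iff.1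
    (hV.value.tendstoLocallyUniformly hu.period_pos hl hbu) _ hη p
  obtain ⟨S', hS', hSuxx⟩ := Metric.tendstoLocallyUniformly_iff.1
    (hV.space₂.tendstoLocallyUniformly hu.period_pos hl hbuxx) _ hη p
  refine ⟨S ∩ S' ∩ Prod.snd ⁻¹' Ioi (p.2 - 1), inter_mem (inter_mem hS hS')
    (continuous_snd.continuousAt (Ioi_mem_nhds (sub_one_lt _))), ?_⟩
  filter_upwards [hSu, hSuxx, eventually_lt_add_natCast_mul hu.period_pos hl 0 (p.2 - 1)]
    with j hju hjuxx hj q hq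
  have ht : 0 < q.2 + j * T := hj.trans (add_lt_add_left hq.2 _)
  have hperiod (v : ℝ) : f (q.2 + j * T) v = f q.2 v :=
    Function.Periodic.nat_mul (f := fun t => f t v) (fun t => hu.periodic t v) j q.2
  have hlip := hu.bounds.abs_sub_le q.2 _ (hVM q.1 q.2) _ (hu.mem_Icc (q.1 + ℓ j) _ ht)
  rw [hu.sol.equation _ _ ht, hperiod]
  calc dist (Vxx q.1 q.2 + f q.2 (V q.1 q.2)) _
      ≤ dist (Vxx q.1 q.2) (uxx (q.1 + ℓ j) (q.2 + j * T)) +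
          C₁ * dist (V q.1 q.2) (u (q.1 + ℓ j) (q.2 + j * T)) :=
        (dist_add_add_le _ _ _ _).trans (add_le_add_right hlip _)
    _ < ε / (C₁ + 1) + C₁ * (ε / (C₁ + 1)) := add_lt_add_of_lt_of_le (hjuxx q hq.1.2)
        (mul_le_mul_of_nonneg_left (hju q hq.1.1).le hC₁)
    _ = ε := by field_simp; ring

theorem isSolWithDerivs_limit (hu : IsBoundedPeriodicSol f u ut ux uxx T M B C₁ C₂)
    (hl : l ≤ atTop) (hV : IsJetTranslateLimit ℓ T l u ux uxx V Vx Vxx) :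
    IsSolWithDerivs f V (fun x t => Vxx x t + f t (V x t)) Vx Vxx univ := by
  obtain ⟨hbu, hbux, hbuxx⟩ := hu.sol.bucAfter hu.bounds hu.mem_Icc
  have hT := hu.period_pos
  have hpos {t : ℝ} (ht : 3 < t) : t ∈ Ioi (0 : ℝ) := three_pos.trans ht
  have hVc := hV.value.continuous hT hl hbu
  have hVxxc := hV.space₂.continuous hT hl hbuxx
  exact {
    hasDerivAt_time := fun x t _ => hV.value.hasDerivAt_time
      (Gt := fun x t => Vxx x t + f t (V x t)) hT hl (hu.tendstoLocallyUniformly_time hl hV)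
      hu.sol.hasDerivAt_time x t
    hasDerivAt_space := fun x t _ => hV.value.hasDerivAt_space hV.space hT hl hbux
      (fun x t ht => hu.sol.hasDerivAt_space x t (hpos ht)) x t
    hasDerivAt_space₂ := fun x t _ => hV.space.hasDerivAt_space hV.space₂ hT hl hbuxx
      (fun x t ht => hu.sol.hasDerivAt_space₂ x t (hpos ht)) x t
    continuousOn_time :=
      (hVxxc.add (hu.continuous.comp (continuous_snd.prodMk hVc))).continuousOn
    continuousOn_space := (hV.space.continuous hT hl hbux).continuousOn
    continuousOn_space₂ := hVxxc.continuousOn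
    equation := fun _ _ _ => rfl }

theorem isULimitDeriv (hu : IsBoundedPeriodicSol f u ut ux uxx T M B C₁ C₂)
    (hV : IsJetTranslateLimit ℓ T atTop u ux uxx V Vx Vxx) : IsULimitDeriv u ℓ T V := by
  intro K hK ε hε
  obtain ⟨hbu, hbux, hbuxx⟩ := hu.sol.bucAfter hu.bounds hu.mem_Icc
  have hT := hu.period_pos
  have hsolV := hu.isSolWithDerivs_limit le_rfl hV
  have hcompact {F : ℕ → ℝ × ℝ → ℝ} {G : ℝ × ℝ → ℝ} (h : TendstoLocallyUniformly F G atTop) :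
      ∀ᶠ j in atTop, ∀ p ∈ K, |F j p - G p| < ε := by
    filter_upwards [Metric.tendstoUniformlyOn_iff.1
      (tendstoLocallyUniformly_iff_forall_isCompact.1 h K hK) ε hε] with j hj p hp
    rw [abs_sub_comm]
    exact hj p hp
  obtain ⟨c, hc⟩ := hK.bddBelow_image (f := Prod.snd) continuous_snd.continuousOn
  refine eventually_atTop.1 ?_
  filter_upwards [hcompact (hV.value.tendstoLocallyUniformly hT le_rfl hbu),
    hcompact (hV.space.tendstoLocallyUniformly hT le_rfl hbux),
    hcompact (hV.space₂.tendstoLocallyUniformly hT le_rfl hbuxx),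
    hcompact (hu.tendstoLocallyUniformly_time le_rfl hV),
    eventually_lt_add_natCast_mul hT le_rfl 0 c] with j hju hjux hjuxx hjut hj p hp
  have ht : p.2 + j * T ∈ Ioi (0 : ℝ) :=
    hj.trans_le (add_le_add_left (hc (mem_image_of_mem _ hp)) _)
  rw [(hu.sol.hasDerivAt_space _ _ ht).deriv, (hu.sol.hasJet _ ht).deriv_deriv,
    (hu.sol.hasDerivAt_time _ _ ht).deriv, (hsolV.hasDerivAt_space _ _ trivial).deriv,
    (hsolV.hasJet _ trivial).deriv_deriv, (hsolV.hasDerivAt_time _ _ trivial).deriv]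
  exact ⟨hju p hp, hjux p hp, hjuxx p hp, hjut p hp⟩

end IsBoundedPeriodicSol

/-! ### Entire solutions -/

namespace IsSolWithDerivs

variable {f u ut ux uxx w wt wx wxx : ℝ → ℝ → ℝ} {I : Set ℝ} {M B C₁ C₂ : ℝ}

lemma mono {J : Set ℝ} (hu : IsSolWithDerivs f u ut ux uxx I) (hJI : J ⊆ I) :
    IsSolWithDerivs f u ut ux uxx J where
  hasDerivAt_time x t ht := hu.hasDerivAt_time x t (hJI ht)
  hasDerivAt_space x t ht := hu.hasDerivAt_space x t (hJI ht)
  hasDerivAt_space₂ x t ht := hu.hasDerivAt_space₂ x t (hJI ht)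
  continuousOn_time := hu.continuousOn_time.mono (prod_mono_right hJI)
  continuousOn_space := hu.continuousOn_space.mono (prod_mono_right hJI)
  continuousOn_space₂ := hu.continuousOn_space₂.mono (prod_mono_right hJI)
  equation x t ht := hu.equation x t (hJI ht)

lemma continuous_of_univ (hu : IsSolWithDerivs f u ut ux uxx univ) :
    Continuous fun p : ℝ × ℝ => u p.1 p.2 := by
  simpa only [univ_prod_univ, continuousOn_univ] using hu.continuousOn isOpen_univ

lemma continuous_space_of_univ (hu : IsSolWithDerivs f u ut ux uxx univ) :
    Continuous fun p : ℝ × ℝ => ux p.1 p.2 := by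
  simpa only [univ_prod_univ, continuousOn_univ] using hu.continuousOn_space

lemma continuous_space₂_of_univ (hu : IsSolWithDerivs f u ut ux uxx univ) :
    Continuous fun p : ℝ × ℝ => uxx p.1 p.2 := by
  simpa only [univ_prod_univ, continuousOn_univ] using hu.continuousOn_space₂

lemma comp_affine {ε a b : ℝ} (hu : IsSolWithDerivs f u ut ux uxx univ) (hε : ε * ε = 1)
    (hf : ∀ t p, f (t + b) p = f t p) :
    IsSolWithDerivs f (fun x t => u (x * ε + a) (t + b)) (fun x t => ut (x * ε + a) (t + b))
      (fun x t => ux (x * ε + a) (t + b) * ε) (fun x t => uxx (x * ε + a) (t + b)) univ := by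
  have hspace {g : ℝ → ℝ} {d x : ℝ} (hg : HasDerivAt g d (x * ε + a)) :
      HasDerivAt (fun y => g (y * ε + a)) (d * ε) x :=
    hg.comp x ((hasDerivAt_mul_const ε).add_const a)
  have hcont {g : ℝ → ℝ → ℝ} (hg : ContinuousOn (fun p : ℝ × ℝ => g p.1 p.2) (univ ×ˢ univ)) :
      ContinuousOn (fun p : ℝ × ℝ => g (p.1 * ε + a) (p.2 + b)) (univ ×ˢ univ) :=
    hg.comp (f := fun p : ℝ × ℝ => (p.1 * ε + a, p.2 + b)) (by fun_prop)
      fun _ _ => ⟨trivial, trivial⟩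
  exact {
    hasDerivAt_time := fun x t _ => (hu.hasDerivAt_time _ _ trivial).comp_add_const t b
    hasDerivAt_space := fun x t _ => hspace (hu.hasDerivAt_space _ _ trivial)
    hasDerivAt_space₂ := fun x t _ =>
      ((hspace (hu.hasDerivAt_space₂ _ _ trivial)).mul_const ε).congr_deriv
        (by rw [mul_assoc, hε, mul_one])
    continuousOn_time := hcont hu.continuousOn_time
    continuousOn_space := (hcont hu.continuousOn_space).mul continuousOn_const
    continuousOn_space₂ := hcont hu.continuousOn_space₂
    equation := fun x t _ => by rw [hu.equation _ _ trivial, hf] }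

lemma sub_space₂_sub_time_le_of_le (hu : IsSolWithDerivs f u ut ux uxx I)
    (hw : IsSolWithDerivs f w wt wx wxx I) (hf : NonlinearityBounds f M B C₁ C₂) {x y t : ℝ}
    (ht : t ∈ I) (hux : u x t ∈ Icc 0 M) (hwy : w y t ∈ Icc 0 M) (hle : u x t ≤ w y t) :
    wxx y t - uxx x t - (wt y t - ut x t) ≤ C₁ * (w y t - u x t) := by
  have hlip := (neg_le_abs _).trans (hf.abs_sub_le t _ hwy _ hux)
  rw [abs_of_nonneg (sub_nonneg.2 hle)] at hlip
  rw [hu.equation x t ht, hw.equation y t ht]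
  linarith

end IsSolWithDerivs

/-- An entire solution `w` of (E) with `0 ≤ w(x,t) ≤ ω(t)`. -/
structure IsEntireSol (f : ℝ → ℝ → ℝ) (ω : ℝ → ℝ) (w : ℝ → ℝ → ℝ) : Prop where
  isSolOn : IsSolOn f w univ
  mem_Icc : ∀ x t, w x t ∈ Icc 0 (ω t)

lemma frequently_lt_mul_of_hasDerivAt_zero {g : ℝ → ℝ} (hg : HasDerivAt g 0 0) (hg0 : g 0 = 0)
    {c : ℝ} (hc : 0 < c) : ∃ᶠ r in 𝓝[>] (0 : ℝ), g r < c * r := by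
  have hslope := hg.tendsto_slope_zero_right
  simp only [zero_add, hg0, sub_zero, smul_eq_mul] at hslope
  refine Eventually.frequently ?_
  filter_upwards [hslope.eventually (gt_mem_nhds hc), self_mem_nhdsWithin] with r hr hr0
  rwa [inv_mul_lt_iff₀ hr0, mul_comm] at hr

lemma frequently_sub_lt_mul_of_hasDerivAt_zero {g : ℝ → ℝ} {x : ℝ} (hg : HasDerivAt g 0 x)
    {c : ℝ} (hc : 0 < c) : ∃ᶠ r in 𝓝[>] (0 : ℝ), g (x - r) - g (x + r) < c * r := by
  refine frequently_lt_mul_of_hasDerivAt_zero (g := fun r => g (x - r) - g (x + r)) ?_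
    (by simp) hc
  have hleft : HasDerivAt (fun r => g (x - r)) (-0) 0 :=
    HasDerivAt.comp_const_sub x 0 (by rwa [sub_zero])
  have hright : HasDerivAt (fun r => g (x + r)) 0 0 :=
    HasDerivAt.comp_const_add x 0 (by rwa [add_zero])
  exact (hleft.sub hright).congr_deriv (by ring)

namespace IsEntireSol

variable {f v w V : ℝ → ℝ → ℝ} {ω : ℝ → ℝ} {M B C₁ C₂ : ℝ}

lemma mem_Icc_of_le (hw : IsEntireSol f ω w) (hM : ∀ t, ω t ≤ M) (x t : ℝ) : w x t ∈ Icc 0 M :=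
  ⟨(hw.mem_Icc x t).1, (hw.mem_Icc x t).2.trans (hM t)⟩

lemma comp_affine {ε a b : ℝ} (hw : IsEntireSol f ω w) (hε : ε * ε = 1)
    (hf : ∀ t p, f (t + b) p = f t p) (hω : ∀ t, ω (t + b) = ω t) :
    IsEntireSol f ω fun x t => w (x * ε + a) (t + b) := by
  obtain ⟨wt, wx, wxx, hsol⟩ := hw.isSolOn.exists_derivs
  exact ⟨(hsol.comp_affine hε hf).isSolOn, fun x t => hω t ▸ hw.mem_Icc _ _⟩

lemma translate {a b : ℝ} (hw : IsEntireSol f ω w) (hf : ∀ t p, f (t + b) p = f t p)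
    (hω : ∀ t, ω (t + b) = ω t) : IsEntireSol f ω fun x t => w (x + a) (t + b) := by
  simpa only [mul_one] using hw.comp_affine (one_mul 1) hf hω

lemma translate_space (hw : IsEntireSol f ω w) (a : ℝ) :
    IsEntireSol f ω fun x t => w (x + a) t := by
  simpa only [add_zero] using
    hw.translate (a := a) (b := 0) (fun t p => by rw [add_zero]) fun t => by rw [add_zero]

lemma reflect (hw : IsEntireSol f ω w) : IsEntireSol f ω fun x t => w (-x) t := by
  simpa only [add_zero, mul_neg_one] using hw.comp_affine (ε := -1) (a := 0) (b := 0)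
    (by norm_num) (fun t p => by rw [add_zero]) fun t => by rw [add_zero]

lemma le_of_le (hv : IsEntireSol f ω v) (hw : IsEntireSol f ω w)
    (hf : NonlinearityBounds f M B C₁ C₂) (hM : ∀ t, ω t ≤ M) {s : ℝ} (hs : ∀ x, v x s ≤ w x s)
    (x : ℝ) {t : ℝ} (ht : s ≤ t) : v x t ≤ w x t := by
  obtain ⟨vt, vx, vxx, hvsol⟩ := hv.isSolOn.exists_derivs
  obtain ⟨wt, wx, wxx, hwsol⟩ := hw.isSolOn.exists_derivs
  refine sub_nonpos.1 (nonpos_of_bounded_subsolution_on_line (z := fun x t => v x t - w x t)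
    (M := M) hf.C₁_nonneg (hvsol.continuous_of_univ.sub hwsol.continuous_of_univ).continuousOn
    (fun x t _ => (sub_le_self _ (hw.mem_Icc x t).1).trans (hv.mem_Icc_of_le hM x t).2)
    (fun x => sub_nonpos.2 (hs x)) (fun x t _ hpos => ?_) x ht)
  refine ⟨_, _, _, (hvsol.hasJet x trivial).sub (hwsol.hasJet x trivial),
    (hvsol.hasDerivAt_time x t trivial).sub (hwsol.hasDerivAt_time x t trivial), ?_⟩
  exact hwsol.sub_time_le_of_le hvsol hf trivial (hw.mem_Icc_of_le hM x t)
    (hv.mem_Icc_of_le hM x t) (sub_pos.1 hpos).le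

lemma eq_of_eq (hv : IsEntireSol f ω v) (hw : IsEntireSol f ω w)
    (hf : NonlinearityBounds f M B C₁ C₂) (hM : ∀ t, ω t ≤ M) {s : ℝ} (hs : ∀ x, v x s = w x s)
    (x : ℝ) {t : ℝ} (ht : s ≤ t) : v x t = w x t :=
  le_antisymm (hv.le_of_le hw hf hM (fun x => (hs x).le) x ht)
    (hw.le_of_le hv hf hM (fun x => (hs x).ge) x ht)

lemma eq_of_forall_lt_eq (hv : IsEntireSol f ω v) (hw : IsEntireSol f ω w)
    (hf : NonlinearityBounds f M B C₁ C₂) (hM : ∀ t, ω t ≤ M) {t₁ : ℝ}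
    (heq : ∀ t < t₁, ∀ x, v x t = w x t) (x t : ℝ) : v x t = w x t :=
  hv.eq_of_eq hw hf hM (heq (min t (t₁ - 1)) (by linarith [min_le_right t (t₁ - 1)])) x
    (min_le_left t _)

lemma eq_of_le_of_touch (hv : IsEntireSol f ω v) (hw : IsEntireSol f ω w)
    (hf : NonlinearityBounds f M B C₁ C₂) (hM : ∀ t, ω t ≤ M) {s x₁ t₁ : ℝ}
    (hs : ∀ x, v x s ≤ w x s) (htouch : v x₁ t₁ = w x₁ t₁) (x : ℝ) {t : ℝ} (ht : t ∈ Ioo s t₁) :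
    v x t = w x t := by
  obtain ⟨vt, vx, vxx, hvsol⟩ := hv.isSolOn.exists_derivs
  obtain ⟨wt, wx, wxx, hwsol⟩ := hw.isSolOn.exists_derivs
  have hle (x : ℝ) {t : ℝ} (hst : s < t) : v x t ≤ w x t := hv.le_of_le hw hf hM hs x hst.le
  have hderiv := (hwsol.hasDerivAt_space x₁ t₁ trivial).sub (hvsol.hasDerivAt_space x₁ t₁ trivial)
  have htangent : wx x₁ t₁ - vx x₁ t₁ = 0 := by
    refine IsLocalMin.hasDerivAt_eq_zero (Eventually.of_forall fun y => ?_) hderiv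
    simpa only [Pi.sub_apply, htouch, sub_self, sub_nonneg] using hle y (ht.1.trans ht.2)
  rw [htangent] at hderiv
  refine (sub_eq_zero.1 (eq_zero_of_supersolution_of_sublinear (E := fun x _ t => w x t - v x t)
    (y₀ := x + 1) isOpen_univ convex_univ (mem_univ x₁) hf.C₁_nonneg ?_
    (fun x _ y _ _ t ht => sub_nonneg.2 (hle x ht.1)) (fun x _ y _ _ t ht => ?_)
    (fun c hc => ?_) (mem_univ x) (mem_univ _) (lt_add_one x) ht)).symm
  · exact ((hwsol.continuous_of_univ.sub hvsol.continuous_of_univ).comp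
      (f := fun p : ℝ × ℝ × ℝ => (p.1, p.2.2)) (by fun_prop)).continuousOn
  · refine ⟨_, _, _, _, _, .of_fst (z := fun x t => w x t - v x t)
      ((hwsol.hasJet x trivial).sub (hvsol.hasJet x trivial))
      ((hwsol.hasDerivAt_time x t trivial).sub (hvsol.hasDerivAt_time x t trivial)) y, ?_⟩
    have hineq := hvsol.sub_space₂_sub_time_le_of_le hwsol hf trivial (hv.mem_Icc_of_le hM x t)
      (hw.mem_Icc_of_le hM x t) (hle x ht.1)
    have hgrad := mul_nonneg hf.C₁_nonneg (abs_nonneg (wx x t - vx x t))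
    rw [abs_zero]
    linarith
  · refine frequently_lt_mul_of_hasDerivAt_zero (g := fun r => w (x₁ - r) t₁ - v (x₁ - r) t₁) ?_
      (by simp [htouch]) hc
    exact (HasDerivAt.comp_const_sub x₁ 0 (f := fun y => w y t₁ - v y t₁)
      (by rw [sub_zero]; exact hderiv)).congr_deriv neg_zero

lemma eq_of_forall_le_of_touch (hv : IsEntireSol f ω v) (hw : IsEntireSol f ω w)
    (hf : NonlinearityBounds f M B C₁ C₂) (hM : ∀ t, ω t ≤ M) (hle : ∀ x t, v x t ≤ w x t)
    {x₁ t₁ : ℝ} (htouch : v x₁ t₁ = w x₁ t₁) (x t : ℝ) : v x t = w x t :=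
  hv.eq_of_forall_lt_eq hw hf hM (fun t ht x => hv.eq_of_le_of_touch hw hf hM
    (fun y => hle y (t - 1)) htouch x ⟨sub_one_lt t, ht⟩) x t

lemma eq_of_antitone_of_deriv_eq_zero (hV : IsEntireSol f ω V)
    (hf : NonlinearityBounds f M B C₁ C₂) (hM : ∀ t, ω t ≤ M) (hanti : ∀ t, Antitone (V · t))
    {x₁ t₁ : ℝ} (hzero : deriv (V · t₁) x₁ = 0) {x y t : ℝ} (hxy : x < y) (ht : t < t₁) :
    V x t = V y t := by
  obtain ⟨Vt, Vx, Vxx, hsol⟩ := hV.isSolOn.exists_derivs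
  have hderiv : HasDerivAt (V · t₁) 0 x₁ :=
    hzero ▸ (hsol.hasDerivAt_space x₁ t₁ trivial).differentiableAt.hasDerivAt
  refine sub_eq_zero.1 (eq_zero_of_supersolution_of_sublinear (E := fun x y t => V x t - V y t)
    (t₀ := t - 1) isOpen_univ convex_univ (mem_univ x₁) hf.C₁_nonneg ?_
    (fun x _ y _ hxy t _ => sub_nonneg.2 (hanti t hxy)) (fun x _ y _ hxy t _ => ?_)
    (fun c hc => frequently_sub_lt_mul_of_hasDerivAt_zero hderiv hc) (mem_univ x) (mem_univ y) hxy
    ⟨sub_one_lt t, ht⟩)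
  · exact ((hsol.continuous_of_univ.comp (f := fun p : ℝ × ℝ × ℝ => (p.1, p.2.2))
      (by fun_prop)).sub (hsol.continuous_of_univ.comp (f := fun p : ℝ × ℝ × ℝ => (p.2.1, p.2.2))
      (by fun_prop))).continuousOn
  · refine ⟨_, _, _, _, _,
      (.sub (.of_fst (hsol.hasJet x trivial) (hsol.hasDerivAt_time x t trivial) y)
        (.of_snd (hsol.hasJet y trivial) (hsol.hasDerivAt_time y t trivial) x)), ?_⟩
    have hineq := hsol.sub_space₂_sub_time_le_of_le hsol hf trivial (hV.mem_Icc_of_le hM y t)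
      (hV.mem_Icc_of_le hM x t) (hanti t hxy.le)
    have hgradx := mul_nonneg hf.C₁_nonneg (abs_nonneg (Vx x t - 0))
    have hgrady := mul_nonneg hf.C₁_nonneg (abs_nonneg (0 - Vx y t))
    linarith

theorem forall_eq_or_deriv_neg_of_antitone (hV : IsEntireSol f ω V)
    (hf : NonlinearityBounds f M B C₁ C₂) (hM : ∀ t, ω t ≤ M) (hanti : ∀ t, Antitone (V · t)) :
    (∀ x y t, V x t = V y t) ∨ ∀ x t, deriv (V · t) x < 0 := by
  by_cases hneg : ∀ x t, deriv (V · t) x < 0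
  · exact Or.inr hneg
  push Not at hneg
  obtain ⟨x₁, t₁, hx₁⟩ := hneg
  have hlt {x y : ℝ} (hxy : x < y) (t : ℝ) : V x t = V y t := by
    have heq := hV.eq_of_forall_lt_eq (hV.translate_space (y - x)) hf hM (t₁ := t₁)
      (fun s hs z => hV.eq_of_antitone_of_deriv_eq_zero hf hM hanti
        ((hanti t₁).deriv_nonpos.antisymm hx₁) (by linarith) hs) x t
    rwa [add_sub_cancel] at heq
  refine Or.inl fun x y t => ?_
  rcases lt_trichotomy x y with hxy | rfl | hxy
  exacts [hlt hxy t, rfl, (hlt hxy t).symm]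

end IsEntireSol

/-- An entire solution, nonincreasing in space, whose difference with any other entire solution
never passes from negative to positive values as `x` increases. -/
structure IsNoncrossingSol (f : ℝ → ℝ → ℝ) (ω : ℝ → ℝ) (V : ℝ → ℝ → ℝ) : Prop
    extends IsEntireSol f ω V where
  antitone : ∀ t, Antitone (V · t)
  le_of_lt : ∀ w, IsEntireSol f ω w → ∀ x y t, x ≤ y → V x t < w x t → V y t ≤ w y t

lemma IsNoncrossingSol.eq_of_const_of_eq {f V w : ℝ → ℝ → ℝ} {ω : ℝ → ℝ} {M B C₁ C₂ x₁ t₁ : ℝ}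
    (hV : IsNoncrossingSol f ω V) (hconst : ∀ x y t, V x t = V y t) (hw : IsEntireSol f ω w)
    (hf : NonlinearityBounds f M B C₁ C₂) (hM : ∀ t, ω t ≤ M) (heq : V x₁ t₁ = w x₁ t₁) (x t : ℝ) :
    V x t = w x t := by
  have hordered (s : ℝ) : (∀ x, V x s ≤ w x s) ∨ ∀ x, w x s ≤ V x s := by
    by_contra! hcross
    obtain ⟨⟨y, hy⟩, x, hx⟩ := hcross
    rcases le_total x y with hxy | hyx
    · exact (hV.le_of_lt w hw x y s hxy hx).not_gt hy
    · have hle := hV.le_of_lt _ hw.reflect (-x) (-y) s (neg_le_neg hyx)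
      simp only [neg_neg, hconst (-x) x, hconst (-y) y] at hle
      exact (hle hx).not_gt hy
  refine hV.eq_of_forall_lt_eq hw hf hM (t₁ := t₁) (fun t ht x => ?_) x t
  rcases hordered (t - 1) with hle | hge
  · exact hV.eq_of_le_of_touch hw hf hM hle heq x ⟨sub_one_lt t, ht⟩
  · exact (hw.eq_of_le_of_touch hV.toIsEntireSol hf hM hge heq.symm x ⟨sub_one_lt t, ht⟩).symm

/-! ### Matching the level sets of two solutions -/

/-- A differentiable change of variable `S` on the open set `U` of space-time which matches the
level sets of `w` with those of `V`, that is, `V(S(x,t), t) = w(x,t)`. -/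
structure IsLevelMatchOn (V w S : ℝ → ℝ → ℝ) (U : Set (ℝ × ℝ)) : Prop where
  isOpen : IsOpen U
  apply_eq : ∀ x t, (x, t) ∈ U → V (S x t) t = w x t
  differentiableAt : ∀ x t, (x, t) ∈ U → DifferentiableAt ℝ (fun q : ℝ × ℝ => S q.1 q.2) (x, t)

namespace IsSolWithDerivs

variable {f V Vt Vx Vxx w wt wx wxx : ℝ → ℝ → ℝ}

lemma strictAnti (hV : IsSolWithDerivs f V Vt Vx Vxx univ) (hneg : ∀ x t, Vx x t < 0) (t : ℝ) :
    StrictAnti (V · t) :=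
  strictAnti_of_deriv_neg fun x => (hV.hasDerivAt_space x t trivial).deriv.trans_lt (hneg x t)

lemma exists_local_levelMatch (hV : IsSolWithDerivs f V Vt Vx Vxx univ)
    (hw : IsSolWithDerivs f w wt wx wxx univ) {x y t : ℝ} (hne : Vx y t ≠ 0)
    (hyx : V y t = w x t) :
    ∃ φ : ℝ × ℝ → ℝ, DifferentiableAt ℝ φ (x, t) ∧
      ∀ᶠ q in 𝓝 (x, t), V (φ q) q.2 = w q.1 q.2 := by
  obtain ⟨L, hstrict, hL⟩ : ∃ L : (ℝ × ℝ) × ℝ →L[ℝ] ℝ,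
      HasStrictFDerivAt (fun p : (ℝ × ℝ) × ℝ => V p.2 p.1.2 - w p.1.1 p.1.2) L ((x, t), y) ∧
        L (0, 1) = Vx y t := by
    have htime := (hasStrictFDerivAt_id (𝕜 := ℝ) ((x, t), y)).fst.snd
    exact ⟨_, ((hV.hasStrictFDerivAt isOpen_univ y trivial).comp ((x, t), y)
      (hasStrictFDerivAt_snd.prodMk htime)).sub
        ((hw.hasStrictFDerivAt isOpen_univ x trivial).comp ((x, t), y) hasStrictFDerivAt_fst),
      by simp⟩
  have hinv : (L ∘L .inr ℝ (ℝ × ℝ) ℝ).IsInvertible :=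
    ⟨ContinuousLinearEquiv.unitsEquivAut ℝ (Units.mk0 (Vx y t) hne), by ext; simp [← hL]⟩
  refine ⟨hstrict.implicitFunctionOfProdDomain hinv,
    (hstrict.hasStrictFDerivAt_implicitFunctionOfProdDomain hinv).differentiableAt, ?_⟩
  filter_upwards [hstrict.eventually_apply_implicitFunctionOfProdDomain hinv] with q hq
  simpa [hyx, sub_eq_zero] using hq

lemma exists_isLevelMatchOn (hV : IsSolWithDerivs f V Vt Vx Vxx univ)
    (hw : IsSolWithDerivs f w wt wx wxx univ) (hneg : ∀ x t, Vx x t < 0) {x y t : ℝ}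
    (hyx : V y t = w x t) :
    ∃ S, ∃ U ∈ 𝓝 (x, t), IsLevelMatchOn V w S U ∧ S x t = y := by
  let S : ℝ → ℝ → ℝ := fun x t => Function.invFun (V · t) (w x t)
  have hS {x y t : ℝ} (hyx : V y t = w x t) : S x t = y := by
    change Function.invFun _ (w x t) = y
    rw [← hyx]
    exact Function.leftInverse_invFun (hV.strictAnti hneg t).injective y
  let U : Set (ℝ × ℝ) := {p | V (S p.1 p.2) p.2 = w p.1 p.2}
  have hlocal {p : ℝ × ℝ} (hp : p ∈ U) :
      U ∈ 𝓝 p ∧ DifferentiableAt ℝ (fun q : ℝ × ℝ => S q.1 q.2) p := by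
    obtain ⟨φ, hφ, hφw⟩ := hV.exists_local_levelMatch hw (hneg _ _).ne hp
    refine ⟨?_, hφ.congr_of_eventuallyEq ?_⟩
    · filter_upwards [hφw] with q hq
      exact (congrArg (V · q.2) (hS hq)).trans hq
    · filter_upwards [hφw] with q hq using hS hq
  have hxt : (x, t) ∈ U := (congrArg (V · t) (hS hyx)).trans hyx
  exact ⟨S, U, (hlocal hxt).1, ⟨isOpen_iff_mem_nhds.2 fun p hp => (hlocal hp).1, fun x t hp => hp,
    fun x t hp => (hlocal hp).2⟩, hS hyx⟩

end IsSolWithDerivs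

namespace IsLevelMatchOn

variable {f V Vt Vx Vxx w wt wx wxx S : ℝ → ℝ → ℝ} {U : Set (ℝ × ℝ)} {x y t : ℝ}

lemma eventually_mem_space (hS : IsLevelMatchOn V w S U) (hp : (x, t) ∈ U) :
    ∀ᶠ y in 𝓝 x, (y, t) ∈ U :=
  (Continuous.prodMk_left t).continuousAt.eventually_mem (hS.isOpen.mem_nhds hp)

lemma eventually_mem_time (hS : IsLevelMatchOn V w S U) (hp : (x, t) ∈ U) :
    ∀ᶠ s in 𝓝 t, (x, s) ∈ U :=
  (Continuous.prodMk_right x).continuousAt.eventually_mem (hS.isOpen.mem_nhds hp)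

lemma hasDerivAt_space (hS : IsLevelMatchOn V w S U)
    (hV : IsSolWithDerivs f V Vt Vx Vxx univ) (hw : IsSolWithDerivs f w wt wx wxx univ)
    (hne : ∀ x t, Vx x t ≠ 0) (hp : (x, t) ∈ U) :
    HasDerivAt (fun y => S y t) (wx x t / Vx (S x t) t) x := by
  have hdiff : DifferentiableAt ℝ (fun y => S y t) x :=
    DifferentiableAt.comp (f := fun y => (y, t)) x (hS.differentiableAt x t hp) (by fun_prop)
  refine hdiff.hasDerivAt.congr_deriv (eq_div_of_mul_eq (hne _ _) ?_)
  have hchain := (hV.hasDerivAt_space (S x t) t trivial).comp x hdiff.hasDerivAt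
  rw [mul_comm]
  refine hchain.unique ((hw.hasDerivAt_space x t trivial).congr_of_eventuallyEq ?_)
  filter_upwards [hS.eventually_mem_space hp] with y hy using hS.apply_eq y t hy

lemma hasDerivAt_time (hS : IsLevelMatchOn V w S U)
    (hV : IsSolWithDerivs f V Vt Vx Vxx univ) (hw : IsSolWithDerivs f w wt wx wxx univ)
    (hne : ∀ x t, Vx x t ≠ 0) (hp : (x, t) ∈ U) :
    HasDerivAt (fun s => S x s) ((wt x t - Vt (S x t) t) / Vx (S x t) t) t := by
  have hdiff : DifferentiableAt ℝ (fun s => S x s) t :=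
    DifferentiableAt.comp (f := fun s => (x, s)) t (hS.differentiableAt x t hp) (by fun_prop)
  refine hdiff.hasDerivAt.congr_deriv (eq_div_of_mul_eq (hne _ _) (eq_sub_of_add_eq ?_))
  have hchain := HasFDerivAt.comp_hasDerivAt (f := fun s => (S x s, s)) t
    (hV.hasStrictFDerivAt isOpen_univ (S x t) trivial).hasFDerivAt
    (hdiff.hasDerivAt.prodMk (hasDerivAt_id t))
  simp only [ContinuousLinearMap.coprod_apply, ContinuousLinearMap.toSpanSingleton_apply,
    smul_eq_mul, one_mul] at hchain
  refine hchain.unique ((hw.hasDerivAt_time x t trivial).congr_of_eventuallyEq ?_)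
  filter_upwards [hS.eventually_mem_time hp] with s hs using hS.apply_eq x s hs

/-- The change of variable solves `S_t = S_xx + (V_xx / V_x)(S) (S_x² - 1)`. -/
lemma exists_jet (hS : IsLevelMatchOn V w S U)
    (hV : IsSolWithDerivs f V Vt Vx Vxx univ) (hw : IsSolWithDerivs f w wt wx wxx univ)
    (hne : ∀ x t, Vx x t ≠ 0) (hp : (x, t) ∈ U) :
    ∃ b, HasJet (fun y => S y t) x (wx x t / Vx (S x t) t) b ∧
      HasDerivAt (fun s => S x s)
        (b + Vxx (S x t) t / Vx (S x t) t * ((wx x t / Vx (S x t) t) ^ 2 - 1)) t := by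
  have hspace := hS.hasDerivAt_space hV hw hne hp
  have hspace₂ := (hw.hasDerivAt_space₂ x t trivial).div
    (HasDerivAt.comp (h₂ := fun y => Vx y t) x (hV.hasDerivAt_space₂ (S x t) t trivial) hspace)
    (hne _ _)
  refine ⟨_, ⟨fun y => wx y t / Vx (S y t) t, ?_, hspace₂, rfl⟩,
    (hS.hasDerivAt_time hV hw hne hp).congr_deriv ?_⟩
  · filter_upwards [hS.eventually_mem_space hp] with y hy using hS.hasDerivAt_space hV hw hne hy
  · have hVx := hne (S x t) t
    rw [hw.equation x t trivial, hV.equation _ t trivial, hS.apply_eq x t hp]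
    simp only [Function.comp]
    field_simp
    ring

lemma sub_le_sub_of_le {ω : ℝ → ℝ} (hS : IsLevelMatchOn V w S U) (hV : IsNoncrossingSol f ω V)
    (hanti : StrictAnti (V · t)) (hw : IsEntireSol f ω w) (hxy : x ≤ y) (hx : (x, t) ∈ U)
    (hy : (y, t) ∈ U) : S y t - y ≤ S x t - x := by
  by_contra! hlt
  obtain ⟨a, hxa, hay⟩ := exists_between hlt
  have hle := hV.le_of_lt _ (hw.translate_space (-a)) (x + a) (y + a) t (by linarith)
  simp only [add_neg_cancel_right, ← hS.apply_eq x t hx, ← hS.apply_eq y t hy] at hle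
  have hx' : S x t < x + a := by linarith
  have hy' : y + a < S y t := by linarith
  exact (hle (hanti hx')).not_gt (hanti hy')

lemma exists_eventually_abs_le (hS : IsLevelMatchOn V w S U)
    (hV : IsSolWithDerivs f V Vt Vx Vxx univ) (hw : IsSolWithDerivs f w wt wx wxx univ)
    (hne : ∀ x t, Vx x t ≠ 0) (hp : (x, t) ∈ U) :
    ∃ C, ∀ᶠ q : ℝ × ℝ in 𝓝 (x, t), |Vxx (S q.1 q.2) q.2 / Vx (S q.1 q.2) q.2 *
      (wx q.1 q.2 / Vx (S q.1 q.2) q.2 + 1)| ≤ C := by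
  have hcomp {g : ℝ → ℝ → ℝ} (hg : Continuous fun p : ℝ × ℝ => g p.1 p.2) :
      ContinuousAt (fun q : ℝ × ℝ => g (S q.1 q.2) q.2) (x, t) :=
    ContinuousAt.comp (g := fun p : ℝ × ℝ => g p.1 p.2) (f := fun q : ℝ × ℝ => (S q.1 q.2, q.2))
      hg.continuousAt ((hS.differentiableAt x t hp).continuousAt.prodMk continuousAt_snd)
  have hVx := hcomp hV.continuous_space_of_univ
  have hcont := (((hcomp hV.continuous_space₂_of_univ).div hVx (hne _ _)).mul
    ((hw.continuous_space_of_univ.continuousAt.div hVx (hne _ _)).add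
      (continuousAt_const (y := (1 : ℝ))))).abs
  obtain ⟨C, hC⟩ := exists_gt |Vxx (S x t) t / Vx (S x t) t * (wx x t / Vx (S x t) t + 1)|
  exact ⟨C, (hcont.eventually_lt continuousAt_const hC).mono fun q hq => hq.le⟩

end IsLevelMatchOn

/-- At `(x, t)` the function `z` satisfies `z_t = z_xx + γ z_x` for some drift `|γ| ≤ C`. -/
def HasBoundedDrift (C : ℝ) (z : ℝ → ℝ → ℝ) (x t : ℝ) : Prop :=
  ∃ a b γ, |γ| ≤ C ∧ HasJet (z · t) x a b ∧ HasDerivAt (z x ·) (b + γ * a) t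

namespace HasBoundedDrift

variable {z : ℝ → ℝ → ℝ} {I : Set ℝ} {C x₁ t₀ t₁ : ℝ}

lemma isSupersolutionAt_sub {x y t : ℝ} (hx : HasBoundedDrift C z x t)
    (hy : HasBoundedDrift C z y t) (hle : z y t ≤ z x t) :
    IsSupersolutionAt C (fun x y t => z x t - z y t) x y t := by
  obtain ⟨a, b, γ, hγ, hjet, htime⟩ := hx
  obtain ⟨a', b', γ', hγ', hjet', htime'⟩ := hy
  refine ⟨_, _, _, _, _, .sub (.of_fst hjet htime y) (.of_snd hjet' htime' x), ?_⟩
  have hdrift {γ a : ℝ} (hγ : |γ| ≤ C) : |γ * a| ≤ C * |a| := by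
    rw [abs_mul]
    gcongr
  have hdiff := mul_nonneg ((abs_nonneg γ).trans hγ) (sub_nonneg.2 hle)
  simp only [sub_zero, zero_sub, abs_neg]
  linarith [(neg_le_abs _).trans (hdrift (a := a) hγ), (le_abs_self _).trans (hdrift (a := a') hγ')]

lemma eq_of_antitoneOn_of_hasDerivAt_zero (hI : IsOpen I) (hIconv : Convex ℝ I) (hx₁ : x₁ ∈ I)
    (hcont : ContinuousOn (fun p : ℝ × ℝ => z p.1 p.2) (I ×ˢ Ioc t₀ t₁))
    (hanti : ∀ t ∈ Ioc t₀ t₁, AntitoneOn (z · t) I)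
    (hdrift : ∀ x ∈ I, ∀ t ∈ Ioc t₀ t₁, HasBoundedDrift C z x t)
    (hzero : HasDerivAt (z · t₁) 0 x₁) {x y s : ℝ} (hx : x ∈ I) (hy : y ∈ I)
    (hs : s ∈ Ioo t₀ t₁) : z x s = z y s := by
  wlog hxy : x < y generalizing x y
  · rcases (not_lt.1 hxy).eq_or_lt with rfl | hyx
    exacts [rfl, (this hy hx hyx).symm]
  obtain ⟨-, -, γ, hγ, -⟩ := hdrift x₁ hx₁ t₁ ⟨hs.1.trans hs.2, le_rfl⟩
  refine sub_eq_zero.1 (eq_zero_of_supersolution_of_sublinear (E := fun x y t => z x t - z y t)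
    hI hIconv hx₁ ((abs_nonneg γ).trans hγ) ?_
    (fun x hx y hy hxy t ht => sub_nonneg.2 (hanti t ht hx hy hxy))
    (fun x hx y hy hxy t ht => (hdrift x hx t ht).isSupersolutionAt_sub (hdrift y hy t ht)
      (hanti t ht hx hy hxy.le))
    (fun c hc => frequently_sub_lt_mul_of_hasDerivAt_zero hzero hc) hx hy hxy hs)
  exact (hcont.comp (f := fun p : ℝ × ℝ × ℝ => (p.1, p.2.2)) (by fun_prop)
    fun p hp => ⟨hp.2.1, hp.2.2.2⟩).sub
    (hcont.comp (f := fun p : ℝ × ℝ × ℝ => (p.2.1, p.2.2)) (by fun_prop)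
    fun p hp => ⟨hp.2.2.1, hp.2.2.2⟩)

lemma hasDerivAt_zero_of_eventually_eq {x t : ℝ} (hz : HasBoundedDrift C z x t)
    (hconst : ∀ᶠ y in 𝓝 x, z y t = z x t) : HasDerivAt (z x ·) 0 t := by
  obtain ⟨a, b, γ, -, hjet, htime⟩ := hz
  have hflat : HasJet (z · t) x 0 0 := (HasJet.const (z x t) x).congr hconst
  have ha : a = 0 := hjet.hasDerivAt.unique hflat.hasDerivAt
  have hb : b = 0 := hjet.deriv_deriv.symm.trans hflat.deriv_deriv
  exact htime.congr_deriv (by rw [ha, hb, mul_zero, add_zero])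

theorem eq_apply_of_antitoneOn_of_hasDerivAt_zero (hI : IsOpen I) (hIconv : Convex ℝ I)
    (hx₁ : x₁ ∈ I) (hcont : ContinuousOn (fun p : ℝ × ℝ => z p.1 p.2) (I ×ˢ Ioc t₀ t₁))
    (hanti : ∀ t ∈ Ioc t₀ t₁, AntitoneOn (z · t) I)
    (hdrift : ∀ x ∈ I, ∀ t ∈ Ioc t₀ t₁, HasBoundedDrift C z x t)
    (hzero : HasDerivAt (z · t₁) 0 x₁) {x s : ℝ} (hx : x ∈ I) (hs : s ∈ Ioc t₀ t₁) :
    z x s = z x₁ t₁ := by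
  have hspace {x y s : ℝ} (hx : x ∈ I) (hy : y ∈ I) (hs : s ∈ Ioo t₀ t₁) : z x s = z y s :=
    eq_of_antitoneOn_of_hasDerivAt_zero hI hIconv hx₁ hcont hanti hdrift hzero hx hy hs
  have htime {x r : ℝ} (hx : x ∈ I) (hr : r ∈ Ioc t₀ t₁) : z x t₁ = z x r := by
    refine constant_of_has_deriv_right_zero (f := (z x ·)) (a := r) (b := t₁) (fun q hq => ?_)
      (fun q hq => HasDerivAt.hasDerivWithinAt ?_) t₁ ⟨hr.2, le_rfl⟩
    · obtain ⟨_, _, _, _, _, hq'⟩ := hdrift x hx q ⟨hr.1.trans_le hq.1, hq.2⟩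
      exact hq'.continuousAt.continuousWithinAt
    · have hqI : q ∈ Ioo t₀ t₁ := ⟨hr.1.trans_le hq.1, hq.2⟩
      refine (hdrift x hx q (Ioo_subset_Ioc_self hqI)).hasDerivAt_zero_of_eventually_eq ?_
      filter_upwards [hI.mem_nhds hx] with y hy using hspace hy hx hqI
  obtain ⟨r, hr⟩ := nonempty_Ioo.2 (hs.1.trans_le hs.2)
  have hr' := Ioo_subset_Ioc_self hr
  calc z x s = z x t₁ := (htime hx hs).symm
    _ = z x r := htime hx hr'
    _ = z x₁ r := hspace hx hx₁ hr
    _ = z x₁ t₁ := (htime hx₁ hr').symm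

end HasBoundedDrift

/-! ### Steepness -/

namespace IsLevelMatchOn

variable {f V Vt Vx Vxx w wt wx wxx S : ℝ → ℝ → ℝ} {U : Set (ℝ × ℝ)} {C x₁ t₁ : ℝ}

lemma hasBoundedDrift (hS : IsLevelMatchOn V w S U)
    (hV : IsSolWithDerivs f V Vt Vx Vxx univ) (hw : IsSolWithDerivs f w wt wx wxx univ)
    (hne : ∀ x t, Vx x t ≠ 0) {x t : ℝ} (hp : (x, t) ∈ U)
    (hC : |Vxx (S x t) t / Vx (S x t) t * (wx x t / Vx (S x t) t + 1)| ≤ C) :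
    HasBoundedDrift C (fun x t => S x t - x) x t := by
  obtain ⟨b, hjet, htime⟩ := hS.exists_jet hV hw hne hp
  refine ⟨_, _, _, hC, hjet.sub (.of_hasDerivAt (g' := fun _ => 1) hasDerivAt_id
    (hasDerivAt_const x 1)), (htime.sub_const x).congr_deriv ?_⟩
  ring

lemma exists_hasBoundedDrift (hS : IsLevelMatchOn V w S U)
    (hV : IsSolWithDerivs f V Vt Vx Vxx univ) (hw : IsSolWithDerivs f w wt wx wxx univ)
    (hne : ∀ x t, Vx x t ≠ 0) (hp : (x₁, t₁) ∈ U) :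
    ∃ C, ∃ d > 0, Metric.ball x₁ d ×ˢ Metric.ball t₁ d ⊆ U ∧
      ∀ x ∈ Metric.ball x₁ d, ∀ t ∈ Metric.ball t₁ d,
        HasBoundedDrift C (fun x t => S x t - x) x t := by
  obtain ⟨C, hC⟩ := hS.exists_eventually_abs_le hV hw hne hp
  obtain ⟨d, hd, hball⟩ := Metric.eventually_nhds_iff_ball.1
    ((hS.isOpen.eventually_mem hp).and hC)
  rw [← ball_prod_same] at hball
  exact ⟨C, d, hd, fun q hq => (hball q hq).1, fun x hx t ht =>
    hS.hasBoundedDrift hV hw hne (hball (x, t) ⟨hx, ht⟩).1 (hball (x, t) ⟨hx, ht⟩).2⟩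

end IsLevelMatchOn

namespace IsNoncrossingSol

variable {f V Vt Vx Vxx w wt wx wxx : ℝ → ℝ → ℝ} {ω : ℝ → ℝ} {M B C₁ C₂ x₁ t₁ : ℝ}

/-- With `S` matching the level sets of `w` to those of `V`, the function `S - x` is nonincreasing
because `V` does not cross the translates of `w`, and tangency makes `x₁` a critical point of it. -/
lemma exists_forall_eq_of_tangent (hV : IsNoncrossingSol f ω V)
    (hVsol : IsSolWithDerivs f V Vt Vx Vxx univ) (hneg : ∀ x t, Vx x t < 0)
    (hw : IsEntireSol f ω w) (hwsol : IsSolWithDerivs f w wt wx wxx univ)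
    (heq : V x₁ t₁ = w x₁ t₁) (htangent : Vx x₁ t₁ = wx x₁ t₁) :
    ∃ d > 0, ∀ x ∈ Metric.ball x₁ d, ∀ s ∈ Ioc (t₁ - d) t₁, V x s = w x s := by
  have hne (x t : ℝ) : Vx x t ≠ 0 := (hneg x t).ne
  obtain ⟨S, U, hU, hS, hS₁⟩ := hVsol.exists_isLevelMatchOn hwsol hneg heq
  obtain ⟨C, d, hd, hsub, hdrift⟩ :=
    hS.exists_hasBoundedDrift hVsol hwsol hne (mem_of_mem_nhds hU)
  have hIoc : Ioc (t₁ - d) t₁ ⊆ Metric.ball t₁ d := by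
    rw [Real.ball_eq_Ioo]
    exact Ioc_subset_Ioo_right (lt_add_of_pos_right t₁ hd)
  have hmem {x t : ℝ} (hx : x ∈ Metric.ball x₁ d) (ht : t ∈ Ioc (t₁ - d) t₁) : (x, t) ∈ U :=
    hsub ⟨hx, hIoc ht⟩
  have hcritical : HasDerivAt (fun x => S x t₁ - x) 0 x₁ := by
    refine ((hS.hasDerivAt_space hVsol hwsol hne (mem_of_mem_nhds hU)).sub
      (hasDerivAt_id x₁)).congr_deriv ?_
    rw [hS₁, ← htangent, div_self (hne _ _), sub_self]
  refine ⟨d, hd, fun x hx s hs => ?_⟩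
  have hshift := HasBoundedDrift.eq_apply_of_antitoneOn_of_hasDerivAt_zero
    (z := fun x t => S x t - x) Metric.isOpen_ball (convex_ball x₁ d) (Metric.mem_ball_self hd)
    (fun p hp => ((hS.differentiableAt _ _ (hmem hp.1 hp.2)).continuousAt.sub
      continuousAt_fst).continuousWithinAt)
    (fun t ht x hx y hy hxy => hS.sub_le_sub_of_le hV (hVsol.strictAnti hneg t) hw hxy
      (hmem hx ht) (hmem hy ht))
    (fun x hx t ht => hdrift x hx t (hIoc ht)) hcritical hx hs
  simp only [hS₁, sub_self, sub_eq_zero] at hshift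
  simpa only [hshift] using hS.apply_eq x s (hmem hx hs)

lemma forall_eq_of_tangent_slice (hV : IsNoncrossingSol f ω V)
    (hVsol : IsSolWithDerivs f V Vt Vx Vxx univ) (hneg : ∀ x t, Vx x t < 0)
    (hw : IsEntireSol f ω w) (hwsol : IsSolWithDerivs f w wt wx wxx univ)
    (heq : V x₁ t₁ = w x₁ t₁) (htangent : Vx x₁ t₁ = wx x₁ t₁) (x : ℝ) : V x t₁ = w x t₁ := by
  have slice {g : ℝ → ℝ → ℝ} (hg : Continuous fun p : ℝ × ℝ => g p.1 p.2) :
      Continuous fun x => g x t₁ := hg.comp (Continuous.prodMk_left t₁)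
  have hclosed : IsClosed {x | V x t₁ = w x t₁ ∧ Vx x t₁ = wx x t₁} :=
    (isClosed_eq (slice hVsol.continuous_of_univ) (slice hwsol.continuous_of_univ)).inter
      (isClosed_eq (slice hVsol.continuous_space_of_univ) (slice hwsol.continuous_space_of_univ))
  have hopen : IsOpen {x | V x t₁ = w x t₁ ∧ Vx x t₁ = wx x t₁} := by
    refine Metric.isOpen_iff.2 fun x hx => ?_
    obtain ⟨d, hd, hball⟩ := hV.exists_forall_eq_of_tangent hVsol hneg hw hwsol hx.1 hx.2
    refine ⟨d, hd, fun y hy => ?_⟩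
    have hnear : (V · t₁) =ᶠ[𝓝 y] (w · t₁) := by
      filter_upwards [Metric.isOpen_ball.mem_nhds hy] with z hz
      exact hball z hz t₁ ⟨sub_lt_self t₁ hd, le_rfl⟩
    exact ⟨hnear.self_of_nhds, ((hVsol.hasDerivAt_space y t₁ trivial).congr_of_eventuallyEq
      hnear.symm).unique (hwsol.hasDerivAt_space y t₁ trivial)⟩
  exact ((IsClopen.eq_univ ⟨hclosed, hopen⟩ ⟨x₁, heq, htangent⟩).symm ▸ mem_univ x :
    x ∈ {x | V x t₁ = w x t₁ ∧ Vx x t₁ = wx x t₁}).1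

lemma forall_eq_of_tangent (hV : IsNoncrossingSol f ω V)
    (hVsol : IsSolWithDerivs f V Vt Vx Vxx univ) (hneg : ∀ x t, Vx x t < 0)
    (hw : IsEntireSol f ω w) (hwsol : IsSolWithDerivs f w wt wx wxx univ)
    (hf : NonlinearityBounds f M B C₁ C₂) (hM : ∀ t, ω t ≤ M)
    (heq : V x₁ t₁ = w x₁ t₁) (htangent : Vx x₁ t₁ = wx x₁ t₁) (x t : ℝ) : V x t = w x t := by
  have hslice {s : ℝ} (hs : (V · s) =ᶠ[𝓝 0] (w · s)) (x : ℝ) : V x s = w x s :=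
    hV.forall_eq_of_tangent_slice hVsol hneg hw hwsol hs.self_of_nhds
      (((hVsol.hasDerivAt_space 0 s trivial).congr_of_eventuallyEq hs.symm).unique
        (hwsol.hasDerivAt_space 0 s trivial)) x
  have hclosed : IsClosed {t | ∀ x, V x t = w x t} := by
    rw [ofPred_forall]
    exact isClosed_iInter fun x => isClosed_eq
      (hVsol.continuous_of_univ.comp (Continuous.prodMk_right x))
      (hwsol.continuous_of_univ.comp (Continuous.prodMk_right x))
  have hopen : IsOpen {t | ∀ x, V x t = w x t} := by
    refine Metric.isOpen_iff.2 fun t ht => ?_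
    have htangent₀ : Vx 0 t = wx 0 t := ((hVsol.hasDerivAt_space 0 t trivial).congr_of_eventuallyEq
      (Eventually.of_forall fun z => (ht z).symm)).unique (hwsol.hasDerivAt_space 0 t trivial)
    obtain ⟨d, hd, hball⟩ := hV.exists_forall_eq_of_tangent hVsol hneg hw hwsol (ht 0) htangent₀
    refine ⟨d, hd, fun s hs => ?_⟩
    rw [Real.ball_eq_Ioo] at hs
    rcases le_total t s with hts | hst
    · exact fun x => hV.eq_of_eq hw hf hM ht x hts
    · refine hslice ?_
      filter_upwards [Metric.ball_mem_nhds 0 hd] with z hz using hball z hz s ⟨hs.1, hst⟩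
  have ht₁ := hV.forall_eq_of_tangent_slice hVsol hneg hw hwsol heq htangent
  exact ((IsClopen.eq_univ ⟨hclosed, hopen⟩ ⟨t₁, ht₁⟩).symm ▸ mem_univ t :
    t ∈ {t | ∀ x, V x t = w x t}) x

lemma deriv_le_of_eq (hV : IsNoncrossingSol f ω V)
    (hVsol : IsSolWithDerivs f V Vt Vx Vxx univ) (hw : IsEntireSol f ω w)
    (hwsol : IsSolWithDerivs f w wt wx wxx univ) (heq : V x₁ t₁ = w x₁ t₁) :
    Vx x₁ t₁ ≤ wx x₁ t₁ := by
  by_contra! hlt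
  have hderiv := ((hVsol.hasDerivAt_space x₁ t₁ trivial).sub
    (hwsol.hasDerivAt_space x₁ t₁ trivial)).deriv
  have hsign := eventually_nhdsWithin_sign_eq_of_deriv_pos (hderiv.trans_gt (sub_pos.2 hlt))
    (sub_eq_zero.2 heq)
  obtain ⟨x, hx, hxsign⟩ := hsign.exists_lt
  obtain ⟨y, hy, hysign⟩ := hsign.exists_gt
  rw [sign_neg (sub_neg.2 hx), sign_eq_neg_one_iff] at hxsign
  rw [sign_pos (sub_pos.2 hy), sign_eq_one_iff] at hysign
  exact (hV.le_of_lt w hw x y t₁ (hx.trans hy).le (sub_neg.1 hxsign)).not_gt (sub_pos.1 hysign)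

theorem forall_eq_or_deriv_lt (hV : IsNoncrossingSol f ω V) (hw : IsEntireSol f ω w)
    (hf : NonlinearityBounds f M B C₁ C₂) (hM : ∀ t, ω t ≤ M) (heq : V x₁ t₁ = w x₁ t₁) :
    (∀ x t, V x t = w x t) ∨ deriv (V · t₁) x₁ < deriv (w · t₁) x₁ := by
  rcases hV.forall_eq_or_deriv_neg_of_antitone hf hM hV.antitone with hconst | hneg
  · exact Or.inl (hV.eq_of_const_of_eq hconst hw hf hM heq)
  obtain ⟨Vt, Vx, Vxx, hVsol⟩ := hV.isSolOn.exists_derivs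
  obtain ⟨wt, wx, wxx, hwsol⟩ := hw.isSolOn.exists_derivs
  have hVx (x t : ℝ) : deriv (V · t) x = Vx x t := (hVsol.hasDerivAt_space x t trivial).deriv
  simp only [hVx] at hneg
  rw [hVx, (hwsol.hasDerivAt_space x₁ t₁ trivial).deriv]
  exact (hV.deriv_le_of_eq hVsol hw hwsol heq).eq_or_lt.imp_left
    (hV.forall_eq_of_tangent hVsol hneg hw hwsol hf hM heq)

lemma eq_of_apply_eq (hV : IsNoncrossingSol f ω V) (hw : IsNoncrossingSol f ω w)
    (hf : NonlinearityBounds f M B C₁ C₂) (hM : ∀ t, ω t ≤ M) (heq : V x₁ t₁ = w x₁ t₁) :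
    V = w := by
  rcases hV.forall_eq_or_deriv_lt hw.toIsEntireSol hf hM heq with hVw | hVw
  · exact funext₂ hVw
  rcases hw.forall_eq_or_deriv_lt hV.toIsEntireSol hf hM heq.symm with hwV | hwV
  · exact funext₂ fun x t => (hwV x t).symm
  · exact absurd hVw hwV.not_gt

end IsNoncrossingSol

lemma IsNoncrossingSol.steeper {f V w : ℝ → ℝ → ℝ} {ω : ℝ → ℝ} {M B C₁ C₂ T : ℝ}
    (hV : IsNoncrossingSol f ω V) (hw : IsEntireSol f ω w) (hf : NonlinearityBounds f M B C₁ C₂)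
    (hM : ∀ t, ω t ≤ M) (hfper : Function.Periodic f T) (hωper : Function.Periodic ω T) :
    Steeper T V w := by
  intro t' x₁ k heq
  have hwk : IsEntireSol f ω fun x t => w x (t + k * T) := by
    simpa only [add_zero] using hw.translate (a := 0)
      (fun t => congrFun (hfper.int_mul k t)) (hωper.int_mul k)
  exact (hV.forall_eq_or_deriv_lt hwk hf hM heq).imp_left fun hs x t => hs x (t + t')

/-! ### Strict bounds -/

lemma isEntireSol_of_hasDerivAt {f : ℝ → ℝ → ℝ} {φ ω : ℝ → ℝ}
    (hf : Continuous (Function.uncurry f)) (hφ : ∀ t, HasDerivAt φ (f t (φ t)) t)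
    (hmem : ∀ t, φ t ∈ Icc 0 (ω t)) : IsEntireSol f ω fun _ t => φ t := by
  have hφc : Continuous φ := continuous_iff_continuousAt.2 fun t => (hφ t).continuousAt
  have hsol : IsSolWithDerivs f (fun _ t => φ t) (fun _ t => f t (φ t)) (fun _ _ => 0)
      (fun _ _ => 0) univ := {
    hasDerivAt_time := fun _ t _ => hφ t
    hasDerivAt_space := fun x _ _ => hasDerivAt_const x _
    hasDerivAt_space₂ := fun x _ _ => hasDerivAt_const x _
    continuousOn_time :=
      (hf.comp (continuous_snd.prodMk (hφc.comp continuous_snd))).continuousOn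
    continuousOn_space := continuousOn_const
    continuousOn_space₂ := continuousOn_const
    equation := fun _ _ _ => (zero_add _).symm }
  exact ⟨hsol.isSolOn, fun _ t => hmem t⟩

namespace IsEntireSol

variable {f v w V : ℝ → ℝ → ℝ} {ω : ℝ → ℝ} {M B C₁ C₂ x₀ t₀ : ℝ}

lemma lt_of_forall_le_of_lt (hv : IsEntireSol f ω v) (hw : IsEntireSol f ω w)
    (hf : NonlinearityBounds f M B C₁ C₂) (hM : ∀ t, ω t ≤ M) (hle : ∀ x t, v x t ≤ w x t)
    (hlt : v x₀ t₀ < w x₀ t₀) (x t : ℝ) : v x t < w x t :=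
  (hle x t).lt_of_ne fun htouch =>
    hlt.ne (hv.eq_of_forall_le_of_touch hw hf hM hle htouch x₀ t₀)

theorem mem_Ioo (hV : IsEntireSol f ω V) (hf : NonlinearityBounds f M B C₁ C₂)
    (hM : ∀ t, ω t ≤ M) (hfc : Continuous (Function.uncurry f)) (hf0 : ∀ t, f t 0 = 0)
    (hω : ∀ t, HasDerivAt ω (f t (ω t)) t) (h₀ : V x₀ t₀ ∈ Ioo 0 (ω t₀)) (x t : ℝ) :
    V x t ∈ Ioo 0 (ω t) := by
  have hω0 (t : ℝ) : 0 ≤ ω t := (hV.mem_Icc 0 t).1.trans (hV.mem_Icc 0 t).2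
  have hzero : IsEntireSol f ω fun _ _ => 0 :=
    isEntireSol_of_hasDerivAt hfc (fun t => by simpa only [hf0] using hasDerivAt_const t 0)
      fun t => ⟨le_rfl, hω0 t⟩
  have htop : IsEntireSol f ω fun _ t => ω t :=
    isEntireSol_of_hasDerivAt hfc hω fun t => ⟨hω0 t, le_rfl⟩
  exact ⟨hzero.lt_of_forall_le_of_lt hV hf hM (fun x t => (hV.mem_Icc x t).1) h₀.1 x t,
    hV.lt_of_forall_le_of_lt htop hf hM (fun x t => (hV.mem_Icc x t).2) h₀.2 x t⟩

end IsEntireSol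

/-! ### Convergence of the translates of the Heaviside solution -/

lemma IsTranslateLimit.apply_zero_zero {ℓ : ℕ → ℝ} {T c : ℝ} {l : Filter ℕ} [NeBot l]
    {u V : ℝ → ℝ → ℝ} (hV : IsTranslateLimit ℓ T l u V) (hl : l ≤ atTop)
    (hℓ : ∀ j : ℕ, 1 ≤ j → u (ℓ j) (j * T) = c) : V 0 0 = c := by
  refine tendsto_nhds_unique_of_eventuallyEq (hV 0 0) tendsto_const_nhds ?_
  filter_upwards [hl (eventually_ge_atTop 1)] with j hj
  rw [zero_add, zero_add, hℓ j hj]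

lemma IsSolWithDerivs.space_eq_and_space₂_eq {f V Vt Vx Vxx Wt Wx Wxx : ℝ → ℝ → ℝ}
    (hV : IsSolWithDerivs f V Vt Vx Vxx univ) (hW : IsSolWithDerivs f V Wt Wx Wxx univ) :
    Vx = Wx ∧ Vxx = Wxx := by
  obtain rfl : Vx = Wx := funext₂ fun x t =>
    (hV.hasDerivAt_space x t trivial).unique (hW.hasDerivAt_space x t trivial)
  exact ⟨rfl, funext₂ fun x t =>
    (hV.hasDerivAt_space₂ x t trivial).unique (hW.hasDerivAt_space₂ x t trivial)⟩

lemma IsBoundedPeriodicSol.exists_isJetTranslateLimit_atTop {f u ut ux uxx : ℝ → ℝ → ℝ}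
    {M B C₁ C₂ T : ℝ} {ℓ : ℕ → ℝ} (hu : IsBoundedPeriodicSol f u ut ux uxx T M B C₁ C₂)
    (huniq : ∀ l l' : Ultrafilter ℕ, (l : Filter ℕ) ≤ atTop → (l' : Filter ℕ) ≤ atTop →
      ∀ V Vx Vxx W Wx Wxx, IsJetTranslateLimit ℓ T l u ux uxx V Vx Vxx →
        IsJetTranslateLimit ℓ T l' u ux uxx W Wx Wxx → V = W) :
    ∃ V Vx Vxx, IsJetTranslateLimit ℓ T atTop u ux uxx V Vx Vxx := by
  have hl₀ : (Ultrafilter.of (atTop : Filter ℕ) : Filter ℕ) ≤ atTop := Ultrafilter.of_le _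
  obtain ⟨V, Vx, Vxx, hV⟩ := hu.exists_isJetTranslateLimit ℓ _ hl₀
  have hall (l : Ultrafilter ℕ) (hl : (l : Filter ℕ) ≤ atTop) :
      IsJetTranslateLimit ℓ T l u ux uxx V Vx Vxx := by
    obtain ⟨W, Wx, Wxx, hW⟩ := hu.exists_isJetTranslateLimit ℓ l hl
    obtain rfl := huniq _ l hl₀ hl V Vx Vxx W Wx Wxx hV hW
    obtain ⟨rfl, rfl⟩ := (hu.isSolWithDerivs_limit hl₀ hV).space_eq_and_space₂_eq
      (hu.isSolWithDerivs_limit hl hW)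
    exact hW
  exact ⟨V, Vx, Vxx,
    fun x t => (tendsto_iff_ultrafilter _ _ _).2 fun l hl => (hall l hl).value x t,
    fun x t => (tendsto_iff_ultrafilter _ _ _).2 fun l hl => (hall l hl).space x t,
    fun x t => (tendsto_iff_ultrafilter _ _ _).2 fun l hl => (hall l hl).space₂ x t⟩

namespace IsHeavisideSol

variable {f u V : ℝ → ℝ → ℝ} {ω : ℝ → ℝ} {M B C₁ C₂ T : ℝ}

lemma nonneg_of_periodic {α a : ℝ} (hu : IsHeavisideSol f α a ω u) (hT : 0 < T)
    (hωper : Function.Periodic ω T) (t : ℝ) : 0 ≤ ω t := by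
  obtain ⟨j, hj⟩ := (eventually_lt_add_natCast_mul hT le_rfl 0 t).exists
  rw [← hωper.nat_mul j t]
  exact (hu.2.1 0 _ hj).1.trans (hu.2.1 0 _ hj).2

/-- Compare `u` with the translate of `w` by `(ℓ j, j T)`, which is again an entire solution. -/
lemma limit_le_of_lt {w : ℝ → ℝ → ℝ} {ℓ : ℕ → ℝ} {l : Filter ℕ} [NeBot l]
    (hu : IsHeavisideSol f (ω 0) 0 ω u) (hω : ContinuousAt ω 0)
    (hf : NonlinearityBounds f M B C₁ C₂) (hM : ∀ t, ω t ≤ M) (hT : 0 < T)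
    (hfper : Function.Periodic f T) (hωper : Function.Periodic ω T) (hl : l ≤ atTop)
    (hV : IsTranslateLimit ℓ T l u V) (hw : IsEntireSol f ω w) {x y t : ℝ} (hxy : x ≤ y)
    (hlt : V x t < w x t) : V y t ≤ w y t := by
  refine le_of_tendsto (hV y t) ?_
  filter_upwards [(hV x t).eventually_lt_const hlt, eventually_lt_add_natCast_mul hT hl 0 t]
    with j hj ht
  have hwj := hw.translate (a := -ℓ j) (fun t => congrFun ((hfper.nat_mul j).neg t))
    (hωper.nat_mul j).neg
  obtain ⟨wt, wx, wxx, hwsol⟩ := hwj.isSolOn.exists_derivs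
  have hle := hu.le_of_lt_of_le hω hf hM (hwsol.mono (subset_univ _)).isSolOn
    (fun x t _ => hwj.mem_Icc x t) (add_le_add_left hxy (ℓ j)) ht
  simp only [add_neg_cancel_right] at hle
  exact hle hj

lemma isNoncrossingSol_limit {ℓ : ℕ → ℝ} {l : Filter ℕ} [NeBot l]
    (hu : IsHeavisideSol f (ω 0) 0 ω u) (hω : ContinuousAt ω 0)
    (hf : NonlinearityBounds f M B C₁ C₂) (hM : ∀ t, ω t ≤ M) (hT : 0 < T)
    (hfper : Function.Periodic f T) (hωper : Function.Periodic ω T) (hl : l ≤ atTop)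
    (hV : IsTranslateLimit ℓ T l u V) (hVsol : IsSolOn f V univ) : IsNoncrossingSol f ω V where
  isSolOn := hVsol
  mem_Icc x t := by
    refine isClosed_Icc.mem_of_tendsto (hV x t) ?_
    filter_upwards [eventually_lt_add_natCast_mul hT hl 0 t] with j hj
    rw [← hωper.nat_mul j t]
    exact hu.2.1 (x + ℓ j) _ hj
  antitone t x y hxy := by
    refine le_of_tendsto_of_tendsto (hV y t) (hV x t) ?_
    filter_upwards [eventually_lt_add_natCast_mul hT hl 0 t] with j hj
    exact hu.le_of_le hω hf hM (add_le_add_left hxy (ℓ j)) hj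
  le_of_lt _ hw _ _ _ hxy hlt := hu.limit_le_of_lt hω hf hM hT hfper hωper hl hV hw hxy hlt

/-- Any two limits along ultrafilters are noncrossing and agree at the origin, so they coincide. -/
theorem exists_isULimitDeriv_and_isNoncrossingSol {ℓ : ℕ → ℝ} {c : ℝ}
    (hu : IsHeavisideSol f (ω 0) 0 ω u) (hω : ContinuousAt ω 0)
    (hf : NonlinearityBounds f M B C₁ C₂) (hM : ∀ t, ω t ≤ M) (hT : 0 < T)
    (hfper : Function.Periodic f T) (hωper : Function.Periodic ω T)
    (hfc : Continuous (Function.uncurry f)) (hℓ : ∀ j : ℕ, 1 ≤ j → u (ℓ j) (j * T) = c) :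
    ∃ V, IsULimitDeriv u ℓ T V ∧ IsNoncrossingSol f ω V ∧ V 0 0 = c := by
  obtain ⟨ut, ux, uxx, husol⟩ := hu.1.exists_derivs
  have hu' : IsBoundedPeriodicSol f u ut ux uxx T M B C₁ C₂ :=
    ⟨hT, hfc, fun t => congrFun (hfper t), hf, husol, hu.mem_Icc hM⟩
  have hlimit {l : Filter ℕ} [NeBot l] {V Vx Vxx : ℝ → ℝ → ℝ} (hl : l ≤ atTop)
      (hV : IsJetTranslateLimit ℓ T l u ux uxx V Vx Vxx) : IsNoncrossingSol f ω V ∧ V 0 0 = c :=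
    ⟨hu.isNoncrossingSol_limit hω hf hM hT hfper hωper hl hV.value
      (hu'.isSolWithDerivs_limit hl hV).isSolOn, hV.value.apply_zero_zero hl hℓ⟩
  obtain ⟨V, Vx, Vxx, hV⟩ := hu'.exists_isJetTranslateLimit_atTop (ℓ := ℓ)
    fun l l' hl hl' V _ _ W _ _ hV hW => (hlimit hl hV).1.eq_of_apply_eq (hlimit hl' hW).1 hf hM
      ((hlimit hl hV).2.trans (hlimit hl' hW).2.symm)
  exact ⟨V, hu'.isULimitDeriv hV, hlimit le_rfl hV⟩

end IsHeavisideSol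

theorem shifted_limit_exists_and_is_steep_general {f u₀ : ℝ → ℝ → ℝ} {ω : ℝ → ℝ} {T lam : ℝ}
    {ℓ : ℕ → ℝ} (hT : 0 < T) (hf : ContDiff ℝ 2 (Function.uncurry f))
    (hfper : ∀ t u, f (t + T) u = f t u) (hf0 : ∀ t, f t 0 = 0)
    (hωode : ∀ t, HasDerivAt ω (f t (ω t)) t) (hωper : ∀ t, ω (t + T) = ω t)
    (hlam : lam ∈ Ioo 0 (ω 0)) (hu₀ : IsHeavisideSol f (ω 0) 0 ω u₀)
    (hℓ : ∀ j : ℕ, 1 ≤ j → u₀ (ℓ j) (j * T) = lam) :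
    ∃ V : ℝ → ℝ → ℝ,
      IsULimitDeriv u₀ ℓ T V ∧
      IsSolOn f V univ ∧
      V 0 0 = lam ∧
      (∀ x t, 0 < V x t ∧ V x t < ω t) ∧
      (∀ w, IsSolOn f w univ → (∀ x t, 0 ≤ w x t ∧ w x t ≤ ω t) → Steeper T V w) ∧
      ((∀ x y t, V x t = V y t) ∨ ∀ x t, deriv (fun y => V y t) x < 0) := by
  have hωc : Continuous ω := continuous_iff_continuousAt.2 fun t => (hωode t).continuousAt
  obtain ⟨M, hM⟩ := (Function.Periodic.compact_of_continuous hωper hT.ne' hωc).bddAbove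
  have hωM (t : ℝ) : ω t ≤ M := hM (mem_range_self t)
  have hM0 : 0 ≤ M := (hu₀.nonneg_of_periodic hT hωper 0).trans (hωM 0)
  obtain ⟨B, C₁, C₂, hbounds⟩ := exists_nonlinearityBounds hT hf hfper hM0
  have hfper' : Function.Periodic f T := fun t => funext (hfper t)
  obtain ⟨V, hlim, hV, hV0⟩ := hu₀.exists_isULimitDeriv_and_isNoncrossingSol hωc.continuousAt
    hbounds hωM hT hfper' hωper hf.continuous hℓ
  exact ⟨V, hlim, hV.isSolOn, hV0,
    hV.mem_Ioo hbounds hωM hf.continuous hf0 hωode (x₀ := 0) (hV0.symm ▸ hlam),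
    fun w hw hwω => hV.steeper ⟨hw, hwω⟩ hbounds hωM hfper' hωper,
    hV.forall_eq_or_deriv_neg_of_antitone hbounds hωM hV.antitone⟩

/-- **Lemma 3.4.** Under (H1) the limit `u_∞(x,t;λ) = lim_j u₀(x + ℓ(j,λ), t + jT)` exists
locally uniformly (with derivatives); it is an entire solution strictly between `0` and
`ω(α,·)`, steeper than any entire solution between `0` and `ω(α,·)`, and is either independent
of `x` or strictly decreasing in `x`. -/
theorem shifted_limit_exists_and_is_steep
    (f : ℝ → ℝ → ℝ) (T α : ℝ) (ωsol : ℝ → ℝ → ℝ)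
    (hT : 0 < T)
    (hf : ContDiff ℝ 2 (Function.uncurry f))
    (hfper : ∀ t u : ℝ, f (t + T) u = f t u)
    (hf0 : ∀ t : ℝ, f t 0 = 0)
    (hωinit : ∀ β : ℝ, ωsol β 0 = β)
    (hωode : ∀ β t : ℝ, HasDerivAt (ωsol β) (f t (ωsol β t)) t)
    (hα : 0 < α) (hαfix : ωsol α T = α)
    (hαper : ∀ t : ℝ, ωsol α (t + T) = ωsol α t)
    (hαpos : ∀ t : ℝ, 0 < ωsol α t)
    (hH1 : HypH1 f α (ωsol α))
    (lam : ℝ) (hlam : lam ∈ Set.Ioo 0 α)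
    (u₀ : ℝ → ℝ → ℝ) (hu₀ : IsHeavisideSol f α 0 (ωsol α) u₀)
    (ℓ : ℕ → ℝ) (hℓ : ∀ j : ℕ, 1 ≤ j → u₀ (ℓ j) ((j : ℝ) * T) = lam) :
    ∃ V : ℝ → ℝ → ℝ,
      IsULimitDeriv u₀ ℓ T V ∧
      IsSolOn f V Set.univ ∧
      (∀ x t : ℝ, 0 < V x t ∧ V x t < ωsol α t) ∧
      (∀ w : ℝ → ℝ → ℝ, IsSolOn f w Set.univ →
        (∀ x t : ℝ, 0 ≤ w x t ∧ w x t ≤ ωsol α t) → Steeper T V w) ∧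
      ((∀ x y t : ℝ, V x t = V y t) ∨ (∀ x t : ℝ, deriv (fun y => V y t) x < 0)) := by
  obtain ⟨V, hlim, hsol, -, hV⟩ := shifted_limit_exists_and_is_steep_general hT hf hfper hf0
    (hωode α) hαper ((hωinit α).symm ▸ hlam) ((hωinit α).symm ▸ hu₀) hℓ
  exact ⟨V, hlim, hsol, hV⟩

end
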